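/- Let k ≥ 2 and n ≥ 1 be integers and let p ≥ 3 be a prime. Suppose that every digit n_i in the base-p representation n = n₀ + n₁p + ... + n_jp^j (with 0 ≤ n_i ≤ p-1) satisfies n_i ≤ (p-1)/2. Then TC_k(L^{2n+1}_p) = k·(2n+1). -/

import Mathlib

/-!
The two inequalities are proved separately, with `k = m + 2`.

*Lower bound* (`LensTC.lower_bound`). A motion planner over an open set `U` gives a locally
constant label on the preimage of `U` in `(S^{2n+1})^k`: lifting the planned path from the chosen
lift of its first point records by which deck transformations the other chosen points differ from
the lifted path. So the label is an element of `(ℤ/p)^k`, and it changes under the group `(ℤ/p)^k`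
only through the differences with the coordinate `0`. If `r < k(2n+1)` open sets sufficed, a
Lebesgue number argument would produce an equivariant colouring of `(S^{2n+1})^k` by `r` colours
and labels, in which nearby points of equal colour have equal labels.

Homologically, the sphere carries chains `w_0, …, w_{2n+1}` with `∂ w_e` equal to `(T - 1)
w_{e-1}` or `(1 + T + ⋯ + T^{p-1}) w_{e-1}` according to the parity of `e` (a `Tower`): a coarse
simplicial model of the sphere as a join of circles, made fine by barycentric subdivision
(`LensTC.exists_tower`). Spaces are replaced throughout by complexes of lists of vertices. The
external products of towers are pushed along the colouring into the complex of lists of (colour,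
label) whose colours strictly increase; as a list with more than `r` colours does not exist, the
image of the product of the cells of dimensions `2n+1, 2n, 2n+1, …, 2n+1`, of total dimension
`k(2n+1) - 1`, vanishes (`LensTC.boundary_product`). Reducing the labels along one coordinate
homomorphism to `ℤ/p` at a time makes all the generators but two trivial, and exactness of the
sequence `T - 1, 1 + T + ⋯ + T^{p-1}` allows a descent through the degrees (`LensTC.chase_step`).
The coordinates `0` and `1`, which act by the same generator, are removed together, and Pascal's
rule produces the factor `(2n).choose n` (`LensTC.chase_two`); every other coordinate is then
removed by itself (`LensTC.chase_one`). If `p` does not divide `(2n).choose n`, the descent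
reaches degree `0` and shows that a chain of augmentation `1` is a boundary, which is absurd
(`LensTC.lower_algebra`). The digit hypothesis says that `n + n` has no carry in base `p`, so by
Lucas' theorem the binomial coefficient is prime to `p` (`LensTC.not_dvd_choose`).

*Upper bound* (`LensTC.upper_bound`). This bound is one better than the dimension gives. The
functions `Re (conj κ · w_{i'} · conj z_i)^p` of two points `z, w` of the sphere are defined on
pairs of points of the lens space and invariant under the diagonal circle. Evaluated at the `0`-th
and the `l`-th of `k` vectors of `ℂ^{n+1}`, any `k(2n+1)` of them together with the `k` norms
define a map between real spaces of the same dimension `k(2n+2)`, whose derivative is singular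
because of the circle. By the easy case of Sard's theorem there are `k(2n+1)` small positive
thresholds and `k` radii such that at every point of the product of the spheres some threshold is
a value of none of the functions (`LensTC.exists_thresholds`). The points missing a given
threshold form an open set, cut into disjoint open pieces by the signs of the differences, and on
a nonempty piece one index `i` works for all the coordinates `l`: some function with index `i` of
the points `0` and `l` is positive. Positivity gives a continuous choice of a `p`-th root, hence a
homotopy from the `l`-th point to a map depending only on the point `0` and on `i`
(`LensTC.pair_homotopic`). These homotopies assemble to a section (`LensTC.hasSec_of_homotopic`).
-/

open scoped unitInterval

/-- The map `π_k : C([0,1],X) → X^k`, `γ ↦ (γ(0), γ(1/(k-1)), …, γ(1))`. -/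
noncomputable def pik {X : Type*} [TopologicalSpace X] (k : ℕ) (γ : C(unitInterval, X)) :
    Fin k → X :=
  fun i => γ (Set.projIcc 0 1 zero_le_one ((i : ℝ) / ((k : ℝ) - 1)))

/-- The restriction of `π_k` over `S ⊆ X^k` admits a continuous section. -/
def HasSec {X : Type*} [TopologicalSpace X] (k : ℕ) (S : Set (Fin k → X)) : Prop :=
  ∃ s : C(S, C(unitInterval, X)), ∀ u : S, pik k (s u) = (u : Fin k → X)

/-- The inclusion of `U` into `Z` is null-homotopic. -/
def NullHomotopicIncl {Z : Type*} [TopologicalSpace Z] (U : Set Z) : Prop :=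
  ∃ z : Z, ContinuousMap.Homotopic ⟨Subtype.val, continuous_subtype_val⟩
    (ContinuousMap.const ↥U z)

/-- `X^k` can be covered by `r` open sets, each admitting a continuous section of `π_k`. -/
def TCCoverAt (X : Type*) [TopologicalSpace X] (k r : ℕ) : Prop :=
  ∃ U : Fin r → Set (Fin k → X),
    (∀ i, IsOpen (U i)) ∧ (⋃ i, U i) = Set.univ ∧ ∀ i, HasSec k (U i)

/-- The higher (sequential) topological complexity `TC_k(X)`. -/
noncomputable def higherTC (X : Type*) [TopologicalSpace X] (k : ℕ) : ℕ :=
  sInf {r | TCCoverAt X k r}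

/-- A Hurewicz fibration: homotopy lifting property with respect to every space. -/
def IsHurewiczFibration.{u} {E B : Type*} [TopologicalSpace E] [TopologicalSpace B]
    (p : C(E, B)) : Prop :=
  ∀ (Z : Type u) [TopologicalSpace Z] (f : C(Z, E)) (H : C(Z × unitInterval, B)),
    (∀ z, H (z, 0) = p (f z)) →
    ∃ G : C(Z × unitInterval, E), (∀ z, G (z, 0) = f z) ∧ ∀ z t, p (G (z, t)) = H (z, t)

/-- The equivalence relation on `S^{2n+1} ⊆ ℂ^{n+1}` identifying points in the same
orbit of the group of `m`-th roots of unity acting by complex scalar multiplication. -/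
noncomputable def lensSetoid (m n : ℕ) :
    Setoid (Metric.sphere (0 : EuclideanSpace ℂ (Fin (n + 1))) 1) where
  r x y := ∃ ζ : ℂˣ, ζ ^ m = 1 ∧
    (y : EuclideanSpace ℂ (Fin (n + 1))) = ζ • (x : EuclideanSpace ℂ (Fin (n + 1)))
  iseqv := by
    constructor
    · exact fun x => ⟨1, one_pow m, (one_smul _ _).symm⟩
    · rintro x y ⟨ζ, hζ, h⟩
      exact ⟨ζ⁻¹, by rw [inv_pow, hζ, inv_one], by rw [h, inv_smul_smul]⟩
    · rintro x y z ⟨ζ₁, h₁, e₁⟩ ⟨ζ₂, h₂, e₂⟩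
      exact ⟨ζ₂ * ζ₁, by rw [mul_pow, h₁, h₂, one_mul], by rw [e₂, e₁, smul_smul]⟩

/-- The lens space `L^{2n+1}_m`, the quotient of the unit sphere `S^{2n+1} ⊆ ℂ^{n+1}`
by the action of the `m`-th roots of unity, with the quotient topology. -/
noncomputable def LensSpace (m n : ℕ) : Type :=
  Quotient (lensSetoid m n)

noncomputable instance (m n : ℕ) : TopologicalSpace (LensSpace m n) :=
  inferInstanceAs (TopologicalSpace (Quotient (lensSetoid m n)))

namespace LensTC

/-! ### Carries -/

/-- Under the digit hypothesis no carry occurs in `n + n`, so by Lucas' theorem `p` does not divide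
the central binomial coefficient. -/
theorem not_dvd_choose (p : ℕ) (hp : p.Prime) (hp3 : 3 ≤ p) (n : ℕ)
    (h : ∀ d ∈ Nat.digits p n, d ≤ (p - 1) / 2) : ¬ p ∣ (2 * n).choose n := by
  have := Fact.mk hp
  induction n using Nat.strong_induction_on with
  | _ n ih =>
    rcases Nat.eq_zero_or_pos n with rfl | hn
    · simpa using hp.one_lt.ne'
    rw [Nat.digits_def' hp.one_lt hn] at h
    have h0 : n % p ≤ (p - 1) / 2 := h _ (by simp)
    have h1 := ih (n / p) (Nat.div_lt_self hn hp.one_lt) (fun d hd => h d (by simp [hd]))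
    have hlt : 2 * (n % p) < p := by omega
    have e : 2 * n = 2 * (n % p) + p * (2 * (n / p)) := by
      have := Nat.mod_add_div n p
      calc 2 * n = 2 * (n % p + p * (n / p)) := by rw [this]
        _ = _ := by ring
    have e1 : 2 * n % p = 2 * (n % p) := by
      rw [e, Nat.add_mul_mod_self_left, Nat.mod_eq_of_lt hlt]
    have e2 : 2 * n / p = 2 * (n / p) := by
      rw [e, Nat.add_mul_div_left _ _ hp.pos, Nat.div_eq_of_lt hlt, zero_add]
    have L := Choose.choose_modEq_choose_mod_mul_choose_div_nat (p := p) (n := 2 * n) (k := n)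
    rw [e1, e2] at L
    rw [L.dvd_iff (dvd_refl p), hp.dvd_mul, not_or]
    refine ⟨fun hd => ?_, h1⟩
    have := (hp.dvd_factorial).1 ((hd.trans (Nat.choose_eq_factorial_div_factorial
      (show n % p ≤ 2 * (n % p) by omega) ▸ Nat.div_dvd_of_dvd
      (Nat.factorial_mul_factorial_dvd_factorial (show n % p ≤ 2 * (n % p) by omega))))) 
    omega

/-! ### The diagram chase -/

section Chase
variable {K W : Type*} [Field K] [AddCommGroup W] [Module K W]

/-- Modulo boundaries, an element of the image of `A` is traded for one of the image of `B`,
as soon as `ker A = im B`. -/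
theorem chase_step {d A B : W →ₗ[K] W} (hdd : ∀ x, d (d x) = 0) (hdA : ∀ x, d (A x) = A (d x))
    (hAB : ∀ x, A x = 0 → ∃ y, x = B y) {f g : W}
    (hf : ∃ v e, f = d v + A e) (hfg : d f = A g) : ∃ v e, g = d v + B e := by
  obtain ⟨v, e, rfl⟩ := hf
  obtain ⟨y, hy⟩ := hAB (g - d e) (by
    rw [map_sub, ← hfg, map_add, hdd, hdA, zero_add, sub_self])
  exact ⟨e, y, by rw [← hy]; abel⟩

/-- The chase in one variable. -/
theorem chase_one {d τ N : W →ₗ[K] W} (hdd : ∀ x, d (d x) = 0)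
    (hdτ : ∀ x, d (τ x) = τ (d x)) (hdN : ∀ x, d (N x) = N (d x))
    (hτ : ∀ x, τ x = 0 → ∃ y, x = N y) (hN : ∀ x, N x = 0 → ∃ y, x = τ y)
    (n : ℕ) (c : ℕ → W) (h1 : ∀ a ≤ n, d (c (2 * a + 1)) = τ (c (2 * a)))
    (h2 : ∀ a < n, d (c (2 * a + 2)) = N (c (2 * a + 1)))
    (h : ∃ v e, c (2 * n + 1) = d v + τ e) : ∃ v e, c 0 = d v + N e := by
  induction n with
  | zero => exact chase_step hdd hdτ hτ h (h1 0 le_rfl)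
  | succ n ih =>
    refine ih (fun a ha => h1 a (by omega)) (fun a ha => h2 a (by omega)) ?_
    exact chase_step hdd hdN hN (chase_step hdd hdτ hτ h (h1 (n + 1) le_rfl)) (h2 n (by omega))

/-- The chase in two variables: the coefficients produced on the way are those of Pascal's
triangle. -/
theorem chase_two {d τ N M : W →ₗ[K] W} (hdd : ∀ x, d (d x) = 0)
    (hdτ : ∀ x, d (τ x) = τ (d x)) (hdN : ∀ x, d (N x) = N (d x)) (hdM : ∀ x, d (M x) = M (d x))
    (hτM : ∀ x, N x = τ (M x)) (hMτ : ∀ x, N x = M (τ x))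
    (hτ : ∀ x, τ x = 0 → ∃ y, x = N y) (hN : ∀ x, N x = 0 → ∃ y, x = τ y)
    (n : ℕ) (hc : ((2 * n).choose n : K) ≠ 0) (b : ℕ → ℕ → W)
    (h10 : ∀ i ≤ n, d (b (2 * i + 1) 0) = τ (b (2 * i) 0))
    (h1s : ∀ i ≤ n, ∀ j < n, d (b (2 * i + 1) (2 * j + 2)) =
      τ (b (2 * i) (2 * j + 2)) - N (b (2 * i + 1) (2 * j + 1)))
    (h1o : ∀ i ≤ n, ∀ j < n, d (b (2 * i + 1) (2 * j + 1)) =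
      τ (b (2 * i) (2 * j + 1)) - τ (b (2 * i + 1) (2 * j)))
    (h00 : d (b 0 0) = 0)
    (h0s : ∀ j < n, d (b 0 (2 * j + 2)) = N (b 0 (2 * j + 1)))
    (hs0 : ∀ i < n, d (b (2 * i + 2) 0) = N (b (2 * i + 1) 0))
    (hss : ∀ i < n, ∀ j < n, d (b (2 * i + 2) (2 * j + 2)) =
      N (b (2 * i + 1) (2 * j + 2)) + N (b (2 * i + 2) (2 * j + 1)))
    (h : ∃ v e, b (2 * n + 1) (2 * n) = d v + τ e) : ∃ v e, b 0 0 = d v + N e := by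
  let k : ℕ → ℕ → W := fun i j => b (2 * i) (2 * j) -
    (if j = 0 then 0 else M (b (2 * i + 1) (2 * j - 1)))
  let f' : ℕ → ℕ → W := fun u v => if u ≤ n ∧ v ≤ n then b (2 * (n - u) + 1) (2 * (n - v)) else 0
  let k' : ℕ → ℕ → W := fun u v => if u ≤ n ∧ v ≤ n then k (n - u) (n - v) else 0
  have hf : ∀ u v, d (f' u v) = τ (k' u v) := by
    intro u v
    by_cases huv : u ≤ n ∧ v ≤ n
    · simp only [f', k', k, if_pos huv]
      rcases hv : n - v with _ | j
      · simpa using h10 _ (by omega)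
      · rw [show 2 * (j + 1) = 2 * j + 2 by ring, h1s _ (by omega) _ (by omega)]
        simp [hτM]
    · simp only [f', k', if_neg huv, map_zero]
  have hk : ∀ u v, d (k' u v) = N (f' u (v + 1) + f' (u + 1) v) := by
    intro u v
    by_cases huv : u ≤ n ∧ v ≤ n
    · simp only [k', k, if_pos huv]
      have e1 : f' u (v + 1) = if n - v = 0 then 0 else
          b (2 * (n - u) + 1) (2 * (n - v - 1)) := by
        by_cases h0 : n - v = 0
        · rw [if_pos h0]; simp only [f']; rw [if_neg]; omega
        · rw [if_neg h0]; simp only [f']; rw [if_pos (by omega)]; congr 2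
      have e2 : f' (u + 1) v = if n - u = 0 then 0 else
          b (2 * (n - u - 1) + 1) (2 * (n - v)) := by
        by_cases h0 : n - u = 0
        · rw [if_pos h0]; simp only [f']; rw [if_neg]; omega
        · rw [if_neg h0]; simp only [f']; rw [if_pos (by omega)]; congr 2
      rw [e1, e2]
      have hu : n - u ≤ n := by omega
      have hv : n - v ≤ n := by omega
      generalize n - u = a at *
      generalize n - v = c at *
      rcases a with _ | a <;> rcases c with _ | c
      · simpa using h00
      · have := h1o 0 (by omega) c (by omega)
        simp only [mul_zero, zero_add] at this
        have e := h0s c (by omega)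
        simp only [Nat.add_one_sub_one, mul_zero, zero_add, if_true, add_zero]
        simp only [show 2 * (c + 1) = 2 * c + 2 by ring,
          show 2 * c + 2 - 1 = 2 * c + 1 by omega, map_sub, e]
        simp [hdM, this, ← hMτ]
      · simpa [mul_add] using hs0 a (by omega)
      · have := h1o (a + 1) (by omega) c (by omega)
        have e := hss a (by omega) c (by omega)
        simp only [show 2 * (c + 1) = 2 * c + 2 by ring, show 2 * (a + 1) = 2 * a + 2 by ring,
          show 2 * c + 2 - 1 = 2 * c + 1 by omega, map_sub, e] at this ⊢
        simp [hdM, this, ← hMτ]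
        abel
    · have h1 : ¬ (u ≤ n ∧ v + 1 ≤ n) := by omega
      have h2 : ¬ (u + 1 ≤ n ∧ v ≤ n) := by omega
      simp only [f', k', if_neg huv, if_neg h1, if_neg h2, map_zero, add_zero]
  let F : ℕ → W := fun s => ∑ ij ∈ Finset.HasAntidiagonal.antidiagonal s, s.choose ij.1 • f' ij.1 ij.2
  let G : ℕ → W := fun s => ∑ ij ∈ Finset.HasAntidiagonal.antidiagonal s, s.choose ij.1 • k' ij.1 ij.2
  have hFG : ∀ s, d (F s) = τ (G s) := fun s => by
    simp only [F, G, map_sum, map_nsmul, hf]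
  have hGF : ∀ s, d (G s) = N (F (s + 1)) := fun s => by
    have e : F (s + 1) = _ := Finset.sum_antidiagonal_choose_succ_nsmul f' s
    have e' : ∀ ij ∈ Finset.HasAntidiagonal.antidiagonal s, s.choose ij.2 = s.choose ij.1 := fun ij hij => by
      rw [Finset.HasAntidiagonal.mem_antidiagonal] at hij
      subst hij
      exact (Nat.choose_symm_add).symm
    rw [e]
    simp only [G, map_sum, map_nsmul, hk, map_add, nsmul_add, Finset.sum_add_distrib]
    congr 1
    exact Finset.sum_congr rfl fun ij hij => by rw [e' ij hij]
  have hF : ∀ s, ∃ v e, F s = d v + τ e := by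
    intro s
    induction s with
    | zero => simpa [F, f'] using h
    | succ s ih => exact chase_step hdd hdN hN (chase_step hdd hdτ hτ ih (hFG s)) (hGF s)
  obtain ⟨v, e, hve⟩ := chase_step hdd hdτ hτ (hF (2 * n)) (hFG (2 * n))
  have hG : G (2 * n) = ((2 * n).choose n : K) • b 0 0 := by
    simp only [G]
    rw [Finset.sum_eq_single (n, n)]
    · simp [k', k, Nat.cast_smul_eq_nsmul]
    · rintro ⟨u, v⟩ huv hne
      rw [Finset.HasAntidiagonal.mem_antidiagonal] at huv
      have : ¬ (u ≤ n ∧ v ≤ n) := by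
        intro h
        apply hne
        simp only at huv
        ext <;> simp <;> omega
      simp [k', if_neg this]
    · intro hh
      exact absurd (Finset.HasAntidiagonal.mem_antidiagonal.2 (by simp; ring)) hh
  rw [hG] at hve
  refine ⟨((2 * n).choose n : K)⁻¹ • v, ((2 * n).choose n : K)⁻¹ • e, ?_⟩
  rw [map_smul, map_smul, ← smul_add, ← hve, inv_smul_smul₀ hc]

end Chase

/-! ### Chains on lists -/

section Rec
variable {K : Type*} [CommRing K]

/-- Recursion for linear maps: a linear map may be prescribed on each basis element in terms of its
value on a chain of basis elements of lower degree. -/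
theorem exists_rec {B M : Type*} [AddCommGroup M] [Module K M] (deg : B → ℕ)
    (bd : B → (B →₀ K)) (hdeg : ∀ b, ∀ b' ∈ (bd b).support, deg b' < deg b) (κ : B → M → M) :
    ∃ Φ : (B →₀ K) →ₗ[K] M, ∀ b, Φ (Finsupp.single b 1) = κ b (Φ (bd b)) := by
  let φ : ℕ → B → M := fun n => Nat.rec (fun _ => 0)
    (fun _ f b => κ b (Finsupp.linearCombination K f (bd b))) n
  have hφ : ∀ n b, φ (n + 1) b = κ b (Finsupp.linearCombination K (φ n) (bd b)) := fun n b => rfl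
  have hst : ∀ d n b, deg b ≤ d → d < n → φ n b = φ (deg b + 1) b := by
    intro d
    induction d using Nat.strong_induction_on with
    | _ d ih =>
      intro n b hb hn
      obtain ⟨n, rfl⟩ := Nat.exists_eq_succ_of_ne_zero (by omega : n ≠ 0)
      rw [Nat.succ_eq_add_one, hφ, hφ]
      congr 1
      simp only [Finsupp.linearCombination_apply]
      refine Finsupp.sum_congr fun b' hb' => ?_
      have h := hdeg b b' hb'
      rw [ih (deg b') (by omega) n b' le_rfl (by omega),
        ih (deg b') (by omega) (deg b) b' le_rfl h]
  refine ⟨Finsupp.linearCombination K (fun b => φ (deg b + 1) b), fun b => ?_⟩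
  rw [Finsupp.linearCombination_single, one_smul, hφ]
  congr 1
  simp only [Finsupp.linearCombination_apply]
  refine Finsupp.sum_congr fun b' hb' => ?_
  rw [hst (deg b') _ b' le_rfl (hdeg b b' hb')]

end Rec

section Lists
variable (K : Type*) [CommRing K] {V W : Type*}

/-- The cone operator, adding a first vertex to every list. -/
noncomputable def cone (a : V) : (List V →₀ K) →ₗ[K] (List V →₀ K) :=
  Finsupp.lmapDomain K K (List.cons a)

/-- The alternating sum of the faces of a list, the empty list being a face of a vertex. -/
noncomputable def bdL : List V → (List V →₀ K)
  | [] => 0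
  | a :: l => Finsupp.single l 1 - cone K a (bdL l)

/-- The boundary operator of the augmented complex of lists: the empty list is a generator, placed
in degree `-1`. -/
noncomputable def bd : (List V →₀ K) →ₗ[K] (List V →₀ K) := Finsupp.linearCombination K (bdL K)

/-- The augmentation: the coefficient of the empty list in the boundary. -/
noncomputable def aug : (List V →₀ K) →ₗ[K] K := Finsupp.lapply [] ∘ₗ bd K

/-- The boundary operator of the unaugmented complex. -/
noncomputable def ubd : (List V →₀ K) →ₗ[K] (List V →₀ K) :=
  bd K - Finsupp.lsingle [] ∘ₗ aug K

/-- The sign operator `(-1) ^ (degree)`, a list of length `d + 1` having degree `d`. -/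
noncomputable def sg : (List V →₀ K) →ₗ[K] (List V →₀ K) :=
  Finsupp.linearCombination K fun l => (-1 : K) ^ (l.length + 1) • Finsupp.single l 1

/-- The map on chains induced by a map on vertices. -/
noncomputable def lmap (f : V → W) : (List V →₀ K) →ₗ[K] (List W →₀ K) :=
  Finsupp.lmapDomain K K (List.map f)

variable {K}

@[simp] theorem cone_single (a : V) (l : List V) (c : K) :
    cone K a (Finsupp.single l c) = Finsupp.single (a :: l) c := by
  simp [cone]

@[simp] theorem bd_nil (c : K) : bd K (Finsupp.single ([] : List V) c) = 0 := by
  simp [bd, bdL]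

theorem bd_single (l : List V) : bd K (Finsupp.single l 1) = bdL K l := by simp [bd]

@[simp] theorem bd_cons (a : V) (l : List V) : bd K (Finsupp.single (a :: l) 1) =
    Finsupp.single l 1 - cone K a (bd K (Finsupp.single l 1)) := by
  simp [bd, bdL]

theorem bd_cone (a : V) (z : List V →₀ K) : bd K (cone K a z) = z - cone K a (bd K z) := by
  have : bd K ∘ₗ cone K a = LinearMap.id - cone K a ∘ₗ bd K := by
    ext l : 2
    simp
  exact LinearMap.congr_fun this z

theorem bd_bd (z : List V →₀ K) : bd K (bd K z) = 0 := by
  have : bd K ∘ₗ bd K = (0 : (List V →₀ K) →ₗ[K] (List V →₀ K)) := by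
    ext l : 2
    simp only [LinearMap.comp_apply, Finsupp.lsingle_apply, LinearMap.zero_apply]
    induction l with
    | nil => simp
    | cons a l ih => simp [bd_cone, ih]
  exact LinearMap.congr_fun this z

open Classical in
theorem mem_support_bd {l l' : List V} (h : bd K (Finsupp.single l 1) l' ≠ 0) :
    l'.Sublist l ∧ l'.length + 1 = l.length := by
  induction l generalizing l' with
  | nil => simp at h
  | cons a l ih =>
    rw [bd_cons, Finsupp.sub_apply] at h
    by_cases hl : l' = l
    · subst hl; exact ⟨List.sublist_cons_self _ _, rfl⟩
    rw [Finsupp.single_eq_of_ne hl, zero_sub, neg_ne_zero] at h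
    simp only [cone, Finsupp.lmapDomain_apply] at h
    have := Finsupp.mapDomain_support (Finsupp.mem_support_iff.2 h)
    obtain ⟨t, ht, rfl⟩ := Finset.mem_image.1 this
    obtain ⟨h1, h2⟩ := ih (Finsupp.mem_support_iff.1 ht)
    exact ⟨h1.cons_cons a, by simp [h2]⟩

theorem aug_apply (z : List V →₀ K) : aug K z = bd K z [] := rfl

theorem bd_eq (z : List V →₀ K) : bd K z = ubd K z + Finsupp.single [] (aug K z) := by
  simp [ubd]

theorem aug_single (l : List V) : aug K (Finsupp.single l 1) = if l.length = 1 then 1 else 0 := by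
  split_ifs with h
  · obtain ⟨a, rfl⟩ := List.length_eq_one_iff.1 h
    simp [aug_apply]
  · by_contra h'
    exact h (by simpa using (mem_support_bd h').2.symm)

@[simp] theorem ubd_nil (c : K) : ubd K (Finsupp.single ([] : List V) c) = 0 := by
  simp [ubd, aug_apply]

@[simp] theorem ubd_one (a : V) : ubd K (Finsupp.single [a] 1) = 0 := by
  simp [ubd, aug_apply]

theorem ubd_of_length {l : List V} (h : l.length ≠ 1) :
    ubd K (Finsupp.single l 1) = bd K (Finsupp.single l 1) := by
  rw [bd_eq, aug_single, if_neg h, Finsupp.single_zero, add_zero]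

theorem mem_support_ubd {l l' : List V} (h : ubd K (Finsupp.single l 1) l' ≠ 0) :
    l'.Sublist l ∧ l'.length + 1 = l.length ∧ l' ≠ [] := by
  by_cases hl : l.length = 1
  · obtain ⟨a, rfl⟩ := List.length_eq_one_iff.1 hl
    simp at h
  · rw [ubd_of_length hl] at h
    have := mem_support_bd h
    refine ⟨this.1, this.2, ?_⟩
    rintro rfl
    exact hl (by simpa using this.2.symm)

theorem bd_ubd (z : List V →₀ K) : bd K (ubd K z) = 0 := by
  have := congrArg (bd K) (bd_eq z)
  rwa [bd_bd, map_add, bd_nil, add_zero, eq_comm] at this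

theorem aug_ubd (z : List V →₀ K) : aug K (ubd K z) = 0 := by
  rw [aug_apply, bd_ubd]; rfl

theorem ubd_ubd (z : List V →₀ K) : ubd K (ubd K z) = 0 := by
  have := bd_eq (ubd K z)
  rwa [bd_ubd, aug_ubd, Finsupp.single_zero, add_zero, eq_comm] at this

theorem sg_single (l : List V) : sg K (Finsupp.single l 1) =
    (-1 : K) ^ (l.length + 1) • Finsupp.single l 1 := by
  simp [sg]

theorem sg_eq {d : ℕ} {z : List V →₀ K} (h : ∀ l, z l ≠ 0 → l.length = d + 1) :
    sg K z = (-1 : K) ^ d • z := by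
  rw [sg, Finsupp.linearCombination_apply, Finsupp.sum]
  conv_rhs => rw [← Finsupp.sum_single z, Finsupp.sum, Finset.smul_sum]
  refine Finset.sum_congr rfl fun l hl => ?_
  rw [h l (Finsupp.mem_support_iff.1 hl), pow_succ, pow_succ]
  simp [mul_comm]

theorem ubd_sg (z : List V →₀ K) : ubd K (sg K z) = - sg K (ubd K z) := by
  have : ubd K ∘ₗ sg K = - (sg K ∘ₗ (ubd K (V := V))) := by
    ext l : 2
    simp only [LinearMap.comp_apply, Finsupp.lsingle_apply, LinearMap.neg_apply, sg_single,
      map_smul]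
    rcases l with _ | ⟨a, _ | ⟨b, l⟩⟩
    · simp
    · simp
    · rw [sg_eq (d := l.length)]
      · simp [pow_succ]
      · intro l' hl'
        have := (mem_support_ubd hl').2.1
        simp at this ⊢; omega
  exact LinearMap.congr_fun this z

@[simp] theorem lmap_single (f : V → W) (l : List V) (c : K) :
    lmap K f (Finsupp.single l c) = Finsupp.single (l.map f) c := by
  simp [lmap]

theorem lmap_cone (f : V → W) (a : V) (z : List V →₀ K) :
    lmap K f (cone K a z) = cone K (f a) (lmap K f z) := by
  have : lmap K f ∘ₗ cone K a = cone K (f a) ∘ₗ lmap K f := by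
    ext l : 2
    simp
  exact LinearMap.congr_fun this z

theorem bd_lmap (f : V → W) (z : List V →₀ K) : bd K (lmap K f z) = lmap K f (bd K z) := by
  have : bd K ∘ₗ lmap K f = lmap K f ∘ₗ bd K := by
    ext l : 2
    simp only [LinearMap.comp_apply, Finsupp.lsingle_apply]
    induction l with
    | nil => simp
    | cons a l ih => 
      rw [lmap_single] at ih
      simp [ih, lmap_cone]
  exact LinearMap.congr_fun this z

theorem aug_lmap (f : V → W) (z : List V →₀ K) : aug K (lmap K f z) = aug K z := by
  have : aug K ∘ₗ lmap K f = aug K := by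
    ext l : 2
    simp [aug_single]
  exact LinearMap.congr_fun this z

theorem ubd_lmap (f : V → W) (z : List V →₀ K) : ubd K (lmap K f z) = lmap K f (ubd K z) := by
  have h := bd_lmap f z
  rw [bd_eq, bd_eq, map_add, aug_lmap, lmap_single] at h
  exact add_right_cancel h

theorem lmap_id (z : List V →₀ K) : lmap K id z = z := by
  simp [lmap]

theorem lmap_lmap {U : Type*} (f : V → W) (g : W → U) (z : List V →₀ K) :
    lmap K g (lmap K f z) = lmap K (g ∘ f) z := by
  simp only [lmap, Finsupp.lmapDomain_apply, ← Finsupp.mapDomain_comp]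
  congr 1
  funext l
  simp

open Classical in
theorem lmap_support {f : V → W} {z : List V →₀ K} {l : List W} (h : lmap K f z l ≠ 0) :
    ∃ t, z t ≠ 0 ∧ l = t.map f := by
  obtain ⟨t, ht, rfl⟩ := Finset.mem_image.1
    (Finsupp.mapDomain_support (Finsupp.mem_support_iff.2 h))
  exact ⟨t, Finsupp.mem_support_iff.1 ht, rfl⟩

end Lists

/-! ### Quotients of the complex of coloured lists -/

section Target
set_option linter.unusedSectionVars false

variable {K : Type*} [CommRing K] {C A Z : Type*} [AddCommGroup A] [AddCommGroup Z]

/-- The translation action of `A` on chains of lists with entries in `C × A`. -/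
noncomputable def sh (K : Type*) [CommRing K] {C A : Type*} [AddCommGroup A] (a : A) :
    (List (C × A) →₀ K) →ₗ[K] (List (C × A) →₀ K) :=
  lmap K (fun x => (x.1, a + x.2))

/-- The complex of nonempty lists, with the translation action of `A` reduced to an action of `Z`:
a list with first vertex `(i, a)` and tail `t` becomes the pair of an element of `Z` and of
`(i, t - a)`. -/
abbrev Red (K C A Z : Type*) [CommRing K] := (Z × (C × List (C × A))) →₀ K

/-- The quotient map onto the reduced complex along `χ : A →+ Z`. -/
noncomputable def quo (K : Type*) [CommRing K] {C A Z : Type*} [AddCommGroup A] [AddCommGroup Z]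
    (χ : A →+ Z) : (List (C × A) →₀ K) →ₗ[K] Red K C A Z :=
  Finsupp.linearCombination K fun l => match l with
    | [] => 0
    | x :: t => Finsupp.single (χ x.2, (x.1, t.map fun y => (y.1, -x.2 + y.2))) 1

/-- The translation action of `Z` on the reduced complex. -/
noncomputable def tr (K C A : Type*) {Z : Type*} [CommRing K] [AddCommGroup Z] (z : Z) :
    Red K C A Z →ₗ[K] Red K C A Z :=
  Finsupp.lmapDomain K K fun x => (z + x.1, x.2)

/-- The boundary operator of the reduced complex. -/
noncomputable def redD (K : Type*) [CommRing K] {C A Z : Type*} [AddCommGroup A] [AddCommGroup Z]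
    (χ : A →+ Z) : Red K C A Z →ₗ[K] Red K C A Z :=
  Finsupp.linearCombination K fun x =>
    tr K C A x.1 (quo K χ (ubd K (Finsupp.single ((x.2.1, 0) :: x.2.2) 1)))

theorem sh_single (a : A) (l : List (C × A)) (c : K) : sh K a (Finsupp.single l c) =
    Finsupp.single (l.map fun x => (x.1, a + x.2)) c := by simp [sh]

theorem quo_nil (χ : A →+ Z) (c : K) : quo K χ (Finsupp.single ([] : List (C × A)) c) = 0 := by
  simp [quo]

theorem quo_cons (χ : A →+ Z) (x : C × A) (t : List (C × A)) :
    quo K χ (Finsupp.single (x :: t) 1) =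
      Finsupp.single (χ x.2, (x.1, t.map fun y => (y.1, -x.2 + y.2))) 1 := by
  simp [quo]

theorem tr_single (z : Z) (x : Z × (C × List (C × A))) (c : K) :
    tr K C A z (Finsupp.single x c) = Finsupp.single (z + x.1, x.2) c := by simp [tr]

theorem tr_tr (z w : Z) (v : Red K C A Z) : tr K C A z (tr K C A w v) = tr K C A (z + w) v := by
  have : tr K C A z ∘ₗ tr K C A w = tr K C A (z + w) := by
    ext x : 2
    simp [tr_single, add_assoc]
  exact LinearMap.congr_fun this v

theorem tr_zero (v : Red K C A Z) : tr K C A 0 v = v := by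
  have : tr K C A (0 : Z) = LinearMap.id := by
    ext x : 2
    simp [tr_single]
  exact LinearMap.congr_fun this v

theorem quo_sh (χ : A →+ Z) (a : A) (v : List (C × A) →₀ K) :
    quo K χ (sh K a v) = tr K C A (χ a) (quo K χ v) := by
  have : quo K (C := C) χ ∘ₗ sh K a = tr K C A (χ a) ∘ₗ quo K χ := by
    ext l : 2
    rcases l with _ | ⟨x, t⟩
    · simp [sh_single, quo_nil]
    · simp only [LinearMap.comp_apply, Finsupp.lsingle_apply, sh_single, List.map_cons, quo_cons,
        tr_single, map_add, List.map_map]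
      congr 5
      funext y
      simp only [Function.comp_apply, Prod.mk.injEq, true_and]
      abel
  exact LinearMap.congr_fun this v

theorem redD_single (χ : A →+ Z) (x : Z × (C × List (C × A))) :
    redD K χ (Finsupp.single x 1) =
      tr K C A x.1 (quo K χ (ubd K (Finsupp.single ((x.2.1, 0) :: x.2.2) 1))) := by
  simp [redD]

theorem redD_quo (χ : A →+ Z) (v : List (C × A) →₀ K) :
    redD K χ (quo K χ v) = quo K χ (ubd K v) := by
  have : redD K (C := C) χ ∘ₗ quo K χ = quo K χ ∘ₗ ubd K := by
    ext l : 2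
    rcases l with _ | ⟨x, t⟩
    · simp [quo_nil]
    · simp only [LinearMap.comp_apply, Finsupp.lsingle_apply, quo_cons, redD_single]
      rw [← quo_sh, sh, ← ubd_lmap, lmap_single]
      congr 4
      simp only [List.map_cons, add_zero, List.map_map]
      congr 1
      conv_rhs => rw [← List.map_id t]
      congr 1
      funext y
      simp
  exact LinearMap.congr_fun this v

theorem redD_tr (χ : A →+ Z) (z : Z) (v : Red K C A Z) :
    redD K χ (tr K C A z v) = tr K C A z (redD K χ v) := by
  have : redD K (C := C) χ ∘ₗ tr K C A z = tr K C A z ∘ₗ redD K χ := by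
    ext x : 2
    simp [tr_single, redD_single, tr_tr]
  exact LinearMap.congr_fun this v

theorem redD_redD (χ : A →+ Z) (v : Red K C A Z) : redD K χ (redD K χ v) = 0 := by
  have : redD K (C := C) χ ∘ₗ redD K χ = (0 : Red K C A Z →ₗ[K] Red K C A Z) := by
    ext x : 2
    simp [redD_single, redD_tr, redD_quo, ubd_ubd]
  exact LinearMap.congr_fun this v

/-- The map between reduced complexes given by the quotient of `Z` by itself. -/
noncomputable def toPt (K C A Z : Type*) [CommRing K] : Red K C A Z →ₗ[K] Red K C A Unit :=
  Finsupp.lmapDomain K K fun x => ((), x.2)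

/-- The section of `toPt` given by the neutral element of `Z`. -/
noncomputable def ofPt (K C A Z : Type*) [CommRing K] [AddCommGroup Z] :
    Red K C A Unit →ₗ[K] Red K C A Z :=
  Finsupp.lmapDomain K K fun x => (0, x.2)

theorem toPt_single (x : Z × (C × List (C × A))) (c : K) :
    toPt K C A Z (Finsupp.single x c) = Finsupp.single ((), x.2) c := by simp [toPt]

theorem ofPt_single (x : Unit × (C × List (C × A))) (c : K) :
    ofPt K C A Z (Finsupp.single x c) = Finsupp.single (0, x.2) c := by simp [ofPt]

theorem toPt_ofPt (v : Red K C A Unit) : toPt K C A Z (ofPt K C A Z v) = v := by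
  have : toPt K C A Z ∘ₗ ofPt K C A Z = LinearMap.id := by
    ext x : 2
    simp [toPt_single, ofPt_single]
  exact LinearMap.congr_fun this v

theorem toPt_tr (z : Z) (v : Red K C A Z) : toPt K C A Z (tr K C A z v) = toPt K C A Z v := by
  have : toPt K C A Z ∘ₗ tr K C A z = toPt K C A Z := by
    ext x : 2
    simp [toPt_single, tr_single]
  exact LinearMap.congr_fun this v

theorem toPt_quo (χ : A →+ Z) (v : List (C × A) →₀ K) :
    toPt K C A Z (quo K χ v) = quo K (0 : A →+ Unit) v := by
  have : toPt K C A Z ∘ₗ quo K χ = quo K (0 : A →+ Unit) := by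
    ext l : 2
    rcases l with _ | ⟨x, t⟩
    · simp [quo_nil]
    · simp [quo_cons, toPt_single]
  exact LinearMap.congr_fun this v

theorem toPt_redD (χ : A →+ Z) (v : Red K C A Z) :
    toPt K C A Z (redD K χ v) = redD K (0 : A →+ Unit) (toPt K C A Z v) := by
  have : toPt K C A Z ∘ₗ redD K χ = redD K (0 : A →+ Unit) ∘ₗ toPt K C A Z := by
    ext x : 2
    simp only [LinearMap.comp_apply, Finsupp.lsingle_apply, redD_single, toPt_tr, toPt_quo,
      toPt_single]
    exact (tr_zero (Z := Unit) _).symm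
  exact LinearMap.congr_fun this v

/-- The augmentation of the fully reduced complex. -/
noncomputable def ptAug (K C A : Type*) [CommRing K] : Red K C A Unit →ₗ[K] K :=
  Finsupp.linearCombination K fun x => if x.2.2.length = 0 then 1 else 0

theorem ptAug_quo (v : List (C × A) →₀ K) : ptAug K C A (quo K (0 : A →+ Unit) v) = aug K v := by
  have : ptAug K C A ∘ₗ quo K (0 : A →+ Unit) = aug K := by
    ext l : 2
    rcases l with _ | ⟨x, t⟩
    · simp [quo_nil, aug_single]
    · simp [quo_cons, ptAug, aug_single]
  exact LinearMap.congr_fun this v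

theorem ptAug_redD (v : Red K C A Unit) : ptAug K C A (redD K (0 : A →+ Unit) v) = 0 := by
  have : ptAug K C A ∘ₗ redD K (0 : A →+ Unit) = 0 := by
    ext x : 2
    simp only [LinearMap.comp_apply, Finsupp.lsingle_apply, redD_single, LinearMap.zero_apply]
    rw [show x.1 = 0 from rfl, tr_zero, ptAug_quo, aug_ubd]
  exact LinearMap.congr_fun this v

end Target

section Cyclic
variable (p : ℕ) [Fact p.Prime] {C A : Type*} [AddCommGroup A]

/-- The operator `T - 1`, where `T` is the generator of the action of `ℤ/p`. -/
noncomputable def tau (C A : Type*) :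
    Module.End (ZMod p) (Red (ZMod p) C A (ZMod p)) := tr (ZMod p) C A 1 - 1

/-- The norm operator `1 + T + ⋯ + T ^ (p - 1)`. -/
noncomputable def nrm (C A : Type*) :
    Module.End (ZMod p) (Red (ZMod p) C A (ZMod p)) :=
  ∑ g ∈ Finset.range p, tr (ZMod p) C A (g : ZMod p)

theorem tr_pow (g : ℕ) : (tr (ZMod p) C A (1 : ZMod p) :
    Module.End (ZMod p) (Red (ZMod p) C A (ZMod p))) ^ g = tr (ZMod p) C A (g : ZMod p) := by
  induction g with
  | zero => ext1 v; ext1; simp [tr_zero]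
  | succ g ih =>
    apply LinearMap.ext
    intro v
    rw [pow_succ, ih, Module.End.mul_apply, tr_tr, Nat.cast_succ]

/-- In characteristic `p`, the polynomials `1 + X + ⋯ + X ^ (p - 1)` and `(X - 1) ^ (p - 1)`
agree. -/
theorem nrm_eq : nrm p C A = tau p C A ^ (p - 1) := by
  have h := Polynomial.cyclotomic_mul_prime_eq_pow_of_not_dvd (ZMod p) (p := p) (n := 1)
    (by simpa using (Fact.out : p.Prime).one_lt.ne')
  rw [one_mul, Polynomial.cyclotomic_one, Polynomial.cyclotomic_prime] at h
  have := congrArg (Polynomial.aeval (tr (ZMod p) C A (1 : ZMod p) :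
    Module.End (ZMod p) (Red (ZMod p) C A (ZMod p)))) h
  simp only [map_sum, map_pow, Polynomial.aeval_X, map_sub, map_one, tr_pow] at this
  exact this

theorem nrm_eq_mul (hp : 3 ≤ p) : nrm p C A = tau p C A * tau p C A ^ (p - 2) := by
  rw [nrm_eq, ← pow_succ']; congr 1; omega

theorem nrm_eq_mul' (hp : 3 ≤ p) : nrm p C A = tau p C A ^ (p - 2) * tau p C A := by
  rw [nrm_eq, ← pow_succ]; congr 1; omega

theorem sub_ofPt (v : Red (ZMod p) C A (ZMod p)) :
    ∃ e, v - ofPt (ZMod p) C A (ZMod p) (toPt (ZMod p) C A (ZMod p) v) = tau p C A e := by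
  suffices LinearMap.range (LinearMap.id - ofPt (ZMod p) C A (ZMod p) ∘ₗ toPt (ZMod p) C A (ZMod p))
      ≤ LinearMap.range (tau p C A) by
    obtain ⟨e, he⟩ := this ⟨v, rfl⟩
    exact ⟨e, he.symm⟩
  rintro _ ⟨v, rfl⟩
  induction v using Finsupp.induction_linear with
  | zero => simp
  | add f g hf hg => rw [map_add]; exact add_mem hf hg
  | single x c =>
    obtain ⟨z, x⟩ := x
    obtain ⟨g, rfl⟩ := ZMod.natCast_zmod_surjective z
    have e : Finsupp.single ((g : ZMod p), x) c =
        ((tr (ZMod p) C A (1 : ZMod p) : Module.End (ZMod p) (Red (ZMod p) C A (ZMod p))) ^ g)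
          (Finsupp.single (0, x) c) := by
      rw [tr_pow, tr_single, add_zero]
    simp only [LinearMap.sub_apply, LinearMap.id_apply, LinearMap.comp_apply,
      e]
    have h0 : Finsupp.single ((0 : ZMod p), x) c = ofPt (ZMod p) C A (ZMod p)
        (toPt (ZMod p) C A (ZMod p) (Finsupp.single ((0 : ZMod p), x) c)) := by
      rw [toPt_single, ofPt_single]
    clear e
    generalize Finsupp.single ((0 : ZMod p), x) c = w at h0
    induction g with
    | zero => exact ⟨0, by rw [map_zero, pow_zero, Module.End.one_apply, ← h0, sub_self]⟩
    | succ g ih =>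
      rw [pow_succ', Module.End.mul_apply]
      convert add_mem ih (LinearMap.mem_range_self (tau p C A)
        (((tr (ZMod p) C A (1 : ZMod p) : Module.End (ZMod p) (Red (ZMod p) C A (ZMod p))) ^ g) w))
        using 1
      simp [tau, toPt_tr]

theorem toPt_tau (v : Red (ZMod p) C A (ZMod p)) :
    toPt (ZMod p) C A (ZMod p) (tau p C A v) = 0 := by
  simp [tau, toPt_tr]

theorem exists_tau_of_toPt {v : Red (ZMod p) C A (ZMod p)}
    (h : toPt (ZMod p) C A (ZMod p) v = 0) : ∃ e, v = tau p C A e := by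
  obtain ⟨e, he⟩ := sub_ofPt p v
  exact ⟨e, by simpa [h] using he⟩

theorem nrm_apply (v : Red (ZMod p) C A (ZMod p)) (z : ZMod p) (x : C × List (C × A)) :
    nrm p C A (ofPt (ZMod p) C A (ZMod p) (toPt (ZMod p) C A (ZMod p) v)) (z, x) =
      toPt (ZMod p) C A (ZMod p) v ((), x) := by
  generalize toPt (ZMod p) C A (ZMod p) v = w
  induction w using Finsupp.induction_linear with
  | zero => simp
  | add f g hf hg => simp [hf, hg]
  | single y c =>
    obtain ⟨-, y⟩ := y
    simp only [ofPt_single, nrm, LinearMap.sum_apply, tr_single, add_zero, Finsupp.finsetSum_apply]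
    have hz : z = (z.val : ZMod p) := by simp
    classical
    by_cases hy : y = x
    · subst hy
      rw [Finset.sum_eq_single z.val]
      · rw [← hz]; simp
      · intro g hg hne
        apply Finsupp.single_eq_of_ne
        intro h
        apply hne
        have h' : z = (g : ZMod p) := (Prod.ext_iff.1 h).1
        rw [h']
        exact (ZMod.val_natCast_of_lt (Finset.mem_range.1 hg)).symm
      · intro h
        exact absurd (Finset.mem_range.2 (ZMod.val_lt z)) h
    · rw [Finsupp.single_eq_of_ne (fun h => hy (Prod.ext_iff.1 h).2.symm)]
      refine Finset.sum_eq_zero fun g _ => ?_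
      exact Finsupp.single_eq_of_ne (fun h => hy (Prod.ext_iff.1 h).2.symm)

theorem toPt_surj (w : Red (ZMod p) C A Unit) : ∃ v, toPt (ZMod p) C A (ZMod p) v = w :=
  ⟨_, toPt_ofPt w⟩

theorem ker_tau {v : Red (ZMod p) C A (ZMod p)} (h : tau p C A v = 0) : ∃ e, v = nrm p C A e := by
  have h1 : ∀ z x, v (z, x) = v (0, x) := by
    intro z x
    obtain ⟨g, rfl⟩ := ZMod.natCast_zmod_surjective z
    have h2 : tr (ZMod p) C A (g : ZMod p) v = v := by
      rw [← tr_pow]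
      induction g with
      | zero => rfl
      | succ g ih =>
        rw [pow_succ, Module.End.mul_apply]
        rw [show tr (ZMod p) C A (1 : ZMod p) v = v by simpa [tau, sub_eq_zero] using h, ih]
    have h3 : tr (ZMod p) C A (g : ZMod p) v ((g : ZMod p) + 0, x) = v (0, x) := by
      rw [tr, Finsupp.lmapDomain_apply]
      refine Finsupp.mapDomain_apply (f := fun y : ZMod p × (C × List (C × A)) =>
        ((g : ZMod p) + y.1, y.2)) ?_ v (0, x)
      rintro ⟨a, b⟩ ⟨c, d⟩ h
      simpa using h
    rwa [add_zero, h2] at h3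
  obtain ⟨w, hw⟩ : ∃ w : Red (ZMod p) C A Unit, ∀ x, w ((), x) = v (0, x) :=
    ⟨v.comapDomain (fun x => (0, x.2)) (by rintro ⟨_, a⟩ _ ⟨_, b⟩ _ h; simpa using h),
      fun x => rfl⟩
  obtain ⟨u, rfl⟩ := toPt_surj p w
  refine ⟨ofPt (ZMod p) C A (ZMod p) (toPt (ZMod p) C A (ZMod p) u), ?_⟩
  ext ⟨z, x⟩
  rw [nrm_apply, hw, h1]

theorem nrm_tau (v : Red (ZMod p) C A (ZMod p)) : nrm p C A (tau p C A v) = 0 := by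
  have h : ∀ e, tau p C A (nrm p C A e) = 0 := by
    intro e
    have : tau p C A * nrm p C A = 0 := by
      have h := congrArg (Polynomial.aeval (tr (ZMod p) C A (1 : ZMod p) :
        Module.End (ZMod p) (Red (ZMod p) C A (ZMod p))))
        (sub_pow_expChar (R := Polynomial (ZMod p)) (p := p) Polynomial.X 1)
      simp only [map_pow, Polynomial.aeval_X, map_sub, map_one, one_pow, tr_pow] at h
      rw [nrm_eq, ← pow_succ', Nat.sub_add_cancel (Fact.out : p.Prime).one_le, tau, h]
      apply LinearMap.ext; intro v
      simp [tr_zero]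
    exact LinearMap.congr_fun this e
  have e1 : nrm p C A (tau p C A v) = tau p C A (nrm p C A v) := by
    simp only [nrm_eq, ← Module.End.mul_apply, ← pow_succ, ← pow_succ']
  rw [e1, h]

theorem ker_nrm {v : Red (ZMod p) C A (ZMod p)} (h : nrm p C A v = 0) :
    ∃ e, v = tau p C A e := by
  apply exists_tau_of_toPt
  obtain ⟨e, he⟩ := sub_ofPt p v
  have h2 := congrArg (nrm p C A) he
  rw [nrm_tau p, map_sub, h, zero_sub, neg_eq_zero] at h2
  ext ⟨⟨⟩, x⟩
  rw [← nrm_apply p v 0 x, h2]; rfl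

end Cyclic

/-! ### The chase in the quotients -/

section LowerAlgebra
variable (p : ℕ) [Fact p.Prime] {C A : Type*} [AddCommGroup A]

/-- The operator `T - 1` in odd degree, the norm in positive even degree, where `T` is the
translation by `a`. -/
noncomputable def opD (a : A) (s : ℕ) :
    (List (C × A) →₀ ZMod p) →ₗ[ZMod p] (List (C × A) →₀ ZMod p) :=
  if s = 0 then 0 else if Odd s then sh (ZMod p) a - LinearMap.id else
    ∑ g ∈ Finset.range p, sh (ZMod p) (g • a)

/-- The operator induced by `opD` on the reduced complex. -/
noncomputable def redOp (C A : Type*) [AddCommGroup A] (s : ℕ) :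
    Module.End (ZMod p) (Red (ZMod p) C A (ZMod p)) :=
  if s = 0 then 0 else if Odd s then tau p C A else nrm p C A

theorem redOp_zero : redOp p C A 0 = 0 := by simp [redOp]
theorem redOp_odd (a : ℕ) : redOp p C A (2 * a + 1) = tau p C A := by simp [redOp]
theorem redOp_even (a : ℕ) : redOp p C A (2 * a + 2) = nrm p C A := by
  simp [redOp, Nat.odd_add]

theorem quo_opD (χ : A →+ ZMod p) (a : A) (s : ℕ) (v : List (C × A) →₀ ZMod p) :
    (χ a = 1 → quo (ZMod p) χ (opD p a s v) = redOp p C A s (quo (ZMod p) χ v)) ∧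
    (χ a = 0 → quo (ZMod p) χ (opD p a s v) = 0) := by
  unfold opD redOp
  split_ifs
  · simp
  · refine ⟨fun h => ?_, fun h => ?_⟩ <;>
      simp [quo_sh, h, tau, tr_zero]
  · refine ⟨fun h => ?_, fun h => ?_⟩
    · simp [quo_sh, h, nrm]
    · simp only [LinearMap.sum_apply, map_sum, quo_sh, map_nsmul, h, smul_zero, tr_zero,
        Finset.sum_const, Finset.card_range]
      rw [← Nat.cast_smul_eq_nsmul (ZMod p), CharP.cast_eq_zero, zero_smul]

/-- The generator of the `j`-th factor of the group `(ℤ/p) ^ k` in its action on the labels: the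
labels record positions relative to the coordinate `0`. -/
def gen (m : ℕ) (j : Fin (m + 2)) : Fin (m + 2) → ZMod p :=
  if j = 0 then fun l => if l = 0 then 0 else 1 else Pi.single j 1

/-- The coordinate homomorphism. -/
def coord (m : ℕ) (l : Fin (m + 2)) : (Fin (m + 2) → ZMod p) →+ ZMod p :=
  Pi.evalAddMonoidHom _ l

theorem coord_gen (m : ℕ) (j l : Fin (m + 2)) (hl : l ≠ 0) :
    coord p m l (gen p m j) = if j = 0 ∨ j = l then 1 else 0 := by
  by_cases hj : j = 0
  · simp [coord, gen, hj, hl]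
  · by_cases h : j = l
    · subst h; simp [coord, gen, hj]
    · simp [coord, gen, hj, h, Ne.symm h]

variable {p}
variable {m : ℕ} (b : (Fin (m + 2) → ℕ) → (List (C × (Fin (m + 2) → ZMod p)) →₀ ZMod p))

theorem red_relation {E : Fin (m + 2) → ℕ}
    (hb : ubd (ZMod p) (b E) = ∑ j, (-1 : ZMod p) ^ (∑ i ∈ Finset.Iio j, E i) •
        opD p (gen p m j) (E j) (b (Function.update E j (E j - 1))))
    (l : Fin (m + 2)) (hl : l ≠ 0) :
    redD (ZMod p) (coord p m l) (quo (ZMod p) (coord p m l) (b E)) =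
      redOp p C _ (E 0) (quo (ZMod p) (coord p m l) (b (Function.update E 0 (E 0 - 1)))) +
      (-1 : ZMod p) ^ (∑ i ∈ Finset.Iio l, E i) •
        redOp p C _ (E l) (quo (ZMod p) (coord p m l) (b (Function.update E l (E l - 1)))) := by
  rw [redD_quo, hb, map_sum, Finset.sum_eq_add (0 : Fin (m + 2)) l hl.symm]
  · rw [map_smul, map_smul, (quo_opD p _ _ _ _).1, (quo_opD p _ _ _ _).1]
    · have : Finset.Iio (0 : Fin (m + 2)) = ∅ := by
        ext; simp
      rw [this, Finset.sum_empty, pow_zero, one_smul]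
    · rw [coord_gen p m _ _ hl]; simp
    · rw [coord_gen p m _ _ hl]; simp
  · rintro j - ⟨h0, h1⟩
    rw [map_smul, (quo_opD p _ _ _ _).2, smul_zero]
    rw [coord_gen p m _ _ hl]; simp [h0, h1]
  · simp
  · simp

theorem chase_enter {v : List (C × A) →₀ ZMod p} (χ : A →+ ZMod p)
    (h : ∃ w, quo (ZMod p) (0 : A →+ Unit) v = redD (ZMod p) (0 : A →+ Unit) w) :
    ∃ w e, quo (ZMod p) χ v = redD (ZMod p) χ w + tau p C A e := by
  obtain ⟨w, hw⟩ := h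
  obtain ⟨w, rfl⟩ := toPt_surj p w
  rw [← toPt_quo χ, ← toPt_redD χ, ← sub_eq_zero, ← map_sub] at hw
  obtain ⟨e, he⟩ := exists_tau_of_toPt p hw
  exact ⟨w, e, by rw [← he]; abel⟩

theorem chase_exit (hp : 3 ≤ p) {v : List (C × A) →₀ ZMod p} (χ : A →+ ZMod p)
    (h : ∃ w e, quo (ZMod p) χ v = redD (ZMod p) χ w + nrm p C A e) :
    ∃ w, quo (ZMod p) (0 : A →+ Unit) v = redD (ZMod p) (0 : A →+ Unit) w := by
  obtain ⟨w, e, h⟩ := h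
  refine ⟨toPt (ZMod p) C A (ZMod p) w, ?_⟩
  rw [← toPt_quo χ, h, map_add, toPt_redD, nrm_eq_mul p hp, Module.End.mul_apply, toPt_tau,
    add_zero]

theorem redD_tau (χ : A →+ ZMod p) (v : Red (ZMod p) C A (ZMod p)) :
    redD (ZMod p) χ (tau p C A v) = tau p C A (redD (ZMod p) χ v) := by
  simp [tau, redD_tr]

theorem redD_nrm (χ : A →+ ZMod p) (v : Red (ZMod p) C A (ZMod p)) :
    redD (ZMod p) χ (nrm p C A v) = nrm p C A (redD (ZMod p) χ v) := by
  simp [nrm, redD_tr]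

theorem redD_pow (χ : A →+ ZMod p) (g : ℕ) (v : Red (ZMod p) C A (ZMod p)) :
    redD (ZMod p) χ ((tau p C A ^ g) v) = (tau p C A ^ g) (redD (ZMod p) χ v) := by
  induction g with
  | zero => rfl
  | succ g ih => rw [pow_succ', Module.End.mul_apply, redD_tau, ih, Module.End.mul_apply]

/-- The algebraic heart of the lower bound: a family of chains of coloured lists with the
boundary relations of a product of the minimal resolutions of `ℤ/p` cannot vanish in the top
relevant degree, if the central binomial coefficient is prime to `p`. -/
theorem lower_algebra (hp : 3 ≤ p) {n : ℕ} (hc : ¬ p ∣ (2 * n).choose n)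
    (hb : ∀ E : Fin (m + 2) → ℕ, (∀ j, E j ≤ 2 * n + 1) →
      ubd (ZMod p) (b E) = ∑ j, (-1 : ZMod p) ^ (∑ i ∈ Finset.Iio j, E i) •
        opD p (gen p m j) (E j) (b (Function.update E j (E j - 1))))
    (h0 : aug (ZMod p) (b 0) = 1)
    (htop : b (Function.update (fun _ => 2 * n + 1) 1 (2 * n)) = 0) : False := by
  let S : (Fin (m + 2) → ℕ) → Prop := fun E => ∃ w,
    quo (ZMod p) (0 : (Fin (m + 2) → ZMod p) →+ Unit) (b E) = redD (ZMod p) 0 w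
  let J : ℕ → ℕ → Fin (m + 2) → ℕ := fun l s i =>
    if (i : ℕ) < l then 0 else if (i : ℕ) = l then s else 2 * n + 1
  have h10 : (1 : Fin (m + 2)) ≠ 0 := by simp
  have step1 : S (J 1 0) := by
    let E : ℕ → ℕ → Fin (m + 2) → ℕ := fun i j =>
      Function.update (Function.update (fun _ => 2 * n + 1) 0 i) 1 j
    have hI0 : ∀ i j, E i j 0 = i := fun i j => by simp [E]
    have hI1 : ∀ i j, E i j 1 = j := fun i j => by simp [E]
    have hsum : ∀ i j, ∑ t ∈ Finset.Iio (1 : Fin (m + 2)), E i j t = i := fun i j => by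
      have : Finset.Iio (1 : Fin (m + 2)) = {0} := by
        ext t; simp [Fin.lt_one_iff]
      rw [this, Finset.sum_singleton, hI0]
    have hu0 : ∀ i j i', Function.update (E i j) 0 i' = E i' j := fun i j i' => by
      simp only [E]
      rw [Function.update_comm h10, Function.update_idem]
    have hu1 : ∀ i j j', Function.update (E i j) 1 j' = E i j' := fun i j j' => by
      simp only [E]
      rw [Function.update_idem]
    have hrel : ∀ i ≤ 2 * n + 1, ∀ j ≤ 2 * n + 1,
        redD (ZMod p) (coord p m 1) (quo (ZMod p) (coord p m 1) (b (E i j))) =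
        redOp p C _ i (quo (ZMod p) (coord p m 1) (b (E (i - 1) j))) +
        (-1 : ZMod p) ^ i • redOp p C _ j (quo (ZMod p) (coord p m 1) (b (E i (j - 1)))) := by
      intro i hi j hj
      have := red_relation b (hb (E i j) (fun t => by
        simp only [E, Function.update_apply]; split_ifs <;> omega)) 1 h10
      rwa [hI0, hI1, hsum, hu0, hu1] at this
    have hodd : ∀ a : ℕ, (-1 : ZMod p) ^ (2 * a + 1) = -1 := fun a => by
      rw [pow_succ, pow_mul]; simp
    have heven : ∀ a : ℕ, (-1 : ZMod p) ^ (2 * a + 2) = 1 := fun a => by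
      rw [pow_add, pow_mul]; simp
    have key := chase_two (d := redD (ZMod p) (coord p m 1)) (τ := tau p C _)
      (N := nrm p C _) (M := tau p C _ ^ (p - 2)) (redD_redD _) (redD_tau _) (redD_nrm _)
      (redD_pow _ _) (LinearMap.congr_fun (nrm_eq_mul p hp))
      (LinearMap.congr_fun (nrm_eq_mul' p hp)) (fun x h => ker_tau p h) (fun x h => ker_nrm p h)
      n (by rwa [Ne, ZMod.natCast_eq_zero_iff])
      (fun i j => quo (ZMod p) (coord p m 1) (b (E i j)))
      (fun i hi => by
        have := hrel (2 * i + 1) (by omega) 0 (by omega)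
        simpa [redOp_zero, redOp_odd] using this)
      (fun i hi j hj => by
        have := hrel (2 * i + 1) (by omega) (2 * j + 2) (by omega)
        simpa [redOp_even, redOp_odd, hodd, ← sub_eq_add_neg] using this)
      (fun i hi j hj => by
        have := hrel (2 * i + 1) (by omega) (2 * j + 1) (by omega)
        simpa [redOp_odd, hodd, ← sub_eq_add_neg] using this)
      (by simpa [redOp_zero] using hrel 0 (by omega) 0 (by omega))
      (fun j hj => by
        have := hrel 0 (by omega) (2 * j + 2) (by omega)
        simpa [redOp_zero, redOp_even] using this)
      (fun i hi => by
        have := hrel (2 * i + 2) (by omega) 0 (by omega)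
        simpa [redOp_zero, redOp_even] using this)
      (fun i hi j hj => by
        have := hrel (2 * i + 2) (by omega) (2 * j + 2) (by omega)
        simpa [redOp_even, heven] using this)
      (by
        have : E (2 * n + 1) (2 * n) = Function.update (fun _ => 2 * n + 1) 1 (2 * n) := by
          simp only [E]
          congr 1
          funext t
          simp only [Function.update_apply, ite_self]
        refine ⟨0, 0, ?_⟩
        rw [this, htop]
        simp)
    have hJ : J 1 0 = E 0 0 := by
      funext t
      rcases Fin.eq_zero_or_eq_succ t with rfl | ⟨t, rfl⟩
      · simp [J, E]
      · rcases Fin.eq_zero_or_eq_succ t with rfl | ⟨t, rfl⟩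
        · simp [J, E]
        · have h1 : (t.succ.succ : Fin (m + 2)) ≠ 1 := by
            rw [Ne, Fin.ext_iff]; simp
          simp [J, E, h1]
    change S (J 1 0)
    rw [hJ]
    exact chase_exit hp _ key
  have step2 : ∀ l, l < m + 1 → S (J (l + 1) 0) := by
    intro l hl
    induction l with
    | zero => exact step1
    | succ l ih =>
      have ih := ih (by omega)
      let x : Fin (m + 2) := ⟨l + 2, by omega⟩
      have hx : x ≠ 0 := by rw [Ne, Fin.ext_iff]; simp [x]
      have e1 : J (l + 1) 0 = J (l + 2) (2 * n + 1) := by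
        funext t
        simp only [J]
        split_ifs <;> omega
      rw [e1] at ih
      have hx' : ∀ s, J (l + 2) s x = s := fun s => by simp [J, x]
      have h0' : ∀ s, J (l + 2) s 0 = 0 := fun s => by simp [J]
      have hs : ∀ s, ∑ t ∈ Finset.Iio x, J (l + 2) s t = 0 := fun s =>
        Finset.sum_eq_zero fun t ht => if_pos (by
          have := Finset.mem_Iio.1 ht
          simpa [Fin.lt_def, x] using this)
      have hu : ∀ s s', Function.update (J (l + 2) s) x s' = J (l + 2) s' := fun s s' => by
        funext t
        simp only [J, Function.update_apply, Fin.ext_iff, x]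
        split_ifs <;> omega
      have hrel : ∀ s ≤ 2 * n + 1,
          redD (ZMod p) (coord p m x) (quo (ZMod p) (coord p m x) (b (J (l + 2) s))) =
          redOp p C _ s (quo (ZMod p) (coord p m x) (b (J (l + 2) (s - 1)))) := by
        intro s hs'
        have := red_relation b (hb (J (l + 2) s) (fun t => by
          simp only [J]; split_ifs <;> omega)) x hx
        rwa [hx', h0', hs, hu, redOp_zero, LinearMap.zero_apply, zero_add, pow_zero,
          one_smul] at this
      refine chase_exit hp (coord p m x) (chase_one (redD_redD _) (redD_tau _) (redD_nrm _)
        (fun x h => ker_tau p h) (fun x h => ker_nrm p h) n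
        (fun s => quo (ZMod p) (coord p m x) (b (J (l + 2) s))) (fun a ha => ?_) (fun a ha => ?_)
        (chase_enter _ ih))
      · have := hrel (2 * a + 1) (by omega)
        rwa [redOp_odd] at this
      · have := hrel (2 * a + 2) (by omega)
        rwa [redOp_even] at this
  obtain ⟨w, hw⟩ := step2 m (by omega)
  have e : J (m + 1) 0 = 0 := by
    funext t
    simp only [J, Pi.zero_apply]
    split_ifs <;> omega
  rw [e] at hw
  have := congrArg (ptAug (ZMod p) C _) hw
  rw [ptAug_quo, ptAug_redD, h0] at this
  exact one_ne_zero this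

end LowerAlgebra

/-! ### Products of list complexes -/

section Product
open scoped TensorProduct
variable (K : Type*) [CommRing K] {k : ℕ} {S : Type*}

open Classical in
/-- The tensor power of the space of chains of lists is spanned by the families of lists. -/
noncomputable def tenE (k : ℕ) (S : Type*) :
    (⨂[K] _ : Fin k, (List S →₀ K)) ≃ₗ[K] ((Fin k → List S) →₀ K) :=
  PiTensorProduct.ofFinsuppEquiv'

/-- The external product of a family of chains. -/
noncomputable def tens (c : Fin k → (List S →₀ K)) : (Fin k → List S) →₀ K :=
  tenE K k S (PiTensorProduct.tprod K c)

/-- The tensor product of a family of linear maps. -/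
noncomputable def mapT {T : Type*} (φ : Fin k → ((List S →₀ K) →ₗ[K] (List T →₀ K))) :
    ((Fin k → List S) →₀ K) →ₗ[K] ((Fin k → List T) →₀ K) :=
  (tenE K k T).toLinearMap ∘ₗ PiTensorProduct.map φ ∘ₗ (tenE K k S).symm.toLinearMap

/-- The factors of the `j`-th partial boundary operator, with the Koszul sign. -/
noncomputable def phi (j i : Fin k) : (List S →₀ K) →ₗ[K] (List S →₀ K) :=
  if i < j then sg K else if i = j then ubd K else LinearMap.id

/-- The boundary operator of the product of `k` unaugmented list complexes. -/
noncomputable def bdB : ((Fin k → List S) →₀ K) →ₗ[K] ((Fin k → List S) →₀ K) :=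
  ∑ j, mapT K (phi K j)

/-- The augmentation of the product complex. -/
noncomputable def epsB : ((Fin k → List S) →₀ K) →ₗ[K] K :=
  PiTensorProduct.lift ((MultilinearMap.mkPiAlgebra K (Fin k) K).compLinearMap fun _ => aug K) ∘ₗ
    (tenE K k S).symm.toLinearMap

variable {K}

theorem tens_apply (c : Fin k → (List S →₀ K)) (L : Fin k → List S) :
    tens K c L = ∏ i, c i (L i) := by
  simp [tens, tenE]

theorem tens_single (L : Fin k → List S) :
    tens K (fun i => Finsupp.single (L i) 1) = Finsupp.single L 1 := by
  classical
  simp [tens, tenE]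

theorem mapT_tens {T : Type*} (φ : Fin k → ((List S →₀ K) →ₗ[K] (List T →₀ K)))
    (c : Fin k → (List S →₀ K)) : mapT K φ (tens K c) = tens K fun i => φ i (c i) := by
  simp [mapT, tens]

theorem epsB_tens (c : Fin k → (List S →₀ K)) : epsB K (tens K c) = ∏ i, aug K (c i) := by
  simp [epsB, tens]

theorem ext_tens {M : Type*} [AddCommGroup M] [Module K M]
    {f g : ((Fin k → List S) →₀ K) →ₗ[K] M} (h : ∀ c, f (tens K c) = g (tens K c)) : f = g := by
  ext L : 2
  simpa [tens_single] using h fun i => Finsupp.single (L i) 1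

theorem tens_update_zero (c : Fin k → (List S →₀ K)) (i : Fin k) (h : c i = 0) :
    tens K c = 0 := by
  rw [tens, MultilinearMap.map_coord_zero _ i h, map_zero]

theorem tens_update_smul (c : Fin k → (List S →₀ K)) (i : Fin k) (a : K) (z : List S →₀ K) :
    tens K (Function.update c i (a • z)) = a • tens K (Function.update c i z) := by
  rw [tens, MultilinearMap.map_update_smul, map_smul, tens]

theorem tens_update_add (c : Fin k → (List S →₀ K)) (i : Fin k) (y z : List S →₀ K) :
    tens K (Function.update c i (y + z)) =
      tens K (Function.update c i y) + tens K (Function.update c i z) := by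
  rw [tens, MultilinearMap.map_update_add, map_add, tens, tens]

/-- The external product as a linear map in one variable. -/
noncomputable def tensLin (c : Fin k → (List S →₀ K)) (i : Fin k) :
    (List S →₀ K) →ₗ[K] ((Fin k → List S) →₀ K) where
  toFun z := tens K (Function.update c i z)
  map_add' := tens_update_add c i
  map_smul' := tens_update_smul c i

theorem bdB_tens (c : Fin k → (List S →₀ K)) :
    bdB K (tens K c) = ∑ j, tens K fun i => phi K j i (c i) := by
  simp only [bdB, LinearMap.sum_apply, mapT_tens]

theorem phi_anti (c : Fin k → (List S →₀ K)) {i j : Fin k} (hij : i < j) :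
    tens K (fun l => phi K i l (phi K j l (c l))) =
      - tens K (fun l => phi K j l (phi K i l (c l))) := by
  have h : (fun l => phi K i l (phi K j l (c l))) =
      Function.update (fun l => phi K j l (phi K i l (c l))) i
        ((-1 : K) • phi K j i (phi K i i (c i))) := by
    funext l
    by_cases hl : l = i
    · subst hl
      simp [phi, hij, ubd_sg]
    · rw [Function.update_of_ne hl]
      simp only [phi, if_neg hl]
      by_cases h1 : l < i
      · simp [h1, h1.trans hij]
      · simp [h1]
  rw [h, tens_update_smul, Function.update_eq_self_iff.2 rfl, neg_one_smul]

theorem bdB_bdB (h2 : IsUnit (2 : K)) (x : (Fin k → List S) →₀ K) : bdB K (bdB K x) = 0 := by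
  have : bdB K ∘ₗ bdB K = (0 : ((Fin k → List S) →₀ K) →ₗ[K] ((Fin k → List S) →₀ K)) := by
    apply ext_tens
    intro c
    let F : Fin k → Fin k → ((Fin k → List S) →₀ K) := fun i j =>
      tens K (fun l => phi K i l (phi K j l (c l)))
    have hF : ∀ i j, F i j = - F j i := by
      intro i j
      rcases lt_trichotomy i j with h | rfl | h
      · exact phi_anti c h
      · have : F i i = 0 := tens_update_zero _ i (by simp [phi, ubd_ubd])
        rw [this, neg_zero]
      · rw [eq_neg_iff_add_eq_zero, add_comm, ← eq_neg_iff_add_eq_zero]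
        exact phi_anti c h
    have e : (bdB K ∘ₗ bdB K) (tens K c) = ∑ j, ∑ i, F i j := by
      simp only [LinearMap.comp_apply, bdB_tens, map_sum]
      rfl
    have e2 : ∑ j, ∑ i, F i j = - ∑ j, ∑ i, F i j := by
      conv_lhs => rw [Finset.sum_comm]
      simp only [← Finset.sum_neg_distrib]
      exact Finset.sum_congr rfl fun i _ => Finset.sum_congr rfl fun j _ => hF i j
    rw [e, LinearMap.zero_apply]
    generalize ∑ j, ∑ i, F i j = w at e2
    have e3 : (2 : K) • w = 0 := by
      rw [two_smul]; nth_rw 1 [e2]; simp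
    exact h2.smul_eq_zero.1 e3
  exact LinearMap.congr_fun this x

theorem epsB_bdB (x : (Fin k → List S) →₀ K) : epsB K (bdB K x) = 0 := by
  have : epsB K ∘ₗ bdB K = (0 : ((Fin k → List S) →₀ K) →ₗ[K] K) := by
    apply ext_tens
    intro c
    simp only [LinearMap.comp_apply, bdB_tens, map_sum, epsB_tens, LinearMap.zero_apply]
    refine Finset.sum_eq_zero fun j _ => Finset.prod_eq_zero (Finset.mem_univ j) ?_
    simp [phi, aug_ubd]
  exact LinearMap.congr_fun this x

theorem epsB_single (L : Fin k → List S) :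
    epsB K (Finsupp.single L 1) = ∏ i, if (L i).length = 1 then 1 else 0 := by
  rw [← tens_single, epsB_tens]
  simp only [aug_single]

theorem sg_lmap {T : Type*} (f : S → T) (z : List S →₀ K) :
    sg K (lmap K f z) = lmap K f (sg K z) := by
  have : sg K ∘ₗ lmap K f = lmap K f ∘ₗ sg K := by
    ext l : 2
    simp [sg_single]
  exact LinearMap.congr_fun this z

theorem bdB_lmap {T : Type*} (g : Fin k → S → T) (x : (Fin k → List S) →₀ K) :
    bdB K (mapT K (fun i => lmap K (g i)) x) = mapT K (fun i => lmap K (g i)) (bdB K x) := by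
  have : bdB K ∘ₗ mapT K (fun i => lmap K (g i)) = mapT K (fun i => lmap K (g i)) ∘ₗ bdB K := by
    apply ext_tens
    intro c
    simp only [LinearMap.comp_apply, mapT_tens, bdB_tens, map_sum]
    refine Finset.sum_congr rfl fun j _ => congrArg _ (funext fun i => ?_)
    unfold phi
    split_ifs
    · exact sg_lmap _ _
    · exact ubd_lmap _ _
    · rfl
  exact LinearMap.congr_fun this x

theorem mem_support_bdB {L L' : Fin k → List S} (h : bdB K (Finsupp.single L 1) L' ≠ 0) :
    (∀ i, (L' i).Sublist (L i)) ∧ (∀ i, L i ≠ [] → L' i ≠ []) ∧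
      ∑ i, (L' i).length + 1 = ∑ i, (L i).length := by
  rw [← tens_single, bdB_tens, Finsupp.finsetSum_apply] at h
  obtain ⟨j, -, hj⟩ := Finset.exists_ne_zero_of_sum_ne_zero h
  rw [tens_apply] at hj
  have hne : ∀ i, phi K j i (Finsupp.single (L i) 1) (L' i) ≠ 0 := fun i hi =>
    hj (Finset.prod_eq_zero (Finset.mem_univ i) hi)
  have hjj := mem_support_ubd (K := K) (by simpa [phi] using hne j)
  have hoff : ∀ i, i ≠ j → L' i = L i := by
    intro i hi
    have h1 := hne i
    by_contra h2
    apply h1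
    simp only [phi, if_neg hi]
    split_ifs
    · simp [sg_single, Finsupp.single_eq_of_ne h2]
    · simp [Finsupp.single_eq_of_ne h2]
  refine ⟨fun i => ?_, fun i h1 => ?_, ?_⟩
  · by_cases hi : i = j
    · subst hi; exact hjj.1
    · rw [hoff i hi]
  · by_cases hi : i = j
    · subst hi; exact hjj.2.2
    · rwa [hoff i hi]
  · rw [← Finset.add_sum_erase _ _ (Finset.mem_univ j),
      ← Finset.add_sum_erase _ (fun i => (L i).length) (Finset.mem_univ j),
      Finset.sum_congr rfl fun i hi => by rw [hoff i (Finset.ne_of_mem_erase hi)]]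
    have := hjj.2.1
    omega
end Product

/-! ### Coloured lists attached to products of lists -/

section Supp
variable {K B B' M : Type*} [CommRing K] [AddCommGroup M] [Module K M]

theorem eq_on_supp {f g : (B →₀ K) →ₗ[K] M} {x : B →₀ K}
    (h : ∀ b, x b ≠ 0 → f (Finsupp.single b 1) = g (Finsupp.single b 1)) : f x = g x := by
  classical
  have hx : x = ∑ b ∈ x.support, x b • Finsupp.single b (1 : K) := by
    conv_lhs => rw [← Finsupp.sum_single x, Finsupp.sum]
    simp
  rw [hx, map_sum, map_sum]
  refine Finset.sum_congr rfl fun b hb => ?_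
  rw [map_smul, map_smul, h b (Finsupp.mem_support_iff.1 hb)]

theorem exists_supp {f : (B →₀ K) →ₗ[K] (B' →₀ K)} {x : B →₀ K} {l : B'} (h : f x l ≠ 0) :
    ∃ b, x b ≠ 0 ∧ f (Finsupp.single b 1) l ≠ 0 := by
  by_contra! hc
  apply h
  have := eq_on_supp (f := Finsupp.lapply l ∘ₗ f) (g := 0) (x := x)
    fun b hb => by simpa using hc b hb
  simpa using this

end Supp

section Lambda
set_option linter.unusedSectionVars false
variable {K : Type*} [CommRing K] {k : ℕ} {S C A : Type*} [LinearOrder C] [WellFoundedLT C]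
  [AddCommGroup A]

/-- The partial cone operator with apex `m`: lists starting with a vertex of larger colour get
`m` as first vertex, other lists are killed. -/
noncomputable def hm (K : Type*) [CommRing K] (m : C × A) :
    (List (C × A) →₀ K) →ₗ[K] (List (C × A) →₀ K) :=
  Finsupp.linearCombination K fun l =>
    if ∀ x ∈ l.head?, m.1 < x.1 then Finsupp.single (m :: l) 1 else 0

theorem hm_single (m : C × A) (l : List (C × A)) : hm K m (Finsupp.single l 1) =
    if ∀ x ∈ l.head?, m.1 < x.1 then Finsupp.single (m :: l) 1 else 0 := by
  simp [hm]

theorem hm_cone_lt {m x : C × A} (h : m.1 < x.1) (z : List (C × A) →₀ K) :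
    hm K m (cone K x z) = cone K m (cone K x z) := by
  have : hm K m ∘ₗ cone K x = cone K m ∘ₗ cone K x := by
    ext l : 2
    simp [hm_single, h]
  exact LinearMap.congr_fun this z

theorem hm_cone_self (m : C × A) (z : List (C × A) →₀ K) : hm K m (cone K m z) = 0 := by
  have : hm K m ∘ₗ cone K m = 0 := by
    ext l : 2
    simp [hm_single]
  exact LinearMap.congr_fun this z

/-- The partial cone operator is a contracting homotopy on the lists with increasing colours
whose vertices are, with `m`, vertices of a simplex having `m` as vertex of smallest colour. -/
theorem bd_hm_single {m : C × A} {l : List (C × A)} (hl : l.Pairwise fun x y => x.1 < y.1)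
    (h : ∀ x ∈ l, m.1 ≤ x.1 ∧ (x.1 = m.1 → x = m)) :
    bd K (hm K m (Finsupp.single l 1)) =
      Finsupp.single l 1 - hm K m (bd K (Finsupp.single l 1)) := by
  rcases l with _ | ⟨x, t⟩
  · simp [hm_single]
  · have hx := h x (by simp)
    rcases hx.1.lt_or_eq with h1 | h1
    · have ht : hm K m (Finsupp.single t 1) = Finsupp.single (m :: t) 1 := by
        rw [hm_single, if_pos]
        intro y hy
        exact h1.trans ((List.pairwise_cons.1 hl).1 y (List.mem_of_mem_head? hy))
      rw [hm_single, if_pos (by simpa using h1), bd_cons m]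
      congr 1
      rw [bd_cons, map_sub, map_sub, hm_cone_lt h1, ht, cone_single]
    · obtain rfl := hx.2 h1.symm
      have ht : hm K x (Finsupp.single t 1) = Finsupp.single (x :: t) 1 := by
        rw [hm_single, if_pos]
        intro y hy
        exact (List.pairwise_cons.1 hl).1 y (List.mem_of_mem_head? hy)
      rw [hm_single, if_neg (by simp), bd_cons, map_sub, hm_cone_self, ht]
      simp

theorem hm_sh (m : C × A) (a : A) (z : List (C × A) →₀ K) :
    hm K (m.1, a + m.2) (sh K a z) = sh K a (hm K m z) := by
  have : hm K (m.1, a + m.2) ∘ₗ sh K a = sh K a ∘ₗ hm K m := by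
    ext l : 2
    simp only [LinearMap.comp_apply, Finsupp.lsingle_apply, sh_single, hm_single]
    rcases l with _ | ⟨x, t⟩
    · simp [sh_single]
    · by_cases h : m.1 < x.1 <;> simp [h, sh_single]
  exact LinearMap.congr_fun this z

variable (lab : (Fin k → S) → C × A)

/-- The vertices of a product of lists. -/
def vert (L : Fin k → List S) : Set (Fin k → S) := {x | ∀ j, x j ∈ L j}

/-- A product of nonempty lists is fine if the labels of its vertices are determined by their
colours. -/
def Fine (L : Fin k → List S) : Prop :=
  (∀ j, L j ≠ []) ∧ ∀ x ∈ vert L, ∀ y ∈ vert L, (lab x).1 = (lab y).1 → lab x = lab y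

/-- The label `m` has the smallest colour among the labels of the vertices of `L`. -/
def IsMinLab (L : Fin k → List S) (m : C × A) : Prop :=
  m ∈ lab '' vert L ∧ ∀ x ∈ lab '' vert L, m.1 ≤ x.1

variable {lab}

theorem vert_mono {L L' : Fin k → List S} (h : ∀ i, (L' i).Sublist (L i)) : vert L' ⊆ vert L :=
  fun _ hx j => (h j).subset (hx j)

theorem Fine.face {L L' : Fin k → List S} (hL : Fine lab L)
    (h : bdB K (Finsupp.single L 1) L' ≠ 0) : Fine lab L' := by
  obtain ⟨h1, h2, -⟩ := mem_support_bdB h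
  exact ⟨fun j => h2 j (hL.1 j), fun x hx y hy =>
    hL.2 x (vert_mono h1 hx) y (vert_mono h1 hy)⟩

theorem Fine.bdB {x : (Fin k → List S) →₀ K} (hx : ∀ L, x L ≠ 0 → Fine lab L) (L : Fin k → List S)
    (hL : bdB K x L ≠ 0) : Fine lab L := by
  obtain ⟨L', h1, h2⟩ := exists_supp hL
  exact (hx L' h1).face h2

theorem Fine.exists_min {L : Fin k → List S} (hL : Fine lab L) : ∃ m, IsMinLab lab L m := by
  choose x hx using fun j => List.exists_mem_of_ne_nil _ (hL.1 j)
  obtain ⟨c, ⟨m, hm, rfl⟩, hc⟩ := (wellFounded_lt (α := C)).has_min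
    (Prod.fst '' (lab '' vert L)) ⟨_, _, ⟨_, hx, rfl⟩, rfl⟩
  exact ⟨m, hm, fun y hy => not_lt.1 (hc _ ⟨y, hy, rfl⟩)⟩

theorem Fine.eq_of_fst {L : Fin k → List S} (hL : Fine lab L) {x y : C × A}
    (hx : x ∈ lab '' vert L) (hy : y ∈ lab '' vert L) (h : x.1 = y.1) : x = y := by
  obtain ⟨x, hx, rfl⟩ := hx
  obtain ⟨y, hy, rfl⟩ := hy
  exact hL.2 x hx y hy h

theorem Fine.min_unique {L : Fin k → List S} (hL : Fine lab L) {m m' : C × A}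
    (h : IsMinLab lab L m) (h' : IsMinLab lab L m') : m = m' :=
  hL.eq_of_fst h.1 h'.1 (le_antisymm (h.2 _ h'.1) (h'.2 _ h.1))

theorem mapT_single {T : Type*} (g : Fin k → S → T) (L : Fin k → List S) :
    mapT K (fun i => lmap K (g i)) (Finsupp.single L 1) =
      Finsupp.single (fun i => (L i).map (g i)) 1 := by
  rw [← tens_single, mapT_tens, ← tens_single]
  simp

theorem epsB_mapT (g : Fin k → S → S) (x : (Fin k → List S) →₀ K) :
    epsB K (mapT K (fun i => lmap K (g i)) x) = epsB K x := by
  have : epsB K ∘ₗ mapT K (fun i => lmap K (g i)) = epsB K := by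
    apply ext_tens
    intro c
    simp only [LinearMap.comp_apply, mapT_tens, epsB_tens, aug_lmap]
  exact LinearMap.congr_fun this x

theorem vert_map {g : Fin k → S → S} {L : Fin k → List S} {y : Fin k → S}
    (hy : y ∈ vert fun i => (L i).map (g i)) : ∃ x ∈ vert L, y = fun i => g i (x i) := by
  have : ∀ i, ∃ a ∈ L i, g i a = y i := fun i => List.mem_map.1 (hy i)
  choose x hx hxy using this
  exact ⟨x, hx, funext fun i => (hxy i).symm⟩

theorem map_vert {g : Fin k → S → S} {L : Fin k → List S} {x : Fin k → S} (hx : x ∈ vert L) :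
    (fun i => g i (x i)) ∈ vert fun i => (L i).map (g i) :=
  fun i => List.mem_map_of_mem (hx i)

theorem Fine.map {g : Fin k → S → S} {a : A}
    (hg : ∀ x, lab (fun i => g i (x i)) = ((lab x).1, a + (lab x).2)) {L : Fin k → List S}
    (hL : Fine lab L) : Fine lab fun i => (L i).map (g i) := by
  refine ⟨fun j => by simpa using hL.1 j, fun x hx y hy h => ?_⟩
  obtain ⟨x, hx', rfl⟩ := vert_map hx
  obtain ⟨y, hy', rfl⟩ := vert_map hy
  simp only [hg] at h ⊢
  rw [hL.2 x hx' y hy' h]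

theorem IsMinLab.map {g : Fin k → S → S} {a : A}
    (hg : ∀ x, lab (fun i => g i (x i)) = ((lab x).1, a + (lab x).2)) {L : Fin k → List S}
    {m : C × A} (h : IsMinLab lab L m) :
    IsMinLab lab (fun i => (L i).map (g i)) (m.1, a + m.2) := by
  obtain ⟨⟨x, hx, rfl⟩, h2⟩ := h
  refine ⟨⟨_, map_vert hx, hg x⟩, ?_⟩
  rintro _ ⟨y, hy, rfl⟩
  obtain ⟨y, hy', rfl⟩ := vert_map hy
  rw [hg]
  exact h2 (lab y) ⟨y, hy', rfl⟩

/-- The chain map from the fine products of lists to coloured lists with increasing colours,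
obtained by acyclic models: it sends a product to lists with vertices among its labels, and it
vanishes on products having dimension at least the number of colours. -/
theorem exists_Lambda (h2 : IsUnit (2 : K)) (lab : (Fin k → S) → C × A) :
    ∃ Λ : ((Fin k → List S) →₀ K) →ₗ[K] (List (C × A) →₀ K),
      (∀ x, (∀ L, x L ≠ 0 → Fine lab L) →
        aug K (Λ x) = epsB K x ∧ ubd K (Λ x) = Λ (bdB K x)) ∧
      (∀ x N, (∀ L, x L ≠ 0 → Fine lab L ∧ ∑ i, (L i).length = N) → ∀ l, Λ x l ≠ 0 →
        (l.Pairwise fun x y => x.1 < y.1) ∧ l.length + k = N + 1) ∧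
      (∀ (g : Fin k → S → S) (a : A),
        (∀ x, lab (fun i => g i (x i)) = ((lab x).1, a + (lab x).2)) →
        ∀ x, (∀ L, x L ≠ 0 → Fine lab L) →
          Λ (mapT K (fun i => lmap K (g i)) x) = sh K a (Λ x)) := by
  classical
  -- the chain `Λ L` is the cone over `Λ (∂ L)` with apex the label of smallest colour
  obtain ⟨Λ, hΛ⟩ := exists_rec (K := K) (M := List (C × A) →₀ K)
    (fun L : Fin k → List S => ∑ i, (L i).length) (fun L => bdB K (Finsupp.single L 1))
    (fun L L' h => by
      have := (mem_support_bdB (Finsupp.mem_support_iff.1 h)).2.2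
      omega)
    (fun L y => if h : ∃ m, IsMinLab lab L m then
      hm K h.choose (y + Finsupp.single [] (epsB K (Finsupp.single L 1))) else 0)
  have hΛ' : ∀ L, Fine lab L → ∀ m, IsMinLab lab L m → Λ (Finsupp.single L 1) =
      hm K m (Λ (bdB K (Finsupp.single L 1)) +
        Finsupp.single [] (epsB K (Finsupp.single L 1))) := by
    intro L hL m hLm
    have h : ∃ m, IsMinLab lab L m := ⟨m, hLm⟩
    rw [hΛ, dif_pos h, hL.min_unique h.choose_spec hLm]
  clear hΛ
  have main : ∀ N L, Fine lab L → ∑ i, (L i).length = N →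
      (∀ l, Λ (Finsupp.single L 1) l ≠ 0 → (l.Pairwise fun x y => x.1 < y.1) ∧
        (∀ x ∈ l, x ∈ lab '' vert L) ∧ l.length + k = N + 1) ∧
      bd K (Λ (Finsupp.single L 1)) = Λ (bdB K (Finsupp.single L 1)) +
        Finsupp.single [] (epsB K (Finsupp.single L 1)) := by
    intro N
    induction N with
    | zero =>
      intro L hL hN
      have hk : k = 0 := by
        by_contra hk
        have := Finset.sum_eq_zero_iff.1 hN ⟨0, Nat.pos_of_ne_zero hk⟩ (Finset.mem_univ _)
        exact hL.1 _ (List.length_eq_zero_iff.1 this)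
      subst hk
      obtain ⟨m, hm1⟩ := hL.exists_min
      have e : Λ (Finsupp.single L 1) = Finsupp.single [m] 1 := by
        rw [hΛ' L hL m hm1, epsB_single]
        simp [bdB, hm_single]
      rw [e, epsB_single]
      refine ⟨fun l hl => ?_, by simp [bdB]⟩
      obtain rfl : l = [m] := by
        by_contra h
        simp [Finsupp.single_eq_of_ne h] at hl
      refine ⟨by simp, ?_, by simp⟩
      intro x hx
      rw [List.mem_singleton] at hx
      exact hx ▸ hm1.1
    | succ N ih =>
      intro L hL hN
      obtain ⟨m, hm1⟩ := hL.exists_min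
      set y := Λ (bdB K (Finsupp.single L 1)) +
        Finsupp.single [] (epsB K (Finsupp.single L 1)) with hy
      have hface : ∀ L', bdB K (Finsupp.single L 1) L' ≠ 0 →
          Fine lab L' ∧ ∑ i, (L' i).length = N := fun L' h => by
        have := (mem_support_bdB h).2.2
        exact ⟨hL.face h, by omega⟩
      have hys : ∀ l, y l ≠ 0 → (l.Pairwise fun x y => x.1 < y.1) ∧
          (∀ x ∈ l, x ∈ lab '' vert L) ∧ l.length + k = N + 1 := by
        intro l hl
        rw [hy, Finsupp.add_apply] at hl
        by_cases h1 : Λ (bdB K (Finsupp.single L 1)) l = 0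
        · rw [h1, zero_add] at hl
          obtain rfl : l = [] := by
            by_contra h
            simp [Finsupp.single_eq_of_ne h] at hl
          rw [Finsupp.single_eq_same, epsB_single] at hl
          have : ∀ i, (L i).length = 1 := fun i => by
            by_contra h
            exact hl (Finset.prod_eq_zero (Finset.mem_univ i) (if_neg h))
          simp only [this, Finset.sum_const, Finset.card_univ, Fintype.card_fin, smul_eq_mul,
            mul_one] at hN
          simp [hN]
        · obtain ⟨L', h3, h4⟩ := exists_supp h1
          obtain ⟨h5, h6, h7⟩ := (ih L' (hface L' h3).1 (hface L' h3).2).1 l h4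
          exact ⟨h5, fun x hx => Set.image_mono (vert_mono (mem_support_bdB h3).1) (h6 x hx), h7⟩
      have hbdy : bd K y = 0 := by
        have h1 : bd K (Λ (bdB K (Finsupp.single L 1))) =
            Λ (bdB K (bdB K (Finsupp.single L 1))) +
              Finsupp.single [] (epsB K (bdB K (Finsupp.single L 1))) :=
          eq_on_supp (f := bd K ∘ₗ Λ) (g := Λ ∘ₗ bdB K + Finsupp.lsingle [] ∘ₗ epsB K)
            fun L' h => (ih L' (hface L' h).1 (hface L' h).2).2
        rw [hy, map_add, h1, bdB_bdB h2, epsB_bdB]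
        simp
      rw [hΛ' L hL m hm1]
      constructor
      · intro l hl
        obtain ⟨t, ht, hl⟩ := exists_supp hl
        obtain ⟨h3, h4, h5⟩ := hys t ht
        rw [hm_single] at hl
        split_ifs at hl with h6
        · obtain rfl : l = m :: t := by
            by_contra h
            simp [Finsupp.single_eq_of_ne h] at hl
          refine ⟨?_, ?_, by simp; omega⟩
          · refine List.pairwise_cons.2 ⟨?_, h3⟩
            rcases t with _ | ⟨a, t⟩
            · simp
            · have h7 : m.1 < a.1 := h6 a (by simp)
              intro b hb
              rcases List.mem_cons.1 hb with rfl | hb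
              · exact h7
              · exact h7.trans ((List.pairwise_cons.1 h3).1 b hb)
          · intro x hx
            rcases List.mem_cons.1 hx with rfl | hx
            · exact hm1.1
            · exact h4 x hx
        · simp at hl
      · have : bd K (hm K m y) = y - hm K m (bd K y) :=
          eq_on_supp (f := bd K ∘ₗ hm K m) (g := LinearMap.id - hm K m ∘ₗ bd K) fun l hl =>
            bd_hm_single (hys l hl).1 fun x hx =>
              ⟨hm1.2 x ((hys l hl).2.1 x hx), hL.eq_of_fst ((hys l hl).2.1 x hx) hm1.1⟩
        rw [this, hbdy, map_zero, sub_zero]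
  have hlen : ∀ L, Fine lab L → k ≤ ∑ i, (L i).length := fun L hL => by
    have : ∑ i : Fin k, 1 ≤ ∑ i, (L i).length :=
      Finset.sum_le_sum fun i _ => List.length_pos_iff.2 (hL.1 i)
    simpa using this
  have hnil : ∀ x : (Fin k → List S) →₀ K, (∀ L, x L ≠ 0 → Fine lab L) → Λ x [] = 0 := by
    intro x hx
    by_contra h
    obtain ⟨L, h1, h2⟩ := exists_supp h
    have h3 := ((main _ L (hx L h1) rfl).1 [] h2).2.2
    have := hlen L (hx L h1)
    simp at h3
    omega
  refine ⟨Λ, ?_, ?_, ?_⟩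
  · intro x hx
    have h1 : bd K (Λ x) = Λ (bdB K x) + Finsupp.single [] (epsB K x) :=
      eq_on_supp (f := bd K ∘ₗ Λ) (g := Λ ∘ₗ bdB K + Finsupp.lsingle [] ∘ₗ epsB K)
        fun L h => (main _ L (hx L h) rfl).2
    have h3 : aug K (Λ x) = epsB K x := by
      rw [aug_apply, h1, Finsupp.add_apply, hnil _ (Fine.bdB hx)]
      simp
    refine ⟨h3, ?_⟩
    rw [bd_eq, h3] at h1
    exact add_right_cancel h1
  · intro x N hx l hl
    obtain ⟨L, h1, h2⟩ := exists_supp hl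
    obtain ⟨h3, -, h4⟩ := (main _ L (hx L h1).1 (hx L h1).2).1 l h2
    exact ⟨h3, h4⟩
  · intro g a hg x hx
    have key : ∀ N L, Fine lab L → ∑ i, (L i).length ≤ N →
        Λ (mapT K (fun i => lmap K (g i)) (Finsupp.single L 1)) =
          sh K a (Λ (Finsupp.single L 1)) := by
      intro N
      induction N using Nat.strong_induction_on with
      | _ N ih =>
        intro L hL hN
        obtain ⟨m, hm1⟩ := hL.exists_min
        have h1 : Λ (mapT K (fun i => lmap K (g i)) (bdB K (Finsupp.single L 1))) =
            sh K a (Λ (bdB K (Finsupp.single L 1))) :=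
          eq_on_supp (f := Λ ∘ₗ mapT K (fun i => lmap K (g i))) (g := sh K a ∘ₗ Λ) fun L' h => by
            have := (mem_support_bdB h).2.2
            exact ih _ (by omega) L' (hL.face h) le_rfl
        rw [mapT_single, hΛ' _ (hL.map hg) _ (hm1.map hg), ← mapT_single, bdB_lmap, h1,
          epsB_mapT, hΛ' L hL m hm1, ← hm_sh, (sh K a).map_add, sh_single]
        rfl
    exact eq_on_supp (f := Λ ∘ₗ mapT K (fun i => lmap K (g i))) (g := sh K a ∘ₗ Λ)
      fun L h => key _ L (hx L h) le_rfl

end Lambda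

/-! ### Products of towers and the algebraic obstruction -/

section Assembly
variable {p : ℕ} {S : Type*}

/-- The operator `T - 1` in odd degree, the norm in positive even degree, for a self-map `T` of the
set of vertices. -/
noncomputable def opW (p : ℕ) (T : S → S) (s : ℕ) :
    (List S →₀ ZMod p) →ₗ[ZMod p] (List S →₀ ZMod p) :=
  if s = 0 then 0 else if Odd s then lmap (ZMod p) T - LinearMap.id else
    ∑ g ∈ Finset.range p, lmap (ZMod p) (T^[g])

/-- A tower: the chains `w 0, …, w D` behave like the cells of the standard equivariant
decomposition of a sphere of dimension `D` with a free action of a cyclic group of order `p`. -/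
structure Tower (p D : ℕ) (T : S → S) (w : ℕ → (List S →₀ ZMod p)) : Prop where
  ubd_eq : ∀ e ≤ D, ubd (ZMod p) (w e) = opW p T e (w (e - 1))
  length : ∀ e ≤ D, ∀ l, w e l ≠ 0 → l.length = e + 1
  aug_eq : aug (ZMod p) (w 0) = 1

variable {k : ℕ} {r : ℕ} {A : Type*} [AddCommGroup A] {D : ℕ}
  {lab : (Fin k → S) → Fin r × A} {T : Fin k → S → S} {a : Fin k → A}
  {w : Fin k → ℕ → (List S →₀ ZMod p)}

theorem tens_support {c : Fin k → (List S →₀ ZMod p)} {L : Fin k → List S}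
    (h : tens (ZMod p) c L ≠ 0) (j : Fin k) : c j (L j) ≠ 0 := fun hj =>
  h (by rw [tens_apply]; exact Finset.prod_eq_zero (Finset.mem_univ j) hj)

theorem lab_iterate
    (hlab : ∀ x j, lab (Function.update x j (T j (x j))) = ((lab x).1, a j + (lab x).2))
    (j : Fin k) (g : ℕ) (x : Fin k → S) :
    lab (fun i => (if i = j then (T j)^[g] else id) (x i)) =
      ((lab x).1, g • a j + (lab x).2) := by
  have e : ∀ g, (fun i => (if i = j then (T j)^[g] else id) (x i)) =
      Function.update x j ((T j)^[g] (x j)) := by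
    intro g
    funext i
    by_cases h : i = j
    · subst h; simp
    · simp [h]
  rw [e]
  induction g with
  | zero => simp
  | succ g ih =>
    have := hlab (Function.update x j ((T j)^[g] (x j))) j
    rw [Function.update_idem, Function.update_self, ← e, e, ih] at this
    rw [Function.iterate_succ_apply', this, succ_nsmul']
    simp [add_assoc]

theorem mapT_tens_update (c : Fin k → (List S →₀ ZMod p)) (j : Fin k) (f : S → S)
    (y : List S →₀ ZMod p) :
    mapT (ZMod p) (fun i => lmap (ZMod p) (if i = j then f else id))
      (tens (ZMod p) (Function.update c j y)) =
    tens (ZMod p) (Function.update c j (lmap (ZMod p) f y)) := by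
  rw [mapT_tens]
  congr 1
  funext i
  by_cases h : i = j
  · subst h; simp
  · simp [h, lmap_id]

theorem tensLin_apply (c : Fin k → (List S →₀ ZMod p)) (j : Fin k) (y : List S →₀ ZMod p) :
    tensLin c j y = tens (ZMod p) (Function.update c j y) := rfl

theorem boundary_product [Fact p.Prime] (h2 : IsUnit (2 : ZMod p))
    (hw : ∀ j, Tower p D (T j) (w j))
    (hfine : ∀ L : Fin k → List S, (∀ j, ∃ e ≤ D, w j e (L j) ≠ 0) → Fine lab L)
    (hlab : ∀ x j, lab (Function.update x j (T j (x j))) = ((lab x).1, a j + (lab x).2)) :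
    ∃ b : (Fin k → ℕ) → (List (Fin r × A) →₀ ZMod p),
      (∀ E, (∀ j, E j ≤ D) → ubd (ZMod p) (b E) = ∑ j,
        (-1 : ZMod p) ^ (∑ i ∈ Finset.Iio j, E i) •
          opD p (a j) (E j) (b (Function.update E j (E j - 1)))) ∧
      aug (ZMod p) (b 0) = 1 ∧
      ∀ E, (∀ j, E j ≤ D) → r ≤ ∑ j, E j → b E = 0 := by
  obtain ⟨Λ, h1, hsupp, hequiv⟩ := exists_Lambda (K := ZMod p) h2 lab
  let z : (Fin k → ℕ) → ((Fin k → List S) →₀ ZMod p) := fun E =>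
    tens (ZMod p) fun j => w j (E j)
  have hz : ∀ E, (∀ j, E j ≤ D) → ∀ L, z E L ≠ 0 → Fine lab L := fun E hE L hL =>
    hfine L fun j => ⟨E j, hE j, tens_support hL j⟩
  refine ⟨fun E => Λ (z E), fun E hE => ?_, ?_, fun E hE hr => ?_⟩
  · rw [(h1 _ (hz E hE)).2, bdB_tens, map_sum]
    refine Finset.sum_congr rfl fun j _ => ?_
    have e1 : tens (ZMod p) (fun i => phi (ZMod p) j i (w i (E i))) =
        (-1 : ZMod p) ^ (∑ i ∈ Finset.Iio j, E i) •
          tens (ZMod p) (Function.update (fun i => w i (E i)) j (ubd (ZMod p) (w j (E j)))) := by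
      have : (fun i => phi (ZMod p) j i (w i (E i))) = fun i =>
          (if i < j then (-1 : ZMod p) ^ E i else 1) •
          (Function.update (fun i => w i (E i)) j (ubd (ZMod p) (w j (E j)))) i := by
        funext i
        rcases lt_trichotomy i j with h | h | h
        · simp [phi, h, h.ne, sg_eq ((hw i).length _ (hE i))]
        · subst h; simp [phi]
        · simp [phi, h.ne', h.not_gt]
      rw [this]
      rw [tens, MultilinearMap.map_smul_univ, map_smul, ← tens]
      congr 1
      rw [← Finset.prod_pow_eq_pow_sum, ← Finset.prod_filter]
      congr 1
      ext; simp
    rw [e1, map_smul]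
    congr 1
    set E' := Function.update E j (E j - 1) with hE'
    have hE'D : ∀ i, E' i ≤ D := by
      intro i
      by_cases h : i = j
      · subst h; rw [hE', Function.update_self]; exact (Nat.sub_le _ _).trans (hE i)
      · rw [hE', Function.update_of_ne h]; exact hE i
    have ez : z E' = tens (ZMod p) (Function.update (fun i => w i (E i)) j (w j (E j - 1))) := by
      simp only [z]
      congr 1
      funext i
      by_cases h : i = j
      · subst h; simp [hE']
      · simp [hE', h]
    have e2 : ∀ g : ℕ, Λ (tensLin (fun i => w i (E i)) j
        (lmap (ZMod p) ((T j)^[g]) (w j (E j - 1)))) = sh (ZMod p) (g • a j) (Λ (z E')) := by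
      intro g
      have := hequiv (fun i => if i = j then (T j)^[g] else id) (g • a j)
        (lab_iterate hlab j g) (z E') (hz E' hE'D)
      rw [← this, ez, mapT_tens_update, tensLin_apply]
    have e3 : Λ (tensLin (fun i => w i (E i)) j (w j (E j - 1))) = Λ (z E') := by
      rw [ez, tensLin_apply]
    rw [(hw j).ubd_eq _ (hE j), ← tensLin_apply]
    unfold opW opD
    split_ifs with h0 hodd
    · simp
    · have := e2 1
      rw [Function.iterate_one, one_smul] at this
      rw [LinearMap.sub_apply, map_sub, map_sub, this, LinearMap.sub_apply, LinearMap.id_apply,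
        LinearMap.id_apply, e3]
    · simp only [LinearMap.sum_apply, map_sum, e2]
  · rw [(h1 _ (hz 0 fun j => Nat.zero_le _)).1, epsB_tens]
    exact Finset.prod_eq_one fun j _ => (hw j).aug_eq
  · ext l
    rw [Finsupp.zero_apply]
    by_contra hl
    obtain ⟨h3, h4⟩ := hsupp (z E) (∑ j, (E j + 1)) (fun L hL => ⟨hz E hE L hL,
      Finset.sum_congr rfl fun j _ => (hw j).length _ (hE j) _ (tens_support hL j)⟩) l hl
    rw [Finset.sum_add_distrib] at h4
    simp only [Finset.sum_const, Finset.card_univ, Fintype.card_fin, smul_eq_mul, mul_one] at h4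
    have h5 : (l.map Prod.fst).Nodup := by
      rw [List.nodup_iff_pairwise_ne, List.pairwise_map]
      exact h3.imp fun h => h.ne
    have := h5.length_le_card
    simp at this
    omega

/-- The obstruction: there is no colouring with few colours, compatible with towers, whose labels
transform under the group as the positions of the coordinates relative to the coordinate `0`. -/
theorem no_colouring [Fact p.Prime] {m n r : ℕ} (hp : 3 ≤ p) (hc : ¬ p ∣ (2 * n).choose n)
    (hr : r < (m + 2) * (2 * n + 1))
    {lab : (Fin (m + 2) → S) → Fin r × (Fin (m + 2) → ZMod p)} {T : Fin (m + 2) → S → S}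
    {w : Fin (m + 2) → ℕ → (List S →₀ ZMod p)}
    (hw : ∀ j, Tower p (2 * n + 1) (T j) (w j))
    (hfine : ∀ L : Fin (m + 2) → List S, (∀ j, ∃ e ≤ 2 * n + 1, w j e (L j) ≠ 0) → Fine lab L)
    (hlab : ∀ x j, lab (Function.update x j (T j (x j))) =
      ((lab x).1, gen p m j + (lab x).2)) : False := by
  have h2 : IsUnit (2 : ZMod p) := by
    rw [isUnit_iff_ne_zero]
    intro h
    have : ((2 : ℕ) : ZMod p) = 0 := by exact_mod_cast h
    rw [ZMod.natCast_eq_zero_iff] at this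
    have := Nat.le_of_dvd (by norm_num) this
    omega
  obtain ⟨b, hb, h0, htop⟩ := boundary_product h2 hw hfine hlab
  refine lower_algebra b hp hc hb h0 (htop _ (fun j => ?_) ?_)
  · by_cases h : j = 1
    · subst h; simp
    · simp [h]
  · rw [Finset.sum_update_of_mem (Finset.mem_univ _)]
    have : (Finset.univ \ {(1 : Fin (m + 2))}).card = m + 1 := by
      rw [Finset.card_sdiff]; simp
    rw [Finset.sum_const, this, smul_eq_mul]
    have : (m + 2) * (2 * n + 1) = (m + 1) * (2 * n + 1) + (2 * n + 1) := by ring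
    omega

end Assembly

/-! ### The standard tower of a free cyclic action -/

section Coarse
variable {p : ℕ} {V W : Type*}

theorem lmap_opW {T : V → V} {T' : W → W} {f : V → W} (e : ℕ) (z : List V →₀ ZMod p)
    (hf : ∀ l, z l ≠ 0 → ∀ x ∈ l, ∀ g : ℕ, f (T^[g] x) = T'^[g] (f x)) :
    lmap (ZMod p) f (opW p T e z) = opW p T' e (lmap (ZMod p) f z) := by
  have hg : ∀ g : ℕ, lmap (ZMod p) f (lmap (ZMod p) (T^[g]) z) =
      lmap (ZMod p) (T'^[g]) (lmap (ZMod p) f z) := fun g =>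
    eq_on_supp (f := lmap (ZMod p) f ∘ₗ lmap (ZMod p) (T^[g]))
      (g := lmap (ZMod p) (T'^[g]) ∘ₗ lmap (ZMod p) f) fun l hl => by
      simp only [LinearMap.comp_apply, lmap_single, List.map_map]
      congr 1
      exact List.map_congr_left fun x hx => hf l hl x hx g
  unfold opW
  split_ifs
  · simp
  · have := hg 1
    rw [Function.iterate_one, Function.iterate_one] at this
    rw [LinearMap.sub_apply, map_sub, this]
    rfl
  · simp only [LinearMap.sum_apply, map_sum, hg]

/-- Chain maps preserving the augmentation, the degree and the symmetry preserve towers. -/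
theorem Tower.image {D : ℕ} {T : V → V} {T' : W → W} {w : ℕ → (List V →₀ ZMod p)}
    (hw : Tower p D T w) (Φ : (List V →₀ ZMod p) →ₗ[ZMod p] (List W →₀ ZMod p))
    (hbd : ∀ z, ubd (ZMod p) (Φ z) = Φ (ubd (ZMod p) z))
    (haug : ∀ z, aug (ZMod p) (Φ z) = aug (ZMod p) z)
    (hlen : ∀ l l', Φ (Finsupp.single l 1) l' ≠ 0 → l'.length = l.length)
    (hT : ∀ e ≤ D, Φ (opW p T e (w (e - 1))) = opW p T' e (Φ (w (e - 1)))) : Tower p D T' fun e => Φ (w e) where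
  ubd_eq e he := by rw [hbd, hw.ubd_eq e he, hT e he]
  length e he l hl := by
    obtain ⟨t, h1, h2⟩ := exists_supp hl
    rw [hlen t l h2, hw.length e he t h1]
  aug_eq := by rw [haug, hw.aug_eq]

theorem Tower.map_vertices {D : ℕ} {T : V → V} {T' : W → W} {w : ℕ → (List V →₀ ZMod p)}
    (hw : Tower p D T w) {f : V → W}
    (hf : ∀ e ≤ D, ∀ l, w e l ≠ 0 → ∀ x ∈ l, ∀ g : ℕ, f (T^[g] x) = T'^[g] (f x)) :
    Tower p D T' fun e => lmap (ZMod p) f (w e) :=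
  hw.image _ (ubd_lmap f) (aug_lmap f) (fun l l' h => by
    obtain ⟨t, h1, rfl⟩ := lmap_support h
    rw [List.length_map]
    by_contra hc
    exact h1 (Finsupp.single_eq_of_ne (by rintro rfl; exact hc rfl)))
    fun e he => lmap_opW e _ (hf (e - 1) ((Nat.sub_le _ _).trans he))

/-- The join with the circle through the orbit of `a`. -/
noncomputable def joinC (p : ℕ) (T : V → V) (a : V) :
    (List V →₀ ZMod p) →ₗ[ZMod p] (List V →₀ ZMod p) :=
  ∑ g ∈ Finset.range p, cone (ZMod p) (T^[g] a) ∘ₗ cone (ZMod p) (T^[g + 1] a)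

/-- The iterated joins with the circles through the first points of a sequence. -/
noncomputable def joins (p : ℕ) (T : V → V) (a : ℕ → V) :
    ℕ → ((List V →₀ ZMod p) →ₗ[ZMod p] (List V →₀ ZMod p))
  | 0 => LinearMap.id
  | i + 1 => joins p T a i ∘ₗ joinC p T (a i)

/-- The iterated joins of circles, cut into cells permuted by the cyclic group. -/
noncomputable def cells (p : ℕ) (T : V → V) (a : ℕ → V) (j : ℕ) : List V →₀ ZMod p :=
  joins p T a (j / 2) (Finsupp.single (if Even j then [a (j / 2)] else
    [a (j / 2), T (a (j / 2))]) 1)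

variable {T : V → V}

theorem bd_joinC (hT : T^[p] = id) (a : V) (z : List V →₀ ZMod p) :
    bd (ZMod p) (joinC p T a z) = joinC p T a (bd (ZMod p) z) := by
  simp only [joinC, LinearMap.sum_apply, map_sum, LinearMap.comp_apply, bd_cone, map_sub]
  have : ∑ g ∈ Finset.range p,
      (cone (ZMod p) (T^[g + 1] a) z - cone (ZMod p) (T^[g] a) z) = 0 := by
    rw [Finset.sum_range_sub fun g => cone (ZMod p) (T^[g] a) z, hT]
    simp
  rw [← sub_eq_zero, ← Finset.sum_sub_distrib, ← this]
  exact Finset.sum_congr rfl fun g _ => by abel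

theorem lmap_joinC (hT : T^[p] = id) (a : V) (z : List V →₀ ZMod p) :
    lmap (ZMod p) T (joinC p T a z) = joinC p T a (lmap (ZMod p) T z) := by
  simp only [joinC, LinearMap.sum_apply, map_sum, LinearMap.comp_apply, lmap_cone]
  simp only [← Function.iterate_succ_apply' T]
  let F : ℕ → (List V →₀ ZMod p) := fun g => cone (ZMod p) (T^[g] a)
    (cone (ZMod p) (T^[g + 1] a) (lmap (ZMod p) T z))
  have h := (Finset.sum_range_succ' F p).symm.trans (Finset.sum_range_succ F p)
  have e : F p = F 0 := by simp [F, Function.iterate_succ_apply', hT]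
  rw [e] at h
  exact add_right_cancel h

theorem bd_joins (hT : T^[p] = id) (a : ℕ → V) (i : ℕ) (z : List V →₀ ZMod p) :
    bd (ZMod p) (joins p T a i z) = joins p T a i (bd (ZMod p) z) := by
  induction i generalizing z with
  | zero => rfl
  | succ i ih => rw [joins, LinearMap.comp_apply, ih, bd_joinC hT]; rfl

theorem lmap_joins (hT : T^[p] = id) (a : ℕ → V) (i : ℕ) (z : List V →₀ ZMod p) :
    lmap (ZMod p) T (joins p T a i z) = joins p T a i (lmap (ZMod p) T z) := by
  induction i generalizing z with
  | zero => rfl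
  | succ i ih => rw [joins, LinearMap.comp_apply, ih, lmap_joinC hT]; rfl

theorem lmap_iterate_joins (hT : T^[p] = id) (a : ℕ → V) (i g : ℕ) (z : List V →₀ ZMod p) :
    lmap (ZMod p) (T^[g]) (joins p T a i z) = joins p T a i (lmap (ZMod p) (T^[g]) z) := by
  induction g with
  | zero => rw [Function.iterate_zero, lmap_id, lmap_id]
  | succ g ih =>
    rw [Function.iterate_succ', ← lmap_lmap, ih, lmap_joins hT, lmap_lmap]

theorem joins_length (a : ℕ → V) (i : ℕ) {l l' : List V}
    (h : joins p T a i (Finsupp.single l 1) l' ≠ 0) : l'.length = l.length + 2 * i := by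
  induction i generalizing l with
  | zero =>
    rw [joins, LinearMap.id_apply] at h
    obtain rfl : l' = l := by
      by_contra hc
      exact h (Finsupp.single_eq_of_ne hc)
    simp
  | succ i ih =>
    obtain ⟨t, h1, h2⟩ := exists_supp (f := joins p T a i) h
    rw [ih h2]
    simp only [joinC, LinearMap.sum_apply, LinearMap.comp_apply, cone_single,
      Finsupp.finsetSum_apply] at h1
    obtain ⟨g, -, hg⟩ := Finset.exists_ne_zero_of_sum_ne_zero h1
    obtain rfl : t = _ := by
      by_contra hc
      exact hg (Finsupp.single_eq_of_ne hc)
    simp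
    ring

theorem tower_cells (hT : T^[p] = id) (a : ℕ → V) (D : ℕ) : Tower p D T (cells p T a) where
  ubd_eq e _ := by
    have hlen : ∀ l, cells p T a e l ≠ 0 → l.length = e + 1 := by
      intro l hl
      rw [joins_length _ _ hl]
      split_ifs with h
      · have := Nat.even_iff.1 h; simp; omega
      · have := Nat.not_even_iff.1 h; simp; omega
    rcases Nat.eq_zero_or_pos e with rfl | he
    · simp [cells, opW, joins]
    have h1 : ubd (ZMod p) (cells p T a e) = bd (ZMod p) (cells p T a e) :=
      eq_on_supp fun l hl => ubd_of_length (by rw [hlen l hl]; omega)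
    rw [h1, cells, bd_joins hT]
    obtain ⟨i, rfl | rfl⟩ := e.even_or_odd'
    · obtain ⟨i, rfl⟩ := Nat.exists_eq_add_of_le' (show 1 ≤ i by omega)
      have e1 : 2 * (i + 1) / 2 = i + 1 := by omega
      have e2 : (2 * (i + 1) - 1) / 2 = i := by omega
      have e3 : ¬ Even (2 * (i + 1) - 1) := by
        rw [Nat.not_even_iff]; omega
      have e4 : ¬ Odd (2 * (i + 1)) := by simp
      rw [opW, if_neg he.ne', if_neg e4, cells, e1, e2, if_pos (by simp), if_neg e3, joins]
      simp only [LinearMap.sum_apply, lmap_iterate_joins hT]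
      rw [← map_sum, LinearMap.comp_apply]
      congr 1
      simp only [joinC, bd_cons, bd_nil, map_zero, sub_zero, LinearMap.sum_apply,
        LinearMap.comp_apply, cone_single, lmap_single, List.map_cons, List.map_nil,
        Function.iterate_succ_apply]
    · have e1 : (2 * i + 1) / 2 = i := by omega
      have e2 : (2 * i + 1 - 1) / 2 = i := by omega
      have e3 : ¬ Even (2 * i + 1) := by simp
      have e4 : Odd (2 * i + 1) := by simp
      rw [opW, if_neg he.ne', if_pos e4, cells, e1, e2, if_neg e3, if_pos (by simp)]
      rw [LinearMap.sub_apply, lmap_joins hT, LinearMap.id_apply, ← map_sub]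
      congr 1
      simp
  length e _ l hl := by
    rw [joins_length _ _ hl]
    split_ifs with h
    · have := Nat.even_iff.1 h; simp; omega
    · have := Nat.not_even_iff.1 h; simp; omega
  aug_eq := by simp [cells, joins, aug_single]

end Coarse

/-! ### Barycentric subdivision -/

section Subdivision
variable {V : Type*} [NormedAddCommGroup V] [NormedSpace ℝ V]

/-- The barycentre of a list of points. -/
noncomputable def bary (l : List V) : V := (l.length : ℝ)⁻¹ • l.sum

/-- The convex hull of a list of points. -/
abbrev hullL (l : List V) : Set V := convexHull ℝ {x | x ∈ l}

theorem hullL_mono {l t : List V} (h : t.Sublist l) : hullL t ⊆ hullL l :=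
  convexHull_mono fun _ hx => h.subset hx

theorem bary_map (T : V →ₗ[ℝ] V) (l : List V) : bary (l.map T) = T (bary l) := by
  simp [bary, map_list_sum]

theorem list_sum_sub (l : List V) (v : V) :
    (l.map fun x => x - v).sum = l.sum - (l.length : ℝ) • v := by
  induction l with
  | nil => simp
  | cons a l ih => 
    simp only [List.map_cons, List.sum_cons, ih, List.length_cons, Nat.cast_add, Nat.cast_one,
      add_smul, one_smul]
    abel

theorem list_norm_sum_le {l : List V} {v : V} {d : ℝ} (h : ∀ x ∈ l, dist x v ≤ d) :
    ‖(l.map fun x => x - v).sum‖ ≤ l.length * d := by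
  induction l with
  | nil => simp
  | cons a l ih =>
    simp only [List.map_cons, List.sum_cons, List.length_cons, Nat.cast_add, Nat.cast_one]
    have h1 := h a (by simp)
    rw [dist_eq_norm] at h1
    have h2 := ih fun x hx => h x (by simp [hx])
    linarith [norm_add_le (a - v) (l.map fun x => x - v).sum]

theorem bary_mem_hull {l : List V} (hl : l ≠ []) : bary l ∈ hullL l := by
  have hpos : (0 : ℝ) < l.length := by exact_mod_cast List.length_pos_iff.2 hl
  have e : bary l = ∑ i : Fin l.length, (l.length : ℝ)⁻¹ • l.get i := by
    rw [bary, ← Finset.smul_sum]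
    congr 1
    conv_lhs => rw [← List.ofFn_get l]
    rw [List.sum_ofFn]
  rw [e]
  refine (convex_convexHull ℝ _).sum_mem (fun i _ => by positivity) ?_ fun i _ =>
    subset_convexHull ℝ _ (List.get_mem l i)
  simp [hpos.ne']

theorem dist_bary {l : List V} {d : ℝ} (h : ∀ x ∈ l, ∀ y ∈ l, dist x y ≤ d) {v : V}
    (hv : v ∈ hullL l) : dist v (bary l) ≤ (1 - (l.length : ℝ)⁻¹) * d := by
  have hsub : hullL l ⊆ Metric.closedBall (bary l) ((1 - (l.length : ℝ)⁻¹) * d) := by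
    refine convexHull_min (fun x hx => ?_) (convex_closedBall _ _)
    have hx : x ∈ l := hx
    have hpos : (0 : ℝ) < l.length := by exact_mod_cast List.length_pos_of_mem hx
    rw [Metric.mem_closedBall, dist_comm, dist_eq_norm]
    have e : bary l - x = (l.length : ℝ)⁻¹ • (l.map fun y => y - x).sum := by
      rw [list_sum_sub, smul_sub, smul_smul, inv_mul_cancel₀ hpos.ne', one_smul, bary]
    have hle : ‖(l.map fun y => y - x).sum‖ ≤ (l.length - 1 : ℝ) * d := by
      obtain ⟨s, t, rfl⟩ := List.append_of_mem hx
      have h1 := list_norm_sum_le (l := s) (v := x) (d := d) fun y hy => h y (by simp [hy]) x hx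
      have h2 := list_norm_sum_le (l := t) (v := x) (d := d) fun y hy => h y (by simp [hy]) x hx
      rw [List.map_append, List.sum_append, List.map_cons, List.sum_cons, sub_self, zero_add]
      refine (norm_add_le _ _).trans ?_
      simp only [List.length_append, List.length_cons]
      push_cast
      linarith
    rw [e, norm_smul, norm_inv, Real.norm_natCast]
    calc (l.length : ℝ)⁻¹ * ‖(l.map fun y => y - x).sum‖
        ≤ (l.length : ℝ)⁻¹ * ((l.length - 1 : ℝ) * d) := by gcongr
      _ = (1 - (l.length : ℝ)⁻¹) * d := by field_simp
  exact hsub hv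

variable (K : Type*) [CommRing K]

theorem exists_subdivision : ∃ Sd : (List V →₀ K) →ₗ[K] (List V →₀ K),
    Sd (Finsupp.single [] 1) = Finsupp.single [] 1 ∧
    (∀ z, bd K (Sd z) = Sd (bd K z)) ∧
    (∀ l l', Sd (Finsupp.single l 1) l' ≠ 0 → l'.length = l.length ∧
      (∀ v ∈ l', v ∈ hullL l) ∧
      ∀ d, (∀ x ∈ l, ∀ y ∈ l, dist x y ≤ d) →
        ∀ x ∈ l', ∀ y ∈ l', dist x y ≤ (1 - (l.length : ℝ)⁻¹) * d) ∧
    ∀ (T : V →ₗ[ℝ] V) z, Sd (lmap K T z) = lmap K T (Sd z) := by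
  classical
  obtain ⟨Sd, hSd⟩ := exists_rec (K := K) (M := List V →₀ K) List.length
    (fun l : List V => bd K (Finsupp.single l 1))
    (fun l l' h => by
      have := (mem_support_bd (Finsupp.mem_support_iff.1 h)).2
      omega)
    (fun l y => if l = [] then Finsupp.single [] 1 else cone K (bary l) y)
  have h0 : Sd (Finsupp.single [] 1) = Finsupp.single [] 1 := by rw [hSd, if_pos rfl]
  have h1 : ∀ l ≠ [], Sd (Finsupp.single l 1) =
      cone K (bary l) (Sd (bd K (Finsupp.single l 1))) := fun l hl => by rw [hSd, if_neg hl]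
  clear hSd
  refine ⟨Sd, h0, fun z => ?_, ?_, fun T z => ?_⟩
  · have key : ∀ N, ∀ l : List V, l.length ≤ N →
        bd K (Sd (Finsupp.single l 1)) = Sd (bd K (Finsupp.single l 1)) := by
      intro N
      induction N with
      | zero =>
        intro l hl
        obtain rfl : l = [] := List.length_eq_zero_iff.1 (by omega)
        simp [h0]
      | succ N ih =>
        intro l hl
        by_cases hn : l = []
        · subst hn; simp [h0]
        have : bd K (Sd (bd K (Finsupp.single l 1))) = Sd (bd K (bd K (Finsupp.single l 1))) :=
          eq_on_supp (f := bd K ∘ₗ Sd) (g := Sd ∘ₗ bd K) fun l' h => by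
            have := (mem_support_bd h).2
            exact ih l' (by omega)
        rw [h1 l hn, bd_cone, this, bd_bd]
        simp
    exact eq_on_supp (f := bd K ∘ₗ Sd) (g := Sd ∘ₗ bd K) fun l _ => key _ l le_rfl
  · intro l
    induction hN : l.length generalizing l with
    | zero =>
      intro l' hl'
      obtain rfl : l = [] := List.length_eq_zero_iff.1 hN
      rw [h0] at hl'
      obtain rfl : l' = [] := by
        by_contra hc
        exact hl' (Finsupp.single_eq_of_ne hc)
      simp
    | succ N ih =>
      intro l' hl'
      have hn : l ≠ [] := by rintro rfl; simp at hN
      rw [h1 l hn] at hl'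
      obtain ⟨t, ht, h2⟩ := exists_supp hl'
      rw [cone_single] at h2
      obtain rfl : l' = bary l :: t := by
        by_contra hc
        exact h2 (Finsupp.single_eq_of_ne hc)
      obtain ⟨s, hs, h3⟩ := exists_supp ht
      obtain ⟨h4, h5⟩ := mem_support_bd hs
      obtain ⟨h6, h7, h8⟩ := ih s (by omega) t h3
      have h9 : ∀ v ∈ t, v ∈ hullL l := fun v hv => hullL_mono h4 (h7 v hv)
      refine ⟨by simp [h6], ?_, ?_⟩
      · intro v hv
        rcases List.mem_cons.1 hv with rfl | hv
        · exact bary_mem_hull hn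
        · exact h9 v hv
      · intro d hd
        have hd0 : 0 ≤ d := by
          obtain ⟨x, hx⟩ := List.exists_mem_of_ne_nil _ hn
          simpa using hd x hx x hx
        have hb : ∀ v ∈ t, dist v (bary l) ≤ (1 - ((N + 1 : ℕ) : ℝ)⁻¹) * d := fun v hv => by
          rw [← hN]; exact dist_bary hd (h9 v hv)
        have hself : 0 ≤ (1 - ((N + 1 : ℕ) : ℝ)⁻¹) * d := by
          refine mul_nonneg (sub_nonneg.2 (inv_le_one_of_one_le₀ ?_)) hd0
          push_cast; linarith [N.cast_nonneg (α := ℝ)]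
        intro x hx y hy
        rcases List.mem_cons.1 hx with rfl | hx <;> rcases List.mem_cons.1 hy with rfl | hy
        · rwa [dist_self]
        · rw [dist_comm]; exact hb y hy
        · exact hb x hx
        · refine (h8 d (fun x hx y hy => hd x (h4.subset hx) y (h4.subset hy)) x hx y hy).trans ?_
          have hNpos : 0 < N := h6 ▸ List.length_pos_of_mem hx
          gcongr
          exact Nat.le_succ N
  · have key : ∀ N, ∀ l : List V, l.length ≤ N →
        Sd (lmap K T (Finsupp.single l 1)) = lmap K T (Sd (Finsupp.single l 1)) := by
      intro N
      induction N with
      | zero =>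
        intro l hl
        obtain rfl : l = [] := List.length_eq_zero_iff.1 (by omega)
        simp [h0]
      | succ N ih =>
        intro l hl
        by_cases hn : l = []
        · subst hn; simp [h0]
        have : Sd (lmap K T (bd K (Finsupp.single l 1))) =
            lmap K T (Sd (bd K (Finsupp.single l 1))) :=
          eq_on_supp (f := Sd ∘ₗ lmap K T) (g := lmap K T ∘ₗ Sd) fun l' h => by
            have := (mem_support_bd h).2
            exact ih l' (by omega)
        rw [lmap_single, h1 _ (by simpa using hn), ← lmap_single, bd_lmap, this, bary_map,
          ← lmap_cone, ← h1 l hn]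
    exact eq_on_supp (f := Sd ∘ₗ lmap K T) (g := lmap K T ∘ₗ Sd) fun l _ => key _ l le_rfl

variable {K} {p : ℕ}

/-- Towers may be subdivided, keeping the convex hulls of their cells. -/
theorem Tower.subdivide {D : ℕ} {T : V →ₗ[ℝ] V} {w : ℕ → (List V →₀ ZMod p)}
    (hw : Tower p D T w) : ∃ w' : ℕ → ℕ → (List V →₀ ZMod p),
      (∀ N, Tower p D T (w' N)) ∧
      ∀ N, ∀ e ≤ D, ∀ l', w' N e l' ≠ 0 → ∃ l, w e l ≠ 0 ∧ (∀ v ∈ l', v ∈ hullL l) ∧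
        ∀ d, (∀ x ∈ l, ∀ y ∈ l, dist x y ≤ d) → ∀ x ∈ l', ∀ y ∈ l',
          dist x y ≤ (1 - ((e + 1 : ℕ) : ℝ)⁻¹) ^ N * d := by
  obtain ⟨Sd, h0, hbd, hsupp, hT⟩ := exists_subdivision (V := V) (ZMod p)
  have hnil : ∀ z, Sd z [] = z [] := by
    intro z
    refine eq_on_supp (f := Finsupp.lapply [] ∘ₗ Sd) (g := Finsupp.lapply []) fun l _ => ?_
    rcases eq_or_ne l [] with rfl | hl
    · simp [h0]
    · have : Sd (Finsupp.single l 1) [] = 0 := by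
        by_contra h
        exact hl (List.length_eq_zero_iff.1 (hsupp l [] h).1.symm)
      simp [this, Finsupp.single_eq_of_ne hl.symm]
  have haug : ∀ z, aug (ZMod p) (Sd z) = aug (ZMod p) z := fun z => by
    rw [aug_apply, hbd, hnil, aug_apply]
  have hubd : ∀ z, ubd (ZMod p) (Sd z) = Sd (ubd (ZMod p) z) := fun z => by
    have h := hbd z
    rw [bd_eq, bd_eq, map_add, haug, ← mul_one (aug (ZMod p) z), ← smul_eq_mul,
      ← Finsupp.smul_single, map_smul, h0] at h
    exact add_right_cancel h
  have hop : ∀ e z, Sd (opW p T e z) = opW p T e (Sd z) := by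
    intro e z
    have hg : ∀ g : ℕ, T^[g] = ⇑(T ^ g) := fun g => (Module.End.coe_pow T g).symm
    unfold opW
    split_ifs
    · simp
    · rw [LinearMap.sub_apply, map_sub, LinearMap.sub_apply, hT]; rfl
    · simp only [LinearMap.sum_apply, map_sum, hg, hT]
  have hTow : ∀ N, Tower p D T fun e => Sd^[N] (w e) := by
    intro N
    induction N with
    | zero => exact hw
    | succ N ih =>
      simp only [Function.iterate_succ_apply']
      exact ih.image Sd hubd haug (fun l l' h => (hsupp l l' h).1) fun e _ => hop e _
  refine ⟨fun N e => Sd^[N] (w e), hTow, fun N => ?_⟩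
  induction N with
  | zero =>
    intro e _ l' hl'
    exact ⟨l', hl', fun v hv => subset_convexHull ℝ _ hv, by simp⟩
  | succ N ih =>
    intro e he l' hl'
    simp only [Function.iterate_succ_apply'] at hl'
    obtain ⟨t, h1, h2⟩ := exists_supp hl'
    obtain ⟨l, h3, h4, h5⟩ := ih e he t h1
    obtain ⟨h6, h7, h8⟩ := hsupp t l' h2
    refine ⟨l, h3, fun v hv => convexHull_min h4 (convex_convexHull ℝ _) (h7 v hv), ?_⟩
    intro d hd x hx y hy
    have := h8 _ (h5 d hd) x hx y hy
    rwa [(hTow N).length e he t h1, ← mul_assoc, ← pow_succ'] at this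

end Subdivision

/-! ### Fine towers on spheres -/

section Sphere
variable {n : ℕ}

/-- The ambient complex vector space. -/
abbrev Amb (n : ℕ) := EuclideanSpace ℂ (Fin (n + 1))

/-- The unit sphere of dimension `2n + 1`. -/
abbrev Sph (n : ℕ) := Metric.sphere (0 : Amb n) 1

/-- The rotation of the sphere by a complex number of modulus one. -/
noncomputable def rot (z : Circle) (x : Sph n) : Sph n :=
  ⟨(z : ℂ) • (x : Amb n), by simp [norm_smul, Circle.norm_coe z]⟩

@[simp] theorem rot_coe (z : Circle) (x : Sph n) : (rot z x : Amb n) = (z : ℂ) • (x : Amb n) := rfl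

theorem rot_one (x : Sph n) : rot 1 x = x := Subtype.ext (by simp)

theorem rot_mul (z w : Circle) (x : Sph n) : rot (z * w) x = rot z (rot w x) :=
  Subtype.ext (by simp [mul_smul])

theorem rot_iterate (z : Circle) (g : ℕ) (x : Sph n) : (rot z)^[g] x = rot (z ^ g) x := by
  induction g with
  | zero => simp [rot_one]
  | succ g ih => rw [Function.iterate_succ_apply', ih, ← rot_mul, pow_succ']

/-- Multiplication by a complex number as a real linear map. -/
noncomputable def mulT (n : ℕ) (z : ℂ) : Amb n →ₗ[ℝ] Amb n :=
  (LinearMap.lsmul ℂ (Amb n) z).restrictScalars ℝ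

@[simp] theorem mulT_apply (z : ℂ) (v : Amb n) : mulT n z v = z • v := rfl

theorem mulT_iterate (z : ℂ) (g : ℕ) (v : Amb n) : (mulT n z)^[g] v = z ^ g • v := by
  induction g with
  | zero => simp
  | succ g ih => rw [Function.iterate_succ_apply', ih, mulT_apply, smul_smul, pow_succ']

/-- The standard basis, extended by zero. -/
noncomputable def stdE (n i : ℕ) : Amb n :=
  if h : i < n + 1 then EuclideanSpace.single ⟨i, h⟩ 1 else 0

/-- The real part of the product of a coordinate with the conjugate of `c`. -/
noncomputable def reC (i : Fin (n + 1)) (c : ℂ) : Amb n →L[ℝ] ℝ :=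
  Complex.reCLM ∘L ((starRingEnd ℂ c) •
    (EuclideanSpace.proj i : Amb n →L[ℂ] ℂ)).restrictScalars ℝ

theorem reC_apply (i : Fin (n + 1)) (c : ℂ) (v : Amb n) :
    reC i c v = ((starRingEnd ℂ c) * v i).re := rfl

theorem stdE_apply {i : ℕ} (h : i < n + 1) (j : Fin (n + 1)) :
    stdE n i j = if j = ⟨i, h⟩ then 1 else 0 := by
  simp [stdE, h]

/-- Two consecutive points of the orbit are on the same side of the bisecting hyperplane. -/
theorem reC_pair {ζ : ℂ} (h1 : ‖ζ‖ = 1) (h2 : ζ ≠ -1) {i : ℕ} (h : i < n + 1) (g : ℕ) :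
    0 < reC ⟨i, h⟩ (ζ ^ g * (1 + ζ)) (ζ ^ g • stdE n i) ∧
    0 < reC ⟨i, h⟩ (ζ ^ g * (1 + ζ)) (ζ ^ (g + 1) • stdE n i) := by
  have hre : 0 < 1 + ζ.re := by
    have h3 : ζ.re * ζ.re + ζ.im * ζ.im = 1 := by
      rw [← Complex.normSq_apply, Complex.normSq_eq_norm_sq, h1]; norm_num
    by_contra hc
    have h4 : ζ.re = -1 := by nlinarith [mul_self_nonneg ζ.im]
    have h5 : ζ.im = 0 := by
      rw [h4] at h3; nlinarith
    exact h2 (Complex.ext (by simp [h4]) (by simp [h5]))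
  have hn : ∀ z : ℂ, ‖z‖ = 1 → starRingEnd ℂ z * z = 1 := fun z hz => by
    rw [mul_comm, Complex.mul_conj, Complex.normSq_eq_norm_sq, hz]; norm_num
  have hg : starRingEnd ℂ (ζ ^ g) * ζ ^ g = 1 := hn _ (by simp [h1])
  have hz := hn ζ h1
  have e1 : starRingEnd ℂ (ζ ^ g * (1 + ζ)) * (ζ ^ g) = 1 + starRingEnd ℂ ζ := by
    rw [map_mul, map_add, map_one, mul_right_comm, hg, one_mul]
  have e2 : starRingEnd ℂ (ζ ^ g * (1 + ζ)) * (ζ ^ (g + 1)) = ζ + 1 := by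
    rw [pow_succ, ← mul_assoc, e1, add_mul, hz, one_mul]
  constructor
  · rw [reC_apply]
    simp only [PiLp.smul_apply, stdE_apply h, if_pos, smul_eq_mul, mul_one]
    rw [e1]; simpa using hre
  · rw [reC_apply]
    simp only [PiLp.smul_apply, stdE_apply h, if_pos, smul_eq_mul, mul_one]
    rw [e2]; simp; linarith

theorem joins_pos {p : ℕ} {ζ : ℂ} (h1 : ‖ζ‖ = 1) (h2 : ζ ≠ -1) {i : ℕ} (hi : i ≤ n + 1)
    {l l' : List (Amb n)} (hl : ∃ φ : Amb n →L[ℝ] ℝ, ∀ v ∈ l, 0 < φ v)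
    (hl0 : ∀ v ∈ l, ∀ j : Fin (n + 1), (j : ℕ) < i → v j = 0)
    (h : joins p (mulT n ζ) (stdE n) i (Finsupp.single l 1) l' ≠ 0) :
    ∃ φ : Amb n →L[ℝ] ℝ, ∀ v ∈ l', 0 < φ v := by
  induction i generalizing l with
  | zero =>
    rw [joins, LinearMap.id_apply] at h
    obtain rfl : l' = l := by
      by_contra hc
      exact h (Finsupp.single_eq_of_ne hc)
    exact hl
  | succ i ih =>
    obtain ⟨t, h3, h4⟩ := exists_supp (f := joins p (mulT n ζ) (stdE n) i) h
    simp only [joinC, LinearMap.sum_apply, LinearMap.comp_apply, cone_single,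
      Finsupp.finsetSum_apply] at h3
    obtain ⟨g, -, hg⟩ := Finset.exists_ne_zero_of_sum_ne_zero h3
    obtain rfl : t = _ := by
      by_contra hc
      exact hg (Finsupp.single_eq_of_ne hc)
    refine ih (by omega) ?_ ?_ h4
    · obtain ⟨φ, hφ⟩ := hl
      obtain ⟨ha, hb⟩ := reC_pair h1 h2 (show i < n + 1 by omega) g
      set ψ := reC (⟨i, by omega⟩ : Fin (n + 1)) (ζ ^ g * (1 + ζ)) with hψ
      -- a large multiple of the bisecting functional dominates at the two new vertices
      have hev : ∀ u, 0 < ψ u → ∀ᶠ t : ℝ in Filter.atTop, 0 < φ u + t * ψ u := fun u hu =>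
        (Filter.tendsto_atTop_add_const_left _ _
          (Filter.tendsto_id.atTop_mul_const hu)).eventually_gt_atTop 0
      obtain ⟨t, ht1, ht2⟩ := ((hev _ ha).and (hev _ hb)).exists
      refine ⟨φ + t • ψ, fun v hv => ?_⟩
      rw [List.mem_cons, List.mem_cons, mulT_iterate, mulT_iterate] at hv
      rcases hv with rfl | rfl | hv
      · simpa using ht1
      · simpa using ht2
      · have h5 : ψ v = 0 := by
          rw [hψ, reC_apply, hl0 v hv _ (Nat.lt_succ_self i)]; simp
        simpa [h5] using hφ v hv
    · intro v hv j hj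
      rw [List.mem_cons, List.mem_cons, mulT_iterate, mulT_iterate] at hv
      have h5 : stdE n i j = 0 := by
        rw [stdE_apply (by omega), if_neg]
        intro hji
        rw [hji] at hj
        exact lt_irrefl _ hj
      rcases hv with rfl | rfl | hv
      · simp [h5]
      · simp [h5]
      · exact hl0 v hv j (by omega)

theorem cells_pos {p : ℕ} {ζ : ℂ} (h1 : ‖ζ‖ = 1) (h2 : ζ ≠ -1) {e : ℕ} (he : e ≤ 2 * n + 1)
    {l : List (Amb n)} (h : cells p (mulT n ζ) (stdE n) e l ≠ 0) :
    ∃ φ : Amb n →L[ℝ] ℝ, ∀ v ∈ l, 0 < φ v := by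
  have hi : e / 2 < n + 1 := by omega
  have h0 : ∀ v ∈ [stdE n (e / 2), mulT n ζ (stdE n (e / 2))],
      ∀ j : Fin (n + 1), (j : ℕ) < e / 2 → v j = 0 := by
    intro v hv j hj
    have h5 : stdE n (e / 2) j = 0 := by
      rw [stdE_apply hi, if_neg]
      rintro rfl
      exact lt_irrefl _ hj
    simp only [List.mem_cons, List.not_mem_nil, or_false] at hv
    rcases hv with rfl | rfl <;> simp [h5]
  obtain ⟨ha, hb⟩ := reC_pair h1 h2 hi 0
  have hφ : ∀ v ∈ [stdE n (e / 2), mulT n ζ (stdE n (e / 2))],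
      0 < reC (⟨e / 2, hi⟩ : Fin (n + 1)) (ζ ^ 0 * (1 + ζ)) v := by
    intro v hv
    simp only [List.mem_cons, List.not_mem_nil, or_false] at hv
    rcases hv with rfl | rfl
    · simpa only [pow_zero, one_smul] using ha
    · simpa only [zero_add, pow_one, mulT_apply] using hb
  have hsub : ∀ v ∈ (if Even e then [stdE n (e / 2)] else
      [stdE n (e / 2), mulT n ζ (stdE n (e / 2))]),
      v ∈ [stdE n (e / 2), mulT n ζ (stdE n (e / 2))] := by
    intro v hv
    split_ifs at hv
    · simp_all
    · exact hv
  exact joins_pos h1 h2 hi.le ⟨_, fun v hv => hφ v (hsub v hv)⟩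
    (fun v hv => h0 v (hsub v hv)) h

/-- Radial projection to the sphere, with an arbitrary value at the origin. -/
noncomputable def radial (v : Amb n) : Sph n :=
  if h : v = 0 then ⟨EuclideanSpace.single 0 1, by simp⟩ else
    ⟨(‖v‖⁻¹ : ℝ) • v, by simp [norm_smul, h]⟩

theorem radial_coe {v : Amb n} (h : v ≠ 0) : (radial v : Amb n) = (‖v‖⁻¹ : ℝ) • v := by
  simp [radial, h]

theorem radial_smul (z : Circle) {v : Amb n} (h : v ≠ 0) :
    radial ((z : ℂ) • v) = rot z (radial v) := by
  apply Subtype.ext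
  rw [radial_coe (smul_ne_zero (Circle.coe_ne_zero z) h), rot_coe, radial_coe h, norm_smul,
    Circle.norm_coe, one_mul, smul_comm]

theorem radial_dist {u v : Amb n} {c : ℝ} (hc : 0 < c) (hu : c ≤ ‖u‖) (hv : c ≤ ‖v‖) :
    dist (radial u) (radial v) ≤ 2 / c * dist u v := by
  have hu0 : 0 < ‖u‖ := hc.trans_le hu
  have hv0 : 0 < ‖v‖ := hc.trans_le hv
  rw [Subtype.dist_eq, radial_coe (norm_pos_iff.1 hu0), radial_coe (norm_pos_iff.1 hv0),
    dist_eq_norm, dist_eq_norm]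
  have e : (‖u‖⁻¹ : ℝ) • u - (‖v‖⁻¹ : ℝ) • v =
      (‖u‖⁻¹ : ℝ) • ((u - v) + ((‖v‖ - ‖u‖) * ‖v‖⁻¹ : ℝ) • v) := by
    rw [smul_add, smul_sub, smul_smul, sub_mul, mul_inv_cancel₀ hv0.ne', mul_sub, mul_one,
      ← mul_assoc, inv_mul_cancel₀ hu0.ne', one_mul, sub_smul]
    abel
  rw [e, norm_smul, norm_inv, norm_norm]
  have h1 : ‖((‖v‖ - ‖u‖) * ‖v‖⁻¹ : ℝ) • v‖ ≤ ‖u - v‖ := by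
    rw [norm_smul, norm_mul, norm_inv, norm_norm, mul_assoc, inv_mul_cancel₀ hv0.ne', mul_one,
      Real.norm_eq_abs, norm_sub_rev]
    exact abs_norm_sub_norm_le v u
  calc ‖u‖⁻¹ * ‖(u - v) + ((‖v‖ - ‖u‖) * ‖v‖⁻¹ : ℝ) • v‖
      ≤ c⁻¹ * (‖u - v‖ + ‖u - v‖) := by
        gcongr
        exact (norm_add_le _ _).trans (by gcongr)
    _ = 2 / c * ‖u - v‖ := by ring

theorem hull_norm {l : List (Amb n)} (h : ∃ φ : Amb n →L[ℝ] ℝ, ∀ v ∈ l, 0 < φ v) :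
    ∃ c : ℝ, 0 < c ∧ ∀ v ∈ hullL l, c ≤ ‖v‖ := by
  obtain ⟨φ, hφ⟩ := h
  obtain ⟨μ, hμ, hμl⟩ : ∃ μ : ℝ, 0 < μ ∧ ∀ v ∈ l, μ ≤ φ v := by
    induction l with
    | nil => exact ⟨1, one_pos, by simp⟩
    | cons a l ih =>
      obtain ⟨μ, h1, h2⟩ := ih fun v hv => hφ v (by simp [hv])
      refine ⟨min (φ a) μ, lt_min (hφ a (by simp)) h1, fun v hv => ?_⟩
      rcases List.mem_cons.1 hv with rfl | hv
      · exact min_le_left _ _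
      · exact (min_le_right _ _).trans (h2 v hv)
  have hsub : hullL l ⊆ {v | μ ≤ φ v} :=
    convexHull_min hμl (convex_halfSpace_ge φ.toLinearMap.isLinear μ)
  have hpos : 0 < ‖φ‖ + 1 := by positivity
  refine ⟨μ / (‖φ‖ + 1), by positivity, fun v hv => ?_⟩
  rw [div_le_iff₀ hpos]
  have h1 : μ ≤ φ v := hsub hv
  have h2 := (le_abs_self _).trans (φ.le_opNorm v)
  nlinarith [norm_nonneg v]

/-- There are towers of arbitrarily small cells on the sphere, for the rotation by a root of unity
of odd order. -/
theorem exists_tower {p : ℕ} {ζ : Circle} (hζ : ζ ^ p = 1) (h2 : ζ ≠ -1) {δ : ℝ} (hδ : 0 < δ) :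
    ∃ w : ℕ → (List (Sph n) →₀ ZMod p), Tower p (2 * n + 1) (rot ζ) w ∧
      ∀ e ≤ 2 * n + 1, ∀ l, w e l ≠ 0 → ∀ x ∈ l, ∀ y ∈ l, dist x y < δ := by
  have hT : (mulT n (ζ : ℂ))^[p] = id := by
    funext v
    rw [mulT_iterate, ← Circle.coe_pow, hζ]; simp
  have hζ2 : (ζ : ℂ) ≠ -1 := fun h => h2 (Circle.ext (by simpa using h))
  obtain ⟨w, hw, hsub⟩ := (tower_cells hT (stdE n) (2 * n + 1)).subdivide
  have hpos : ∀ e ≤ 2 * n + 1, ∀ l, cells p (mulT n (ζ : ℂ)) (stdE n) e l ≠ 0 →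
      ∃ c : ℝ, 0 < c ∧ ∀ v ∈ hullL l, c ≤ ‖v‖ := fun e he l hl =>
    hull_norm (cells_pos (Circle.norm_coe ζ) hζ2 he hl)
  have hex : ∃ N, ∀ e ∈ Finset.range (2 * n + 2),
      ∀ l ∈ (cells p (mulT n (ζ : ℂ)) (stdE n) e).support, ∃ c d : ℝ, 0 < c ∧
        (∀ v ∈ hullL l, c ≤ ‖v‖) ∧ (∀ x ∈ l, ∀ y ∈ l, dist x y ≤ d) ∧
        2 / c * ((1 - ((e + 1 : ℕ) : ℝ)⁻¹) ^ N * d) < δ := by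
    suffices ∀ᶠ N : ℕ in Filter.atTop, ∀ e ∈ Finset.range (2 * n + 2),
      ∀ l ∈ (cells p (mulT n (ζ : ℂ)) (stdE n) e).support, ∃ c d : ℝ, 0 < c ∧
        (∀ v ∈ hullL l, c ≤ ‖v‖) ∧ (∀ x ∈ l, ∀ y ∈ l, dist x y ≤ d) ∧
        2 / c * ((1 - ((e + 1 : ℕ) : ℝ)⁻¹) ^ N * d) < δ from this.exists
    rw [Filter.eventually_all_finset]
    intro e he
    rw [Filter.eventually_all_finset]
    intro l hl
    obtain ⟨c, hc, hcl⟩ := hpos e (by simp at he; omega) l (Finsupp.mem_support_iff.1 hl)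
    obtain ⟨d, hd⟩ := (Set.Finite.isBounded (List.finite_toSet l)).subset_closedBall (0 : Amb n)
    have hd' : ∀ x ∈ l, ∀ y ∈ l, dist x y ≤ d + d := fun x hx y hy =>
      (dist_triangle_right x y 0).trans (add_le_add (hd hx) (hd hy))
    have hlim : Filter.Tendsto (fun N : ℕ => 2 / c * ((1 - ((e + 1 : ℕ) : ℝ)⁻¹) ^ N * (d + d)))
        Filter.atTop (nhds (2 / c * (0 * (d + d)))) := by
      refine ((tendsto_pow_atTop_nhds_zero_of_lt_one ?_ ?_).mul_const _).const_mul _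
      · refine sub_nonneg.2 (inv_le_one_of_one_le₀ ?_)
        push_cast; linarith [e.cast_nonneg (α := ℝ)]
      · have : (0 : ℝ) < ((e + 1 : ℕ) : ℝ)⁻¹ := by positivity
        linarith
    rw [zero_mul, mul_zero] at hlim
    filter_upwards [hlim.eventually_lt_const hδ] with N hN
    exact ⟨c, d + d, hc, hcl, hd', hN⟩
  obtain ⟨N, hN⟩ := hex
  have hne : ∀ e ≤ 2 * n + 1, ∀ l, w N e l ≠ 0 → ∀ x ∈ l, x ≠ 0 := by
    intro e he l hl x hx
    obtain ⟨t, h3, h4, -⟩ := hsub N e he l hl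
    obtain ⟨c, hc, hct⟩ := hpos e he t h3
    rw [← norm_pos_iff]
    exact hc.trans_le (hct x (h4 x hx))
  refine ⟨_, (hw N).map_vertices (f := radial) (T' := rot ζ) fun e he l hl x hx g => ?_, ?_⟩
  · rw [mulT_iterate, rot_iterate, ← Circle.coe_pow, radial_smul _ (hne e he l hl x hx)]
  · intro e he l hl x hx y hy
    obtain ⟨t, h3, rfl⟩ := lmap_support hl
    obtain ⟨u, hu, rfl⟩ := List.mem_map.1 hx
    obtain ⟨v, hv, rfl⟩ := List.mem_map.1 hy
    obtain ⟨s, h4, h5, h6⟩ := hsub N e he t h3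
    obtain ⟨c, d, hc, hcs, hd, hlt⟩ := hN e (by simp; omega) s (Finsupp.mem_support_iff.2 h4)
    refine (radial_dist hc (hcs u (h5 u hu)) (hcs v (h5 v hv))).trans_lt (lt_of_le_of_lt ?_ hlt)
    gcongr
    exact h6 d hd u hu v hv

end Sphere

/-! ### The covering of the lens space and the labels of a motion planner -/

section Covering
variable {p n : ℕ} [NeZero p]

/-- The action of `ℤ/p` on the sphere by the `p`-th roots of unity. -/
noncomputable def act (a : ZMod p) (x : Sph n) : Sph n := rot (ZMod.toCircle a) x

theorem act_zero (x : Sph n) : act (0 : ZMod p) x = x := by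
  simp [act, rot_one]

theorem act_add (a b : ZMod p) (x : Sph n) : act (a + b) x = act a (act b x) := by
  simp [act, AddChar.map_add_eq_mul, rot_mul]

theorem act_injective {a b : ZMod p} {x : Sph n} (h : act a x = act b x) : a = b := by
  have h1 := congrArg Subtype.val h
  simp only [act, rot_coe] at h1
  have hx : (x : Amb n) ≠ 0 := fun h0 => by
    have := x.2
    simp [h0] at this
  have h2 := smul_left_injective ℂ hx h1
  exact ZMod.injective_toCircle (Subtype.ext h2)

theorem dist_act (a : ZMod p) (x y : Sph n) : dist (act a x) (act a y) = dist x y := by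
  simp [act, Subtype.dist_eq, dist_eq_norm, ← smul_sub, norm_smul, Circle.norm_coe]

theorem continuous_act (a : ZMod p) : Continuous (act a : Sph n → Sph n) :=
  (Isometry.of_dist_eq (dist_act a)).continuous

theorem circle_pow (a : ZMod p) : ZMod.toCircle a ^ p = 1 := by
  rw [← AddChar.map_nsmul_eq_pow]; simp

theorem exists_toCircle {z : ℂ} (hz : z ^ p = 1) : ∃ a : ZMod p, (ZMod.toCircle a : ℂ) = z := by
  obtain ⟨i, -, hi⟩ := (Complex.isPrimitiveRoot_exp p (NeZero.ne p)).eq_pow_of_pow_eq_one hz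
  refine ⟨(i : ℤ), ?_⟩
  rw [ZMod.toCircle_intCast, ← hi, ← Complex.exp_nat_mul]
  congr 1
  push_cast
  ring

variable (p n) in
/-- The projection of the sphere onto the lens space. -/
noncomputable def lensMk (x : Sph n) : LensSpace p n := Quotient.mk (lensSetoid p n) x

theorem lensMk_eq_iff {x y : Sph n} :
    lensMk p n x = lensMk p n y ↔ ∃ a : ZMod p, y = act a x := by
  refine Quotient.eq.trans ⟨?_, ?_⟩
  · rintro ⟨z, hz, h⟩
    obtain ⟨a, ha⟩ := exists_toCircle (p := p) (z := z) (by rw [← Units.val_pow_eq_pow_val, hz, Units.val_one])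
    exact ⟨a, Subtype.ext (by rw [h, act, rot_coe, ha]; rfl)⟩
  · rintro ⟨a, rfl⟩
    refine ⟨Circle.toUnits (ZMod.toCircle a), ?_, rfl⟩
    rw [← map_pow, circle_pow, map_one]

theorem lensMk_act (a : ZMod p) (x : Sph n) : lensMk p n (act a x) = lensMk p n x :=
  (lensMk_eq_iff.2 ⟨a, rfl⟩).symm

/-- The action of `act`, as a multiplicative action. -/
noncomputable instance : MulAction (Multiplicative (ZMod p)) (Sph n) where
  smul a x := act a.toAdd x
  one_smul := act_zero
  mul_smul _ _ x := act_add _ _ x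

theorem smul_def (a : Multiplicative (ZMod p)) (x : Sph n) : a • x = act a.toAdd x := rfl

instance : ContinuousConstSMul (Multiplicative (ZMod p)) (Sph n) where
  continuous_const_smul a := continuous_act a.toAdd

instance : IsCancelSMul (Multiplicative (ZMod p)) (Sph n) where
  right_cancel' _ _ _ h := Multiplicative.toAdd.injective (act_injective h)

variable (p n) in
theorem covering : IsQuotientCoveringMap (lensMk p n) (Multiplicative (ZMod p)) := by
  refine (isQuotientMap_quotient_mk' (s := lensSetoid p n)).isQuotientCoveringMap_of_properlyDiscontinuousSMul
    ?_
  intro x y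
  refine eq_comm.trans ?_
  refine lensMk_eq_iff.trans ⟨?_, ?_⟩
  · rintro ⟨a, ha⟩
    exact ⟨Multiplicative.ofAdd a, ha.symm⟩
  · rintro ⟨a, ha⟩
    exact ⟨a.toAdd, ha.symm⟩

theorem continuous_lensMk : Continuous (lensMk p n) := (covering p n).continuous

end Covering

/-- The sample time of `pik` with index `i`. -/
noncomputable def tm (k : ℕ) (i : Fin k) : I :=
  Set.projIcc 0 1 zero_le_one ((i : ℝ) / ((k : ℝ) - 1))

section Labels
variable {p n m : ℕ} [NeZero p]

/-- Componentwise action of `(ℤ/p)^k` on `k`-tuples of points of the sphere. -/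
noncomputable def acts (b : Fin (m + 2) → ZMod p) (x : Fin (m + 2) → Sph n) :
    Fin (m + 2) → Sph n := fun l => act (b l) (x l)

/-- The projection of a `k`-tuple of points of the sphere. -/
noncomputable def lensMks (p : ℕ) (x : Fin (m + 2) → Sph n) : Fin (m + 2) → LensSpace p n :=
  fun l => lensMk p n (x l)

theorem continuous_lensMks : Continuous (lensMks p : (Fin (m + 2) → Sph n) → _) :=
  continuous_pi fun l => continuous_lensMk.comp (continuous_apply l)

theorem lensMks_acts (b : Fin (m + 2) → ZMod p) (x : Fin (m + 2) → Sph n) :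
    lensMks p (acts b x) = lensMks p x := funext fun _ => lensMk_act _ _

theorem dist_acts (b : Fin (m + 2) → ZMod p) (x y : Fin (m + 2) → Sph n) :
    dist (acts b x) (acts b y) = dist x y := by
  simp only [dist_pi_def, acts, nndist_dist, dist_act]

/-- A section of `π_k` over `U` lifts, along each path and from the first point, to the sphere;
the roots of unity relating the lifted path at the sample times with the given points form a
locally constant label, with the expected behaviour under `(ℤ/p)^k`. -/
theorem exists_label {U : Set (Fin (m + 2) → LensSpace p n)} (hU : IsOpen U)
    (hs : HasSec (m + 2) U) :
    ∃ a : (Fin (m + 2) → Sph n) → Fin (m + 2) → ZMod p,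
      (∀ g, IsOpen {x | lensMks p x ∈ U ∧ a x = g}) ∧
      ∀ x, lensMks p x ∈ U → ∀ b, a (acts b x) = fun l => (b l - b 0) + a x l := by
  obtain ⟨s, hs⟩ := hs
  have cov := (covering p n).isCoveringMap
  let V : Set (Fin (m + 2) → Sph n) := lensMks p ⁻¹' U
  have hV : IsOpen V := hU.preimage continuous_lensMks
  let pr : C(V, U) := ⟨fun v => ⟨lensMks p v.1, v.2⟩, by
    exact (continuous_lensMks.comp continuous_subtype_val).subtype_mk _⟩
  let H : C(I × V, LensSpace p n) := ⟨fun y => s (pr y.2) y.1, by fun_prop⟩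
  let f : C(V, Sph n) := ⟨fun v => v.1 0, (continuous_apply 0).comp continuous_subtype_val⟩
  have hs' : ∀ (v : V) l, s (pr v) (tm _ l) = lensMk p n (v.1 l) := fun v l =>
    congrFun (hs (pr v)) l
  have htm : tm (m + 2) 0 = 0 := by simp [tm]
  have H_0 : ∀ v, H (0, v) = lensMk p n (f v) := fun v => by
    refine Eq.trans ?_ (hs' v 0)
    rw [htm]; rfl
  let Λ := cov.liftHomotopy H f H_0
  have hΛ : ∀ t v, lensMk p n (Λ (t, v)) = s (pr v) t := fun t v =>
    congrFun (cov.liftHomotopy_lifts H f H_0) (t, v)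
  have hΛ0 : ∀ v : V, Λ (0, v) = v.1 0 := fun v => cov.liftHomotopy_zero H f H_0 v
  have hex : ∀ (v : V) l, ∃ a : ZMod p, v.1 l = act a (Λ (tm _ l, v)) := fun v l =>
    lensMk_eq_iff.1 ((hΛ _ v).trans (hs' v l))
  choose a ha using hex
  have huniq : ∀ (v : V) l c, v.1 l = act c (Λ (tm _ l, v)) ↔ a v l = c := fun v l c =>
    ⟨fun h => act_injective ((ha v l).symm.trans h), fun h => h ▸ ha v l⟩
  have hcont : ∀ l c, IsOpen {v | a v l = c} := by
    intro l c
    have hcl : ∀ c, IsClosed {v | a v l = c} := fun c => by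
      simp only [← huniq]
      exact isClosed_eq ((continuous_apply l).comp continuous_subtype_val) ((continuous_act c).comp (by fun_prop))
    have : {v | a v l = c} = (⋃ d : {d : ZMod p // d ≠ c}, {v | a v l = d.1})ᶜ := by
      ext v
      simp only [Set.mem_ofPred_eq, Set.mem_compl_iff, Set.mem_iUnion, Subtype.exists, not_exists]
      exact ⟨fun h d hd h' => hd (h'.symm.trans h), fun h => by_contra fun h' => h _ h' rfl⟩
    rw [this]
    exact (isClosed_iUnion_of_finite fun d : {d : ZMod p // d ≠ c} =>
      hcl d.1).isOpen_compl
  classical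
  refine ⟨fun x => if h : x ∈ V then a ⟨x, h⟩ else 0, fun g => ?_, fun x hx b => ?_⟩
  · have h1 : IsOpen {v : V | a v = g} := by
      have : {v : V | a v = g} = ⋂ l, {v | a v l = g l} := by
        ext v; simp [funext_iff]
      rw [this]
      exact isOpen_iInter_of_finite fun l => hcont l _
    convert hV.isOpenMap_subtype_val _ h1 using 1
    ext x
    constructor
    · rintro ⟨h, h'⟩
      exact ⟨⟨x, h⟩, by simpa [show x ∈ V from h] using h', rfl⟩
    · rintro ⟨v, h, rfl⟩
      exact ⟨v.2, by simpa using h⟩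
  · have hb : acts b x ∈ V := by
      change lensMks p (acts b x) ∈ U
      rwa [lensMks_acts]
    have hx' : x ∈ V := hx
    simp only [hb, hx', dite_true]
    have hpr : pr ⟨acts b x, hb⟩ = pr ⟨x, hx'⟩ := Subtype.ext (lensMks_acts b x)
    -- the lifts from `x 0` and from its rotation differ by that rotation
    have hl : (fun t => Λ (t, ⟨acts b x, hb⟩)) = fun t => act (b 0) (Λ (t, ⟨x, hx'⟩)) := by
      refine cov.eq_of_comp_eq (by fun_prop) ((continuous_act _).comp (by fun_prop)) ?_ 0 ?_
      · funext t
        simp only [Function.comp_apply, lensMk_act, hΛ, hpr]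
      · simp only [hΛ0]; rfl
    funext l
    rw [← huniq, congrFun hl (tm _ l), ← act_add]
    change act (b l) (x l) = _
    rw [show x l = _ from ha ⟨x, hx'⟩ l, ← act_add]
    congr 1
    ring

end Labels

/-! ### The lower bound -/

/-- The lower bound for the higher topological complexity: a smaller cover by domains of motion
planners yields, through a Lebesgue number, a colouring excluded by `no_colouring`. -/
theorem lower_bound {p m n r : ℕ} (hp : p.Prime) (hp3 : 3 ≤ p) (hc : ¬ p ∣ (2 * n).choose n)
    (hr : r < (m + 2) * (2 * n + 1)) : ¬ TCCoverAt (LensSpace p n) (m + 2) r := by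
  rintro ⟨U, hU, hcov, hsec⟩
  have : Fact p.Prime := ⟨hp⟩
  choose a ha hb using fun i => exists_label (hU i) (hsec i)
  let V : Fin r × (Fin (m + 2) → ZMod p) → Set (Fin (m + 2) → Sph n) :=
    fun c => {x | lensMks p x ∈ U c.1 ∧ a c.1 x = c.2}
  obtain ⟨δ, hδ, hball⟩ := lebesgue_number_lemma_of_metric (c := V)
    (isCompact_univ : IsCompact (Set.univ : Set (Fin (m + 2) → Sph n))) (fun c => ha c.1 c.2)
    (fun x _ => by
      have h1 : lensMks p x ∈ ⋃ i, U i := hcov ▸ Set.mem_univ _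
      obtain ⟨i, hi⟩ := Set.mem_iUnion.1 h1
      exact Set.mem_iUnion.2 ⟨(i, a i x), hi, rfl⟩)
  let P : (Fin (m + 2) → Sph n) → Set (Fin r) := fun x => {i | ∃ g, Metric.ball x δ ⊆ V (i, g)}
  have hPne : ∀ x, (P x).Nonempty := fun x => by
    obtain ⟨c, h⟩ := hball x trivial
    exact ⟨c.1, c.2, h⟩
  have hPsub : ∀ (b : Fin (m + 2) → ZMod p) x, P x ⊆ P (acts b x) := by
    rintro b x i ⟨g, hg⟩
    refine ⟨fun l => (b l - b 0) + g l, fun y hy => ?_⟩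
    have hyy : acts b (acts (-b) y) = y := by
      funext l
      simp [acts, ← act_add, act_zero]
    have h1 : acts (-b) y ∈ Metric.ball x δ := by
      rw [Metric.mem_ball, ← dist_acts b, hyy]; exact hy
    have h2 := hg h1
    refine ⟨?_, ?_⟩
    · have := h2.1; rwa [lensMks_acts] at this
    · have := hb i _ h2.1 b
      rw [hyy] at this
      rw [this, h2.2]
  have hPeq : ∀ (b : Fin (m + 2) → ZMod p) x, P (acts b x) = P x := fun b x => by
    refine (Set.Subset.antisymm (hPsub b x) ?_).symm
    have := hPsub (-b) (acts b x)
    have hxx : acts (-b) (acts b x) = x := by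
      funext l
      simp [acts, ← act_add, act_zero]
    rwa [hxx] at this
  obtain ⟨x0, -⟩ : ∃ x : Fin (m + 2) → Sph n, x = x :=
    ⟨fun _ => ⟨stdE n 0, by simp [stdE]⟩, rfl⟩
  let F : Set (Fin r) → Fin r := fun A => Classical.epsilon (h := ⟨(hPne x0).some⟩) (· ∈ A)
  have hF : ∀ x, F (P x) ∈ P x := fun x => Classical.epsilon_spec (hPne x)
  let lab : (Fin (m + 2) → Sph n) → Fin r × (Fin (m + 2) → ZMod p) :=
    fun x => (F (P x), a (F (P x)) x)
  let c : Fin (m + 2) → ZMod p := fun j => if j = 0 then -1 else 1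
  have hodd : Odd p := hp.odd_of_ne_two (by omega)
  have hz : ∀ b : ZMod p, ZMod.toCircle b ≠ -1 := fun b h => by
    have := circle_pow b
    rw [h, hodd.neg_one_pow] at this
    have h3 := congrArg (fun z : Circle => (z : ℂ).re) this
    norm_num at h3
  choose w hw hsmall using fun j => exists_tower (n := n) (circle_pow (c j)) (hz (c j)) hδ
  refine no_colouring hp3 hc hr (lab := lab) hw ?_ ?_
  · intro L hL
    choose e he hne using hL
    refine ⟨fun j h0 => ?_, fun x hx y hy hxy => ?_⟩
    · have := (hw j).length (e j) (he j) _ (hne j)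
      simp [h0] at this
    · have hd : dist y x < δ := (dist_pi_lt_iff hδ).2 fun j =>
        hsmall j (e j) (he j) _ (hne j) _ (hy j) _ (hx j)
      have hxy' : F (P x) = F (P y) := hxy
      obtain ⟨g, hg⟩ := hF x
      have h1 := (hg (Metric.mem_ball_self hδ)).2
      have h2 := (hg (Metric.mem_ball.2 hd)).2
      simp only [lab, ← hxy']
      exact congrArg _ (h1.trans h2.symm)
  · intro x j
    have hup : Function.update x j (rot (ZMod.toCircle (c j)) (x j)) = acts (Pi.single j (c j)) x := by
      funext l
      by_cases h : l = j
      · subst h; simp [acts, act]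
      · simp [acts, h, act_zero]
    rw [hup]
    simp only [lab, hPeq]
    refine congrArg _ ?_
    obtain ⟨g, hg⟩ := hF x
    rw [hb _ x (hg (Metric.mem_ball_self hδ)).1]
    funext l
    simp only [Pi.add_apply, add_left_inj, gen, c]
    by_cases h : j = 0
    · subst h
      by_cases hl : l = 0
      · simp [hl]
      · simp [hl]
    · have h' : (0 : Fin (m + 2)) ≠ j := fun h0 => h h0.symm
      simp [h, Pi.single_apply, h']

/-! ### Building sections of the evaluation fibration -/

section Sections
variable {X : Type*} [TopologicalSpace X]

theorem hasSec_mono {k : ℕ} {S T : Set (Fin k → X)} (h : T ⊆ S) (hS : HasSec k S) :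
    HasSec k T := by
  obtain ⟨s, hs⟩ := hS
  exact ⟨s.comp ⟨Set.inclusion h, continuous_inclusion h⟩, fun u => hs _⟩

theorem hasSec_iUnion {k : ℕ} {ι : Type*} {V : ι → Set (Fin k → X)} (ho : ∀ i, IsOpen (V i))
    (hd : ∀ i j x, x ∈ V i → x ∈ V j → i = j) (hV : ∀ i, HasSec k (V i)) :
    HasSec k (⋃ i, V i) := by
  choose s hs using hV
  let T : ι → Set ↥(⋃ i, V i) := fun i => Subtype.val ⁻¹' V i
  let φ : ∀ i, C(T i, C(I, X)) := fun i => (s i).comp ⟨fun y => ⟨y.1.1, y.2⟩, by fun_prop⟩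
  have hφ : ∀ i j x (hi : x ∈ T i) (hj : x ∈ T j), φ i ⟨x, hi⟩ = φ j ⟨x, hj⟩ := by
    intro i j x hi hj
    obtain rfl := hd i j _ hi hj
    rfl
  have hT : ∀ x, ∃ i, T i ∈ nhds x := fun x => by
    obtain ⟨i, hi⟩ := Set.mem_iUnion.1 x.2
    exact ⟨i, ((ho i).preimage continuous_subtype_val).mem_nhds hi⟩
  refine ⟨ContinuousMap.liftCover T φ hφ hT, fun x => ?_⟩
  obtain ⟨i, hi⟩ := Set.mem_iUnion.1 x.2
  have h1 := ContinuousMap.liftCover_coe (S := T) (φ := φ) (hφ := hφ) (hS := hT) (i := i) ⟨x, hi⟩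
  have h2 : ContinuousMap.liftCover T φ hφ hT x = φ i ⟨x, hi⟩ := h1
  rw [h2]
  exact hs i _

/-- If all the evaluation maps on `S` are homotopic to one map, the homotopies, run backwards
and forwards between consecutive sample times, form a section. -/
theorem hasSec_of_homotopic {m : ℕ} {S : Set (Fin (m + 2) → X)} (g : C(S, X))
    (h : ∀ l, ContinuousMap.Homotopic
      (⟨fun x => x.1 l, (continuous_apply l).comp continuous_subtype_val⟩ : C(S, X)) g) :
    HasSec (m + 2) S := by
  have F := fun l => (h l).some
  let d : Fin (m + 2) → I × S → ℝ := fun l y => |(y.1 : ℝ) * (m + 1) - (l : ℕ)|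
  have hd : ∀ l, Continuous (d l) := fun l => by fun_prop
  let C : Fin (m + 2) → Set (I × S) := fun l => {y | d l y ≤ 1 / 2}
  have hC : ∀ l, IsClosed (C l) := fun l => isClosed_le (hd l) continuous_const
  have hex : ∀ y, ∃ l, y ∈ C l := fun y => by
    have h0 : 0 ≤ (y.1 : ℝ) * (m + 1) := mul_nonneg y.1.2.1 (by positivity)
    have h1 : (y.1 : ℝ) * (m + 1) ≤ m + 1 := mul_le_of_le_one_left (by positivity) y.1.2.2
    have h2 := Nat.floor_le (show 0 ≤ (y.1 : ℝ) * (m + 1) + 1 / 2 by linarith)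
    have h3 := Nat.lt_floor_add_one ((y.1 : ℝ) * (m + 1) + 1 / 2)
    have h4 : ⌊(y.1 : ℝ) * (m + 1) + 1 / 2⌋₊ < m + 2 := by
      have : (⌊(y.1 : ℝ) * (m + 1) + 1 / 2⌋₊ : ℝ) < (m + 2 : ℕ) := by push_cast; linarith
      exact_mod_cast this
    refine ⟨⟨_, h4⟩, ?_⟩
    change |(_ : ℝ) - _| ≤ _
    rw [abs_le]
    constructor <;> dsimp only <;> linarith
  choose ix hix using hex
  let τ : ℝ → I := Set.projIcc 0 1 zero_le_one
  let G : I × S → X := fun y => F (ix y) (τ (2 * d (ix y) y), y.2)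
  have hG : ∀ l, ∀ y ∈ C l, G y = F l (τ (2 * d l y), y.2) := by
    intro l y hy
    by_cases hl : ix y = l
    · subst hl; rfl
    · -- at the half way points all the homotopies have reached `g`
      have hne : ((ix y : ℕ) : ℝ) ≠ (l : ℕ) := fun h' => hl (Fin.ext (by exact_mod_cast h'))
      have h1 : 1 ≤ |((ix y : ℕ) : ℝ) - (l : ℕ)| := by
        have : ((ix y : ℕ) : ℤ) - (l : ℕ) ≠ 0 := fun h' => hne (by
          have : ((ix y : ℕ) : ℤ) = (l : ℕ) := by omega
          exact_mod_cast this)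
        have := Int.one_le_abs this
        exact_mod_cast this
      have h2 : |((ix y : ℕ) : ℝ) - (l : ℕ)| ≤ d l y + d (ix y) y := by
        have := abs_sub_le ((ix y : ℕ) : ℝ) ((y.1 : ℝ) * (m + 1)) (l : ℕ)
        rw [abs_sub_comm] at this
        rw [abs_sub_comm ((ix y : ℕ) : ℝ)] at this
        simp only [d]
        rw [abs_sub_comm]
        linarith
      have h3 : d l y ≤ 1 / 2 := hy
      have h4 : d (ix y) y ≤ 1 / 2 := hix y
      have h5 : τ (2 * d l y) = 1 := Set.projIcc_of_right_le _ (by linarith)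
      have h6 : τ (2 * d (ix y) y) = 1 := Set.projIcc_of_right_le _ (by linarith)
      simp only [G, h5, h6, ContinuousMap.Homotopy.apply_one]
  have hcont : Continuous G := by
    refine (locallyFinite_of_finite C).continuous (Set.eq_univ_of_forall fun y =>
      Set.mem_iUnion.2 ⟨ix y, hix y⟩) hC fun l => ?_
    refine ContinuousOn.congr (f := fun y => F l (τ (2 * d l y), y.2)) ?_ (hG l)
    refine Continuous.continuousOn ((F l).continuous.comp (Continuous.prodMk ?_ continuous_snd))
    exact continuous_projIcc.comp (continuous_const.mul (hd l))
  refine ⟨ContinuousMap.curry ⟨fun y : S × I => G (y.2, y.1), by fun_prop⟩, fun x => ?_⟩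
  funext l
  have hm : (0 : ℝ) < m + 1 := by positivity
  have hl : ((tm (m + 2) l : I) : ℝ) = (l : ℕ) / (m + 1) := by
    have e : ((m + 2 : ℕ) : ℝ) - 1 = m + 1 := by push_cast; ring
    have h1 : ((l : ℕ) : ℝ) ≤ m + 1 := by
      have := l.2
      exact_mod_cast (by omega : (l : ℕ) ≤ m + 1)
    rw [tm, e, Set.projIcc_of_mem _ ⟨by positivity, (div_le_one hm).2 h1⟩]
  have h0 : d l (tm (m + 2) l, x) = 0 := by
    simp only [d]
    rw [hl, div_mul_cancel₀ _ hm.ne', sub_self, abs_zero]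
  change G (tm (m + 2) l, x) = x.1 l
  rw [hG l _ (by change d l _ ≤ _; rw [h0]; norm_num), h0, mul_zero]
  have : τ 0 = 0 := Set.projIcc_left _
  rw [this, ContinuousMap.Homotopy.apply_zero]
  rfl

end Sections

/-! ### Generic thresholds -/

section Generic

/-- A point of an open set avoiding the images of finitely many maps between spaces of the same
dimension whose derivatives are singular. -/
theorem exists_generic {V W B : Type*} [NormedAddCommGroup V] [NormedSpace ℝ V]
    [FiniteDimensional ℝ V] [NormedAddCommGroup W] [NormedSpace ℝ W] [FiniteDimensional ℝ W]
    [Finite B] (hVW : Module.finrank ℝ W = Module.finrank ℝ V) (G : B → V → W)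
    (hG : ∀ b, Differentiable ℝ (G b)) (s : Set V)
    (hker : ∀ b, ∀ v ∈ s, ∃ u, u ≠ 0 ∧ fderiv ℝ (G b) v u = 0) {O : Set W} (hO : IsOpen O)
    (hne : O.Nonempty) : ∃ w ∈ O, ∀ b, ∀ v ∈ s, G b v ≠ w := by
  borelize V
  let e : W ≃L[ℝ] V := ContinuousLinearEquiv.ofFinrankEq hVW
  let μ : MeasureTheory.Measure V := MeasureTheory.Measure.addHaar
  have h0 : ∀ b, μ ((fun v => e (G b v)) '' s) = 0 := fun b => by
    refine MeasureTheory.addHaar_image_eq_zero_of_det_fderivWithin_eq_zero μ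
      (f' := fun v => (e : W →L[ℝ] V) ∘L fderiv ℝ (G b) v)
      (fun v _ => ((e : W →L[ℝ] V).hasFDerivAt.comp v
        (hG b v).hasFDerivAt).hasFDerivWithinAt) fun v hv => ?_
    obtain ⟨u, hu, hu0⟩ := hker b v hv
    refine LinearMap.det_eq_zero_iff_ker_ne_bot.2 fun hk => hu ?_
    refine LinearMap.ker_eq_bot'.1 hk u ?_
    change e (fderiv ℝ (G b) v u) = 0
    rw [hu0, map_zero]
  have h1 : μ (⋃ b, (fun v => e (G b v)) '' s) = 0 := MeasureTheory.measure_iUnion_null h0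
  have h2 : 0 < μ (e '' O) :=
    (e.toHomeomorph.isOpenMap _ hO).measure_pos _ (hne.image _)
  obtain ⟨y, hy, hy'⟩ : ∃ y ∈ e '' O, y ∉ ⋃ b, (fun v => e (G b v)) '' s := by
    by_contra! hc
    exact h2.ne' (MeasureTheory.measure_mono_null hc h1)
  obtain ⟨w, hw, rfl⟩ := hy
  exact ⟨w, hw, fun b v hv h => hy' (Set.mem_iUnion.2 ⟨b, v, hv, by simp only [h]⟩)⟩

variable {n : ℕ}

/-- The function of two vectors, invariant under their multiplication by `p`-th roots of unity and
by a common complex number of modulus one, which is positive when the `p`-th power of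
`w i' * conj (z i)` is near that of `κ`. -/
noncomputable def hfun (p : ℕ) (κ : ℂ) (i i' : Fin (n + 1)) (z w : Amb n) : ℝ :=
  ((starRingEnd ℂ κ * (w i' * starRingEnd ℂ (z i))) ^ p).re

theorem hfun_smul (p : ℕ) (κ : ℂ) (i i' : Fin (n + 1)) (z w : Amb n) {c : ℂ}
    (hc : ‖c‖ = 1) : hfun p κ i i' (c • z) (c • w) = hfun p κ i i' z w := by
  have h : c * starRingEnd ℂ c = 1 := by
    rw [Complex.mul_conj, Complex.normSq_eq_norm_sq, hc]; norm_num
  simp only [hfun, PiLp.smul_apply, smul_eq_mul, map_mul]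
  rw [show c * w i' * (starRingEnd ℂ c * starRingEnd ℂ (z i)) =
    (c * starRingEnd ℂ c) * (w i' * starRingEnd ℂ (z i)) by ring, h, one_mul]

theorem hfun_real (p : ℕ) (κ : ℂ) (i i' : Fin (n + 1)) (z w : Amb n) (a b : ℝ) :
    hfun p κ i i' (a • z) (b • w) = (a * b) ^ p * hfun p κ i i' z w := by
  simp only [hfun, PiLp.smul_apply, Complex.real_smul, map_mul, Complex.conj_ofReal]
  rw [show starRingEnd ℂ κ * (b * w i' * (a * starRingEnd ℂ (z i))) =
    (a * b : ℝ) * (starRingEnd ℂ κ * (w i' * starRingEnd ℂ (z i))) by push_cast; ring, mul_pow,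
    ← Complex.ofReal_pow, Complex.re_ofReal_mul]

theorem differentiable_coord {k : ℕ} (l : Fin k) (i : Fin (n + 1)) :
    Differentiable ℝ fun v : Fin k → Amb n => v l i :=
  ((EuclideanSpace.proj i : Amb n →L[ℂ] ℂ).restrictScalars ℝ ∘L
    (ContinuousLinearMap.proj l : (Fin k → Amb n) →L[ℝ] Amb n)).differentiable

theorem differentiable_hfun {k : ℕ} (p : ℕ) (κ : ℂ) (i i' : Fin (n + 1)) (l l' : Fin k) :
    Differentiable ℝ fun v : Fin k → Amb n => hfun p κ i i' (v l) (v l') := by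
  have h1 := differentiable_coord l i
  have h2 := differentiable_coord l' i'
  have h3 : Differentiable ℝ fun v : Fin k → Amb n => starRingEnd ℂ (v l i) :=
    (Complex.conjCLE : ℂ →L[ℝ] ℂ).differentiable.comp h1
  exact Complex.reCLM.differentiable.comp (((h2.mul h3).const_mul _).pow p)

/-- There are `k(2n+1)` positive thresholds such that at every point some threshold is missed by
all the invariant functions: by the invariance under the circle, these functions together with
the `k` norms form maps with singular derivative between spaces of dimension `k(2n+2)`. -/
theorem exists_thresholds (p m n : ℕ) {J : Type*} [Finite J] (κ : J → ℂ) {ε : ℝ} (hε : 0 < ε) :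
    ∃ (c : Fin ((m + 2) * (2 * n + 1)) → ℝ) (r : Fin (m + 2) → ℝ),
      (∀ s, 0 < c s ∧ c s < ε) ∧ (∀ l, 1 < r l) ∧
      ∀ y : Fin (m + 2) → Sph n, ∃ s, ∀ (l : Fin (m + 2)) (i i' : Fin (n + 1)) (j : J),
        hfun p (κ j) i i' (r 0 • (y 0 : Amb n)) (r l • (y l : Amb n)) ≠ c s := by
  let N := (m + 2) * (2 * n + 1)
  let Q := Fin (m + 2) × Fin (n + 1) × Fin (n + 1) × J
  let G : (Fin N → Q) → (Fin (m + 2) → Amb n) → (Fin N → ℝ) × (Fin (m + 2) → ℝ) := fun b v =>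
    (fun s => hfun p (κ (b s).2.2.2) (b s).2.1 (b s).2.2.1 (v 0) (v (b s).1),
      fun l => ‖v l‖ ^ 2)
  have hG : ∀ b, Differentiable ℝ (G b) := fun b => by
    refine Differentiable.prodMk (differentiable_pi.2 fun s => differentiable_hfun _ _ _ _ _ _)
      (differentiable_pi.2 fun l => ?_)
    exact Differentiable.norm_sq ℝ
      (ContinuousLinearMap.proj l : (Fin (m + 2) → Amb n) →L[ℝ] Amb n).differentiable
  have hinv : ∀ b v (c : ℂ), ‖c‖ = 1 → G b (c • v) = G b v := fun b v c hc => by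
    simp only [G, Pi.smul_apply, hfun_smul _ _ _ _ _ _ hc, norm_smul, hc, one_mul]
  obtain ⟨w, ⟨hw1, hw2⟩, hw⟩ := exists_generic (by
      simp only [Module.finrank_prod, Module.finrank_pi, Module.finrank_pi_fintype,
        Fintype.card_fin, Finset.sum_const, Finset.card_univ, smul_eq_mul, N, Amb]
      rw [← Module.finrank_mul_finrank ℝ ℂ, Complex.finrank_real_complex,
        finrank_euclideanSpace_fin]
      ring) G hG {v | v 0 ≠ 0} (fun b v hv => by
        refine ⟨Complex.I • v, fun h => hv ?_, ?_⟩
        · have := (smul_eq_zero.1 h).resolve_left Complex.I_ne_zero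
          rw [this]; rfl
        · have h1 : HasDerivAt (fun t : ℝ => Complex.exp (t * Complex.I)) Complex.I 0 := by
            have h2 : HasDerivAt (fun t : ℝ => (t : ℂ) * Complex.I) Complex.I 0 := by
              simpa using (Complex.ofRealCLM.hasDerivAt (x := (0 : ℝ))).mul_const Complex.I
            simpa using h2.cexp
          have h3 : HasDerivAt (fun t : ℝ => Complex.exp (t * Complex.I) • v) (Complex.I • v) 0 :=
            h1.smul_const v
          have h4 : HasFDerivAt (G b) (fderiv ℝ (G b) v)
              ((fun t : ℝ => Complex.exp (t * Complex.I) • v) 0) := by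
            simpa using (hG b v).hasFDerivAt
          have h5 := h4.comp_hasDerivAt 0 h3
          have h6 : G b ∘ (fun t : ℝ => Complex.exp (t * Complex.I) • v) = fun _ => G b v :=
            funext fun t => hinv b v _ (Complex.norm_exp_ofReal_mul_I t)
          rw [h6] at h5
          exact h5.unique (hasDerivAt_const _ _))
    (O := (Set.univ.pi fun _ => Set.Ioo 0 ε) ×ˢ (Set.univ.pi fun _ => Set.Ioi 1))
    ((isOpen_set_pi Set.finite_univ fun _ _ => isOpen_Ioo).prod
      (isOpen_set_pi Set.finite_univ fun _ _ => isOpen_Ioi))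
    ⟨(fun _ => ε / 2, fun _ => 2), fun _ _ => ⟨by linarith, by linarith⟩, fun _ _ => by
      simp⟩
  refine ⟨w.1, fun l => √(w.2 l), fun s => hw1 s trivial, fun l => ?_, fun y => ?_⟩
  · rw [Real.lt_sqrt zero_le_one, one_pow]; exact hw2 l trivial
  · by_contra! hc
    choose l i i' j hb using hc
    have hpos : ∀ l, 0 < w.2 l := fun l => zero_lt_one.trans (hw2 l trivial)
    refine hw (fun s => (l s, i s, i' s, j s)) (fun l => √(w.2 l) • (y l : Amb n)) ?_
      (Prod.ext (funext hb) (funext fun l => ?_))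
    · refine smul_ne_zero (Real.sqrt_pos.2 (hpos 0)).ne' fun h => ?_
      have := (y 0).2
      simp [h] at this
    · simp [G, norm_smul, Real.sq_sqrt (hpos l).le]

end Generic

/-! ### Homotopies over pairs of points of the lens space -/

section Pairs
variable {p n : ℕ} [NeZero p]

theorem continuous_radial {Y : Type*} [TopologicalSpace Y] {f : Y → Amb n} (hf : Continuous f)
    (h : ∀ y, f y ≠ 0) : Continuous fun y => radial (f y) := by
  refine Continuous.subtype_mk (f := fun y => (‖f y‖⁻¹ : ℝ) • f y) ?_ (fun y => ?_) |>.congr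
    fun y => Subtype.ext (radial_coe (h y)).symm
  · exact (hf.norm.inv₀ fun y => norm_ne_zero_iff.2 (h y)).smul hf
  · simp [norm_smul, h y]

theorem coe_ne_zero (x : Sph n) : (x : Amb n) ≠ 0 := fun h => by
  have := x.2
  simp [h] at this

theorem lensMk_radial_smul {c : ℂ} {R : ℝ} (hR : 0 < R) (hc : c ^ p = R) (w : Sph n) :
    lensMk p n (radial (c • (w : Amb n))) = lensMk p n w := by
  have hc0 : c ≠ 0 := by
    rintro rfl
    rw [zero_pow (NeZero.ne p)] at hc
    exact hR.ne (by exact_mod_cast hc)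
  have hn : ‖c‖ ^ p = R := by
    rw [← norm_pow, hc, Complex.norm_real, Real.norm_of_nonneg hR.le]
  obtain ⟨a, ha⟩ := exists_toCircle (p := p) (z := (‖c‖⁻¹ : ℝ) * c) (by
    rw [mul_pow, hc, ← hn]
    push_cast
    rw [← mul_pow, inv_mul_cancel₀ (by exact_mod_cast (norm_pos_iff.2 hc0).ne'), one_pow])
  have : radial (c • (w : Amb n)) = act a w := by
    apply Subtype.ext
    rw [radial_coe (smul_ne_zero hc0 (coe_ne_zero w)), act, rot_coe, ha, norm_smul,
      norm_eq_of_mem_sphere w, mul_one, ← smul_smul]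
    rfl
  rw [this, lensMk_act]

variable (p n) in
/-- The projection from pairs of points of the sphere to pairs of points of the lens space. -/
noncomputable def lensMk2 : Sph n × Sph n → LensSpace p n × LensSpace p n :=
  Prod.map (lensMk p n) (lensMk p n)

theorem isOpenQuotientMap_lensMk2 : IsOpenQuotientMap (lensMk2 p n) :=
  (covering p n).isOpenQuotientMap.prodMap (covering p n).isOpenQuotientMap

theorem lensMk2_eq {y y' : Sph n × Sph n} (h : lensMk2 p n y = lensMk2 p n y') :
    ∃ a b : ZMod p, y' = (act a y.1, act b y.2) := by
  obtain ⟨a, ha⟩ := lensMk_eq_iff.1 (congrArg Prod.fst h)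
  obtain ⟨b, hb⟩ := lensMk_eq_iff.1 (congrArg Prod.snd h)
  exact ⟨a, b, Prod.ext ha hb⟩

theorem act_coe_apply (a : ZMod p) (x : Sph n) (i : Fin (n + 1)) :
    (act a x : Amb n) i = ZMod.toCircle a * (x : Amb n) i := rfl

theorem toCircle_pow (a : ZMod p) : (ZMod.toCircle a : ℂ) ^ p = 1 := by
  rw [← Circle.coe_pow, circle_pow, Circle.coe_one]

theorem prod_act (κ : ℂ) (i i' : Fin (n + 1)) (a b : ZMod p) (z w : Sph n) :
    (starRingEnd ℂ κ * ((act b w : Amb n) i' * starRingEnd ℂ ((act a z : Amb n) i))) ^ p =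
      (starRingEnd ℂ κ * ((w : Amb n) i' * starRingEnd ℂ ((z : Amb n) i))) ^ p := by
  have h : (starRingEnd ℂ (ZMod.toCircle a : ℂ)) ^ p = 1 := by
    rw [← map_pow, toCircle_pow, map_one]
  simp only [act_coe_apply, map_mul, mul_pow, toCircle_pow, h, one_mul]

theorem continuous_coe_apply {Y : Type*} [TopologicalSpace Y] {f : Y → Sph n} (hf : Continuous f)
    (i : Fin (n + 1)) : Continuous fun y => (f y : Amb n) i :=
  (EuclideanSpace.proj i : Amb n →L[ℂ] ℂ).continuous.comp (continuous_subtype_val.comp hf)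

/-- The function `hfun`, on pairs of points of the lens space. -/
theorem exists_hX (κ : ℂ) (i i' : Fin (n + 1)) : ∃ h : C(LensSpace p n × LensSpace p n, ℝ),
    ∀ z w : Sph n, h (lensMk p n z, lensMk p n w) = hfun p κ i i' (z : Amb n) w := by
  have h1 := continuous_coe_apply (n := n) continuous_fst (Y := Sph n × Sph n) i
  have h2 := continuous_coe_apply (n := n) continuous_snd (Y := Sph n × Sph n) i'
  let f : C(Sph n × Sph n, ℝ) := ⟨fun y => hfun p κ i i' (y.1 : Amb n) y.2,
    Complex.continuous_re.comp
      ((continuous_const.mul (h2.mul (Complex.continuous_conj.comp h1))).pow p)⟩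
  have hf : Function.FactorsThrough f (lensMk2 p n) := fun y y' h => by
    obtain ⟨a, b, rfl⟩ := lensMk2_eq h
    simp only [f, hfun, ContinuousMap.coe_mk, prod_act]
  let qm := (isOpenQuotientMap_lensMk2 (p := p) (n := n)).isQuotientMap
  let q : C(Sph n × Sph n, LensSpace p n × LensSpace p n) := ⟨_, qm.continuous⟩
  have qm' : Topology.IsQuotientMap q := qm
  refine ⟨qm'.lift f hf, fun z w => ?_⟩
  exact congrArg (fun g : C(Sph n × Sph n, ℝ) => g (z, w)) (qm'.lift_comp f hf)

/-- An invariant family of nonzero vectors, multiplied by a coordinate of the first point,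
descends to the lens space. -/
theorem descend (W : Set (LensSpace p n × LensSpace p n)) (i : Fin (n + 1))
    (M : C(I × ↥(lensMk2 p n ⁻¹' W), Amb n)) (h0 : ∀ y, M y ≠ 0)
    (hz : ∀ y : ↥(lensMk2 p n ⁻¹' W), (y.1.1 : Amb n) i ≠ 0)
    (hinv : ∀ t (y y' : ↥(lensMk2 p n ⁻¹' W)), lensMk2 p n y = lensMk2 p n y' →
      M (t, y') = M (t, y)) :
    ∃ F : C(I × W, LensSpace p n), ∀ t (y : ↥(lensMk2 p n ⁻¹' W)),
      F (t, ⟨lensMk2 p n y, y.2⟩) = lensMk p n (radial ((y.1.1 : Amb n) i • M (t, y))) := by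
  have hc : Continuous fun y : I × ↥(lensMk2 p n ⁻¹' W) => (y.2.1.1 : Amb n) i :=
    continuous_coe_apply (by fun_prop) i
  let f : C(I × ↥(lensMk2 p n ⁻¹' W), LensSpace p n) :=
    ⟨fun y => lensMk p n (radial ((y.2.1.1 : Amb n) i • M y)), continuous_lensMk.comp
      (continuous_radial (hc.smul M.continuous) fun y => smul_ne_zero (hz _) (h0 _))⟩
  have qm := (IsOpenQuotientMap.id (X := I)).prodMap
    ((isOpenQuotientMap_lensMk2 (p := p) (n := n)).restrictPreimage W)
  let q : C(I × ↥(lensMk2 p n ⁻¹' W), I × W) := ⟨_, qm.continuous⟩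
  have qm' : Topology.IsQuotientMap q := qm.isQuotientMap
  have hf : Function.FactorsThrough f q := by
    rintro ⟨t, y⟩ ⟨t', y'⟩ h
    obtain rfl : t = t' := congrArg Prod.fst h
    have h2 : lensMk2 p n y = lensMk2 p n y' :=
      congrArg (fun x : I × W => (x.2 : LensSpace p n × LensSpace p n)) h
    obtain ⟨a, b, hab⟩ := lensMk2_eq h2
    have h1 : (y'.1.1 : Amb n) i = ZMod.toCircle a * (y.1.1 : Amb n) i := by rw [hab]; rfl
    simp only [f, ContinuousMap.coe_mk]
    rw [hinv t y y' h2, h1, ← smul_smul, radial_smul _ (smul_ne_zero (hz _) (h0 _))]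
    exact (lensMk_act a _).symm
  refine ⟨qm'.lift f hf, fun t y => ?_⟩
  exact congrArg (fun g : C(I × ↥(lensMk2 p n ⁻¹' W), LensSpace p n) => g (t, y))
    (qm'.lift_comp f hf)

theorem root_re_pos {x : ℂ} (hx : 0 < x.re) : 0 < (x ^ ((p : ℂ)⁻¹)).re := by
  have hx0 : x ≠ 0 := by rintro rfl; simp at hx
  have hp : (1 : ℝ) ≤ p := by exact_mod_cast NeZero.one_le
  have h1 := Complex.abs_arg_lt_pi_div_two_iff.2 (Or.inl hx)
  have him : (Complex.log x * (p : ℂ)⁻¹).im = Complex.arg x * (p : ℝ)⁻¹ := by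
    rw [← Complex.ofReal_natCast, ← Complex.ofReal_inv, Complex.im_mul_ofReal, Complex.log_im]
  rw [Complex.cpow_def_of_ne_zero hx0, Complex.exp_re, him]
  refine mul_pos (Real.exp_pos _) (Real.cos_pos_of_mem_Ioo (abs_lt.1 ?_))
  rw [abs_mul, abs_of_nonneg (by positivity : 0 ≤ (p : ℝ)⁻¹)]
  exact (mul_le_of_le_one_right (abs_nonneg _) (inv_le_one_of_one_le₀ hp)).trans_lt h1

/-- Where `hfun` is positive the second projection is homotopic to a map depending only on the
index `i` and on the first point. -/
theorem pair_homotopic {κ : ℂ} (hκ : ‖κ‖ = 1) (i i' : Fin (n + 1))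
    (W : Set (LensSpace p n × LensSpace p n))
    (hW : ∀ z w : Sph n, (lensMk p n z, lensMk p n w) ∈ W → 0 < hfun p κ i i' (z : Amb n) w) :
    ∃ g : C(W, LensSpace p n), ContinuousMap.Homotopic
      (⟨fun x => x.1.2, continuous_snd.comp continuous_subtype_val⟩ : C(W, LensSpace p n)) g ∧
      ∀ (z w : Sph n) (h : (lensMk p n z, lensMk p n w) ∈ W),
        g ⟨_, h⟩ = lensMk p n (radial ((z : Amb n) i • EuclideanSpace.single i 1)) := by
  have hp : p ≠ 0 := NeZero.ne p
  have hκ1 : starRingEnd ℂ κ * κ = 1 := by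
    rw [mul_comm, Complex.mul_conj, Complex.normSq_eq_norm_sq, hκ]; norm_num
  have hκ0 : κ ≠ 0 := by rintro rfl; simp at hκ
  let Y := ↥(lensMk2 p n ⁻¹' W)
  let x : Y → ℂ := fun y =>
    (starRingEnd ℂ κ * ((y.1.2 : Amb n) i' * starRingEnd ℂ ((y.1.1 : Amb n) i))) ^ p
  have hx : ∀ y, 0 < (x y).re := fun y => hW y.1.1 y.1.2 y.2
  have hx0 : ∀ y, x y ≠ 0 := fun y h => by
    have := hx y
    rw [h] at this
    simp at this
  have hz : ∀ y : Y, (y.1.1 : Amb n) i ≠ 0 := fun y h => hx0 y (by simp [x, h, hp])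
  have hw : ∀ y : Y, (y.1.2 : Amb n) i' ≠ 0 := fun y h => hx0 y (by simp [x, h, hp])
  have cz : Continuous fun y : Y => (y.1.1 : Amb n) i := continuous_coe_apply (by fun_prop) i
  have cw : Continuous fun y : Y => (y.1.2 : Amb n) i' := continuous_coe_apply (by fun_prop) i'
  have cw' : Continuous fun y : Y => (y.1.2 : Amb n) :=
    continuous_subtype_val.comp (continuous_snd.comp continuous_subtype_val)
  have cx : Continuous x :=
    (continuous_const.mul (cw.mul (Complex.continuous_conj.comp cz))).pow p
  let ρ : Y → ℂ := fun y => x y ^ ((p : ℂ)⁻¹)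
  have cρ : Continuous ρ := cx.cpow continuous_const fun y => Or.inl (hx y)
  let v : Y → Amb n := fun y => (κ * ρ y / (y.1.2 : Amb n) i') • (y.1.2 : Amb n)
  have cv : Continuous v := ((continuous_const.mul cρ).div cw hw).smul cw'
  let MA : C(I × Y, Amb n) := ⟨fun y => (1 - (y.1 : ℝ)) • v y.2 +
    (y.1 : ℝ) • EuclideanSpace.single i' κ, by fun_prop⟩
  have hMA0 : ∀ y, MA y ≠ 0 := fun ⟨t, y⟩ h => by
    have h1 : ((1 - (t : ℝ) : ℝ) : ℂ) * (κ * ρ y) + ((t : ℝ) : ℂ) * κ = 0 := by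
      have := congrArg (fun u : Amb n => u i') h
      simpa [MA, v, div_mul_cancel₀ _ (hw y)] using this
    have h2 : ((1 - (t : ℝ) : ℝ) : ℂ) * ρ y + ((t : ℝ) : ℂ) = 0 := by
      refine (mul_eq_zero.1 (?_ : κ * _ = 0)).resolve_left hκ0
      rw [← h1]; ring
    have h3 := congrArg Complex.re h2
    rw [Complex.add_re, Complex.re_ofReal_mul, Complex.ofReal_re, Complex.zero_re] at h3
    have h4 : 0 < (ρ y).re := root_re_pos (hx y)
    rcases t.2.2.lt_or_eq with h5 | h5
    · have := mul_pos (sub_pos.2 h5) h4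
      linarith [t.2.1]
    · rw [h5] at h3; norm_num at h3
  have hMA : ∀ t (y y' : Y), lensMk2 p n y = lensMk2 p n y' → MA (t, y') = MA (t, y) := by
    rintro t y ⟨y', hy'⟩ h
    obtain ⟨a, b, rfl⟩ := lensMk2_eq h
    have e1 : ρ ⟨(act a y.1.1, act b y.1.2), hy'⟩ = ρ y := by
      simp only [ρ, x, prod_act]
    have e2 : v ⟨(act a y.1.1, act b y.1.2), hy'⟩ = v y := by
      simp only [v, e1, act_coe_apply]
      rw [act, rot_coe, smul_smul]
      congr 1
      have := Circle.coe_ne_zero (ZMod.toCircle b)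
      have := hw y
      field_simp
    simp only [MA, ContinuousMap.coe_mk, e2]
  obtain ⟨FA, hFA⟩ := descend W i MA hMA0 hz hMA
  have hrank : 1 < Module.rank ℝ (Amb n) := by
    rw [← Module.finrank_eq_rank, ← Module.finrank_mul_finrank ℝ ℂ, Complex.finrank_real_complex,
      finrank_euclideanSpace_fin]
    exact_mod_cast (by omega : 1 < 2 * (n + 1))
  have hjoin := (isPathConnected_sphere hrank (0 : Amb n) zero_le_one).joinedIn
    (EuclideanSpace.single i' κ) (by simp [hκ]) (EuclideanSpace.single i 1) (by simp)
  let MB : C(I × Y, Amb n) := ⟨fun y => hjoin.somePath y.1, by fun_prop⟩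
  obtain ⟨FB, hFB⟩ := descend W i MB
    (fun y h => coe_ne_zero ⟨_, hjoin.somePath_mem y.1⟩ h) hz (fun _ _ _ _ => rfl)
  have surj : ∀ y : W, ∃ z w : Sph n, ∃ h : (lensMk p n z, lensMk p n w) ∈ W,
      y = ⟨_, h⟩ := by
    rintro ⟨⟨a, b⟩, h⟩
    obtain ⟨z, rfl⟩ := (covering p n).surjective a
    obtain ⟨w, rfl⟩ := (covering p n).surjective b
    exact ⟨z, w, h, rfl⟩
  refine ⟨⟨fun y => FB (1, y), by fun_prop⟩, ContinuousMap.Homotopic.trans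
    (g := ⟨fun y => FB (0, y), by fun_prop⟩) ⟨⟨FA, ?_, ?_⟩⟩ ⟨⟨FB, fun _ => rfl, fun _ => rfl⟩⟩, ?_⟩
  · intro y
    obtain ⟨z, w, h, rfl⟩ := surj y
    let y0 : Y := ⟨(z, w), h⟩
    refine (hFA 0 y0).trans ?_
    have e : MA (0, y0) = v y0 := by simp [MA]
    rw [e]
    simp only [v]
    rw [smul_smul]
    refine lensMk_radial_smul (R := (‖(z : Amb n) i‖ ^ 2) ^ p)
      (pow_pos (pow_pos (norm_pos_iff.2 (hz y0)) 2) p) ?_ w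
    have e2 : ρ y0 ^ p = x y0 := Complex.cpow_nat_inv_pow _ hp
    have e3 : ((‖(z : Amb n) i‖ ^ 2 : ℝ) : ℂ) = (z : Amb n) i * starRingEnd ℂ ((z : Amb n) i) := by
      rw [Complex.mul_conj, Complex.normSq_eq_norm_sq]
    rw [Complex.ofReal_pow, e3, mul_pow, div_pow, mul_pow, e2]
    simp only [x]
    rw [← mul_pow, ← div_pow, ← mul_pow]
    congr 1
    rw [show κ * (starRingEnd ℂ κ * ((w : Amb n) i' * starRingEnd ℂ ((z : Amb n) i))) =
      (starRingEnd ℂ κ * κ) * ((w : Amb n) i' * starRingEnd ℂ ((z : Amb n) i)) by ring, hκ1,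
      one_mul, mul_div_cancel_left₀ _ (hw y0)]
  · intro y
    obtain ⟨z, w, h, rfl⟩ := surj y
    let y0 : Y := ⟨(z, w), h⟩
    refine (hFA 1 y0).trans ((hFB 0 y0).trans ?_).symm
    simp [MA, MB]
  · intro z w h
    refine (hFB 1 ⟨(z, w), h⟩).trans ?_
    simp [MB]

end Pairs

/-! ### The upper bound -/

section Upper

/-- Four directions, one of which always catches a definite part of a `p`-th power. -/
theorem exists_directions (p : ℕ) [NeZero p] : ∃ κ : Fin 4 → ℂ, (∀ j, ‖κ j‖ = 1) ∧
    ∀ ξ : ℂ, ∃ j, ‖ξ‖ ^ p / 2 ≤ ((starRingEnd ℂ (κ j) * ξ) ^ p).re := by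
  have h := fun j : Fin 4 => IsAlgClosed.exists_pow_nat_eq
    ((![1, -1, Complex.I, -Complex.I] : Fin 4 → ℂ) j) (NeZero.pos p)
  choose κ hκ using h
  refine ⟨κ, fun j => ?_, fun ξ => ?_⟩
  · rw [← pow_eq_one_iff_of_nonneg (norm_nonneg _) (NeZero.ne p), ← norm_pow, hκ]
    fin_cases j <;> simp
  · have e : ∀ j, ((starRingEnd ℂ (κ j) * ξ) ^ p).re =
        (starRingEnd ℂ ((![1, -1, Complex.I, -Complex.I] : Fin 4 → ℂ) j) * ξ ^ p).re := fun j => by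
      rw [mul_pow, ← map_pow, hκ]
    have h1 := Complex.norm_le_abs_re_add_abs_im (ξ ^ p)
    rw [norm_pow] at h1
    have h0 := e 0
    have h2 := e 1
    have h3 := e 2
    have h4 := e 3
    simp only [Matrix.cons_val, map_one, map_neg, Complex.conj_I, one_mul, neg_mul, neg_neg,
      Complex.neg_re, Complex.I_mul_re] at h0 h2 h3 h4
    by_contra! hc
    have g0 := hc 0
    have g1 := hc 1
    have g2 := hc 2
    have g3 := hc 3
    rw [h0] at g0
    rw [h2] at g1
    rw [h3] at g2
    rw [h4] at g3
    have := abs_lt.2 ⟨by linarith, g0⟩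
    have := abs_lt.2 ⟨by linarith, g2⟩
    linarith

theorem exists_large_coord {n : ℕ} (z : Sph n) :
    ∃ i, ((n : ℝ) + 1)⁻¹ ≤ ‖(z : Amb n) i‖ ^ 2 := by
  by_contra! h
  have h1 := EuclideanSpace.norm_sq_eq (z : Amb n)
  rw [norm_eq_of_mem_sphere z] at h1
  have h2 := Finset.sum_lt_sum_of_nonempty Finset.univ_nonempty fun i _ => h i
  rw [← h1] at h2
  simp only [Finset.sum_const, Finset.card_univ, Fintype.card_fin, nsmul_eq_mul] at h2
  push_cast at h2
  rw [mul_inv_cancel₀ (by positivity)] at h2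
  norm_num at h2

theorem exists_large_hfun {p n : ℕ} {κ : Fin 4 → ℂ}
    (hκ : ∀ ξ : ℂ, ∃ j, ‖ξ‖ ^ p / 2 ≤ ((starRingEnd ℂ (κ j) * ξ) ^ p).re) (z : Sph n) :
    ∃ i, ∀ w : Sph n, ∃ i' j,
      (((n : ℝ) + 1)⁻¹) ^ p / 2 ≤ hfun p (κ j) i i' (z : Amb n) w := by
  obtain ⟨i, hi⟩ := exists_large_coord z
  refine ⟨i, fun w => ?_⟩
  obtain ⟨i', hi'⟩ := exists_large_coord w
  obtain ⟨j, hj⟩ := hκ ((w : Amb n) i' * starRingEnd ℂ ((z : Amb n) i))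
  refine ⟨i', j, le_trans ?_ hj⟩
  have h0 : 0 ≤ ((n : ℝ) + 1)⁻¹ := by positivity
  have : ((n : ℝ) + 1)⁻¹ ≤ ‖(w : Amb n) i' * starRingEnd ℂ ((z : Amb n) i)‖ := by
    refine (sq_le_sq₀ h0 (norm_nonneg _)).1 ?_
    rw [norm_mul, RCLike.norm_conj, mul_pow, sq]
    exact mul_le_mul hi' hi h0 (by positivity)
  gcongr

/-- The open set of the cover attached to a threshold `c` is the locus where no function of a
finite family takes the value `c`. Prescribing the sign of every difference cuts it into disjoint
open pieces, and on a nonempty piece some functions are forced to be positive. -/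
theorem upper_bound (p m n : ℕ) [NeZero p] :
    TCCoverAt (LensSpace p n) (m + 2) ((m + 2) * (2 * n + 1)) := by
  obtain ⟨κ, hκ1, hκ⟩ := exists_directions p
  obtain ⟨c, r, hc, hr, hy⟩ := exists_thresholds p m n κ
    (show 0 < (((n : ℝ) + 1)⁻¹) ^ p / 2 by positivity)
  choose hX hhX using fun (j : Fin 4) (i i' : Fin (n + 1)) =>
    exists_hX (p := p) (n := n) (κ j) i i'
  let Q := Fin (m + 2) × Fin (n + 1) × Fin (n + 1) × Fin 4
  let h : Q → (Fin (m + 2) → LensSpace p n) → ℝ := fun β x =>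
    (r 0 * r β.1) ^ p * hX β.2.2.2 β.2.1 β.2.2.1 (x 0, x β.1)
  have hcont : ∀ β, Continuous (h β) := fun β => by fun_prop
  have hr1 : ∀ l, 1 ≤ (r 0 * r l) ^ p := fun l =>
    one_le_pow₀ (one_le_mul_of_one_le_of_one_le (hr 0).le (hr l).le)
  have lift : ∀ x : Fin (m + 2) → LensSpace p n, ∃ y : Fin (m + 2) → Sph n,
      x = fun l => lensMk p n (y l) := fun x =>
    ⟨fun l => ((covering p n).surjective (x l)).choose,
      funext fun l => ((covering p n).surjective (x l)).choose_spec.symm⟩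
  let V : Fin ((m + 2) * (2 * n + 1)) → Set Q → Set (Fin (m + 2) → LensSpace p n) :=
    fun s B => {x | ∀ β, (β ∈ B → c s < h β x) ∧ (β ∉ B → h β x < c s)}
  have hVo : ∀ s B, IsOpen (V s B) := fun s B => by
    simp only [V, Set.ofPred_forall, Set.ofPred_and]
    refine isOpen_iInter_of_finite fun β => IsOpen.inter ?_ ?_
    · exact isOpen_iInter_of_finite fun _ => isOpen_lt continuous_const (hcont β)
    · exact isOpen_iInter_of_finite fun _ => isOpen_lt (hcont β) continuous_const
  refine ⟨fun s => ⋃ B, V s B, fun s => isOpen_iUnion (hVo s), ?_, fun s =>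
    hasSec_iUnion (hVo s) ?_ fun B => ?_⟩
  · refine Set.eq_univ_of_forall fun x => ?_
    obtain ⟨y, rfl⟩ := lift x
    obtain ⟨s, hs⟩ := hy y
    refine Set.mem_iUnion.2 ⟨s, Set.mem_iUnion.2 ⟨{β | c s < h β (fun l => lensMk p n (y l))}, fun β => ⟨id, fun hβ => ?_⟩⟩⟩
    refine lt_of_le_of_ne (not_lt.1 hβ) ?_
    have := hs β.1 β.2.1 β.2.2.1 β.2.2.2
    rw [hfun_real, ← hhX] at this
    exact this
  · intro B B' x hB hB'
    ext β
    constructor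
    · exact fun hb => by_contra fun hb' => lt_asymm ((hB β).1 hb) ((hB' β).2 hb')
    · exact fun hb => by_contra fun hb' => lt_asymm ((hB' β).1 hb) ((hB β).2 hb')
  · rcases (V s B).eq_empty_or_nonempty with hV | ⟨x0, hx0⟩
    · rw [hV]
      exact ⟨⟨fun u => u.2.elim, continuous_of_const fun u => u.2.elim⟩, fun u => u.2.elim⟩
    obtain ⟨y, rfl⟩ := lift x0
    obtain ⟨i, hi⟩ := exists_large_hfun hκ (y 0)
    choose i' j hij using fun l => hi (y l)
    have hpos : ∀ l, ∀ x ∈ V s B, 0 < hX (j l) i (i' l) (x 0, x l) := by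
      intro l x hx
      have hb : ((l, i, i' l, j l) : Q) ∈ B := by
        by_contra hb
        have h1 := (hx0 (l, i, i' l, j l)).2 hb
        simp only [h, hhX] at h1
        have h2 := hij l
        have h3 := (hc s).1
        have h4 := (hc s).2
        have h5 := le_mul_of_one_le_left (h3.le.trans (h4.le.trans h2)) (hr1 l)
        linarith
      have h1 := (hc s).1.trans ((hx _).1 hb)
      exact pos_of_mul_pos_right h1 (zero_le_one.trans (hr1 l))
    let W : Fin (m + 2) → Set (LensSpace p n × LensSpace p n) := fun l =>
      {P | 0 < hX (j l) i (i' l) P}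
    choose g hg hg' using fun l => pair_homotopic (p := p) (hκ1 (j l)) i (i' l) (W l)
      fun z w hzw => by
        have : 0 < hX (j l) i (i' l) (lensMk p n z, lensMk p n w) := hzw
        rwa [hhX] at this
    let pr : ∀ l, C(V s B, W l) := fun l =>
      ⟨fun x => ⟨(x.1 0, x.1 l), hpos l x.1 x.2⟩,
        (((continuous_apply 0).comp continuous_subtype_val).prodMk
          ((continuous_apply l).comp continuous_subtype_val)).subtype_mk _⟩
    have key : ∀ l, (g l).comp (pr l) = (g 0).comp (pr 0) := fun l => by
      ext1 ⟨x, hx⟩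
      obtain ⟨u, rfl⟩ := lift x
      exact (hg' l (u 0) (u l) (hpos l _ hx)).trans (hg' 0 (u 0) (u 0) (hpos 0 _ hx)).symm
    refine hasSec_of_homotopic ((g 0).comp (pr 0)) fun l => ?_
    rw [← key l]
    exact (hg l).comp (ContinuousMap.Homotopic.refl (pr l))

end Upper

end LensTC

/-- If every digit of the base-`p` representation of `n` is at most `(p-1)/2`, where
`p ≥ 3` is prime, then `TC_k(L^{2n+1}_p) = k(2n+1)`. -/
theorem stmt17 (k n : ℕ) (hk : 2 ≤ k) (hn : 1 ≤ n)
    (p : ℕ) (hp : p.Prime) (hp3 : 3 ≤ p)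
    (hdigits : ∀ d ∈ Nat.digits p n, d ≤ (p - 1) / 2) :
    higherTC (LensSpace p n) k = k * (2 * n + 1) := by
  obtain ⟨m, rfl⟩ := Nat.exists_eq_add_of_le' hk
  have : NeZero p := ⟨hp.ne_zero⟩
  have hu := LensTC.upper_bound p m n
  refine le_antisymm (Nat.sInf_le hu) ?_
  by_contra! h
  exact LensTC.lower_bound hp hp3 (LensTC.not_dvd_choose p hp hp3 n hdigits) h
    (Nat.sInf_mem (s := {r | TCCoverAt (LensSpace p n) (m + 2) r}) ⟨_, hu⟩)
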